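/- Let f ∈ ℤ[X] be a monic squarefree polynomial with splitting field K and n = [K:ℚ]. Let η ∈ (0, 1/16) and suppose there exist a real number x₀ and a function q* assigning to each real x ≥ x₀ a natural number q*(x) > log x, such that for all x ≥ x₀, all real y with x^{1/2} < y ≤ x, every positive integer q ≤ x^η with q*(x) ∤ q, and every integer a with gcd(a, q) = 1, the number of primes p < y with p ≡ a (mod q) such that f splits into linear factors modulo p is at least π(y)/(2·n·φ(q)). Then for every ε > 0 and all sufficiently large real X, the number of Carmichael numbers m ≤ X such that f splits into linear factors modulo every prime divisor of m is at least X^{η/3 − ε}. -/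

import Mathlib

/-- A Carmichael number: a composite natural number `n > 1` such that
`a ^ (n - 1) ≡ 1 (mod n)` for every integer `a` coprime to `n`. -/
def IsCarmichael (n : ℕ) : Prop :=
  1 < n ∧ ¬ n.Prime ∧ ∀ a : ℤ, IsCoprime a (n : ℤ) → a ^ (n - 1) ≡ 1 [ZMOD (n : ℤ)]

/-- The image of `f` in `(ZMod p)[X]` is a product of linear factors. -/
def SplitsModLinear (f : Polynomial ℤ) (p : ℕ) : Prop :=
  ∃ s : Multiset (ZMod p),
    f.map (Int.castRingHom (ZMod p)) =
      (s.map fun a => Polynomial.X - Polynomial.C a).prod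

/-- `primePi y` is the number of primes `p ≤ y`. -/
noncomputable def primePi (y : ℝ) : ℕ := {p : ℕ | p.Prime ∧ (p : ℝ) ≤ y}.ncard

/-!
The integers are built as in the Alford-Granville-Pomerance theorem on the infinitude of Carmichael
numbers. Put `V = T ^ e`, and let `Q` be a large set of primes `q ≤ V ^ 3` for which `q - 1` divides
`((8 * V ^ 2)!) ^ 2`, so that the exponent of `(ℤ / L)ˣ` is tiny compared with `L = ∏ q ∈ Q, q`.
Apply the hypothesis on progressions to the residue class `1` modulo the many divisors `d` of `L`
that are products of a fixed number of primes of `Q`: by the pigeonhole principle some multiplier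
`k` gives many good primes `p = d * k + 1`. All these primes lie in the kernel of
`(ℤ / k L)ˣ → (ℤ / k)ˣ`, whose exponent is small because only a few `q ∈ Q` divide `k`; a group of
small exponent has a small zero-sum constant, so a large proportion of the products of `t` such
primes can be completed to a product `m ≡ 1 (mod k L)`. Every `p - 1` divides `k L`, hence `m - 1`,
and `m` is a Carmichael number by Korselt's criterion.

The exponent `η / 3` reflects the quality of `Q`, which contains `(V ^ 3) ^ (1 - o(1))` primes
although every prime power dividing one of the `q - 1` is `O(V ^ 2)`. It is enough that `q - 1` have
a prime factor `r` of size about `V`, and such primes `q` are counted on average over the prime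
moduli `r ∈ (R, 2 * R]`: Vaughan's identity writes the von Mangoldt function as type I sums, where
the discrepancy modulo `r` is bounded trivially, and type II sums, where the large sieve for the
additive characters `b / r` bounds it.
-/

namespace CarmichaelFrobenius

section LargeSieve

open Finset
open scoped ComplexConjugate

variable {ι κ : Type*}

lemma sum_one_div_sq_le_two (s : Finset ℕ) (hs : ∀ k ∈ s, 1 ≤ k) :
    ∑ k ∈ s, 1 / (k : ℝ) ^ 2 ≤ 2 := by
  have hsub : s ⊆ Ioo 0 (s.sup id + 1) := fun k hk =>
    mem_Ioo.2 ⟨hs k hk, Nat.lt_succ_of_le (le_sup (f := id) hk)⟩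
  calc ∑ k ∈ s, 1 / (k : ℝ) ^ 2 ≤ ∑ k ∈ Ioo 0 (s.sup id + 1), 1 / (k : ℝ) ^ 2 :=
        sum_le_sum_of_subset_of_nonneg hsub fun _ _ _ => by positivity
    _ ≤ 2 := by simpa [one_div] using sum_Ioo_inv_sq_le (α := ℝ) 0 (s.sup id + 1)

lemma sum_one_div_sq_le_of_separated (s : Finset ι) (y : ι → ℝ) {δ : ℝ} (hδ : 0 < δ)
    (hy : ∀ i ∈ s, δ ≤ y i) (hsep : ∀ i ∈ s, ∀ j ∈ s, i ≠ j → δ ≤ |y i - y j|) :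
    ∑ i ∈ s, 1 / y i ^ 2 ≤ 2 / δ ^ 2 := by
  classical
  have hfloor : ∀ i ∈ s, 1 ≤ ⌊y i / δ⌋₊ := fun i hi => by
    rw [Nat.one_le_floor_iff, one_le_div hδ]
    exact hy i hi
  have hinj : Set.InjOn (fun i => ⌊y i / δ⌋₊) s := by
    intro i hi j hj hij
    by_contra hne
    have hlt : |y i / δ - y j / δ| < 1 := by
      have hi' := Nat.floor_le (div_nonneg (hδ.le.trans (hy i hi)) hδ.le)
      have hj' := Nat.floor_le (div_nonneg (hδ.le.trans (hy j hj)) hδ.le)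
      have hi'' := Nat.lt_floor_add_one (y i / δ)
      have hj'' := Nat.lt_floor_add_one (y j / δ)
      simp only at hij
      rw [hij] at hi' hi''
      rw [abs_lt]
      constructor <;> linarith
    rw [← sub_div, abs_div, abs_of_pos hδ, div_lt_one hδ] at hlt
    exact hlt.not_ge (hsep i hi j hj hne)
  calc ∑ i ∈ s, 1 / y i ^ 2 ≤ ∑ i ∈ s, 1 / δ ^ 2 * (1 / (⌊y i / δ⌋₊ : ℝ) ^ 2) := by
        refine sum_le_sum fun i hi => ?_
        have hpos : (0 : ℝ) < ⌊y i / δ⌋₊ := by exact_mod_cast hfloor i hi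
        rw [div_mul_div_comm, mul_one, ← mul_pow]
        gcongr
        rw [← le_div_iff₀' hδ]
        exact Nat.floor_le (div_nonneg (hδ.le.trans (hy i hi)) hδ.le)
    _ = 1 / δ ^ 2 * ∑ k ∈ s.image (fun i => ⌊y i / δ⌋₊), 1 / (k : ℝ) ^ 2 := by
        rw [sum_image hinj, mul_sum]
    _ ≤ 1 / δ ^ 2 * 2 := by
        gcongr
        refine sum_one_div_sq_le_two _ fun k hk => ?_
        obtain ⟨i, hi, rfl⟩ := mem_image.1 hk
        exact hfloor i hi
    _ = 2 / δ ^ 2 := by ring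

lemma exists_real_rep_abs_eq_norm (x : UnitAddCircle) :
    ∃ z : ℝ, (z : UnitAddCircle) = x ∧ |z| = ‖x‖ ∧ |z| ≤ 1 / 2 := by
  obtain ⟨y, rfl⟩ := QuotientAddGroup.mk_surjective x
  refine ⟨y - round y, ?_, UnitAddCircle.norm_eq.symm, abs_sub_round y⟩
  have hround : ((round y : ℝ) : UnitAddCircle) = 0 :=
    (AddCircle.coe_eq_zero_iff 1).2 ⟨round y, by simp⟩
  rw [AddCircle.coe_sub, hround, sub_zero]

lemma sum_one_div_norm_sq_le_of_separated (s : Finset ι) (x : ι → UnitAddCircle) {δ : ℝ}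
    (hδ : 0 < δ) (hx : ∀ i ∈ s, δ ≤ ‖x i‖)
    (hsep : ∀ i ∈ s, ∀ j ∈ s, i ≠ j → δ ≤ ‖x i - x j‖) :
    ∑ i ∈ s, 1 / ‖x i‖ ^ 2 ≤ 4 / δ ^ 2 := by
  classical
  choose z hzx hznorm _ using fun i => exists_real_rep_abs_eq_norm (x i)
  have hdist (i j : ι) : ‖x i - x j‖ ≤ |z i - z j| := by
    rw [← hzx i, ← hzx j, ← AddCircle.coe_sub]
    exact QuotientAddGroup.norm_mk_le_norm
  have hpart (t : Finset ι) (ht : t ⊆ s) (y : ι → ℝ) (hy : ∀ i ∈ t, y i = ‖x i‖)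
      (hyz : ∀ i ∈ t, ∀ j ∈ t, |y i - y j| = |z i - z j|) :
      ∑ i ∈ t, 1 / ‖x i‖ ^ 2 ≤ 2 / δ ^ 2 := by
    rw [sum_congr rfl fun i hi => by rw [← hy i hi]]
    refine sum_one_div_sq_le_of_separated t y hδ (fun i hi => hy i hi ▸ hx i (ht hi))
      fun i hi j hj hij => ?_
    rw [hyz i hi j hj]
    exact (hsep i (ht hi) j (ht hj) hij).trans (hdist i j)
  have hpos := hpart (s.filter fun i => 0 ≤ z i) (filter_subset _ _) z
    (fun i hi => by rw [← hznorm, abs_of_nonneg (mem_filter.1 hi).2]) fun _ _ _ _ => rfl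
  have hneg := hpart (s.filter fun i => ¬ 0 ≤ z i) (filter_subset _ _) (fun i => -z i)
    (fun i hi => by rw [← hznorm, abs_of_neg (not_le.1 (mem_filter.1 hi).2)])
    fun i _ j _ => by rw [neg_sub_neg, abs_sub_comm]
  rw [← sum_filter_add_sum_filter_not s fun i => 0 ≤ z i]
  calc _ ≤ 2 / δ ^ 2 + 2 / δ ^ 2 := add_le_add hpos hneg
    _ = 4 / δ ^ 2 := by ring

lemma norm_fourier (n : ℤ) (x : UnitAddCircle) : ‖fourier n x‖ = 1 :=
  Circle.norm_coe _

lemma fourier_apply_sub (n : ℤ) (x y : UnitAddCircle) :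
    fourier n (x - y) = fourier n x * conj (fourier n y) := by
  rw [← fourier_neg, fourier_apply, fourier_apply, fourier_apply, zsmul_sub, sub_eq_add_neg,
    AddCircle.toCircle_add, Circle.coe_mul, neg_smul]

lemma four_mul_norm_le_norm_fourier_one_sub_one (x : UnitAddCircle) :
    4 * ‖x‖ ≤ ‖fourier 1 x - 1‖ := by
  obtain ⟨z, rfl, hz, hz'⟩ := exists_real_rep_abs_eq_norm x
  have hexp : fourier 1 (z : UnitAddCircle) = Complex.exp (Complex.I * (2 * Real.pi * z : ℝ)) := by
    rw [fourier_coe_apply]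
    push_cast
    ring_nf
  have hsin := Real.mul_abs_le_abs_sin (x := Real.pi * z) (by
    rw [abs_mul, abs_of_pos Real.pi_pos]
    nlinarith [Real.pi_pos])
  rw [abs_mul, abs_of_pos Real.pi_pos, ← mul_assoc, div_mul_cancel₀ _ Real.pi_ne_zero] at hsin
  rw [hexp, Complex.norm_exp_I_mul_ofReal_sub_one, ← hz, norm_mul, Real.norm_eq_abs,
    Real.norm_eq_abs, abs_two, show 2 * Real.pi * z / 2 = Real.pi * z by ring]
  linarith

/-- The unnormalised geometric sum `∑_{k < H} e(kx)`. -/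
noncomputable def dirichletKernel (H : ℕ) (x : UnitAddCircle) : ℂ :=
  ∑ k ∈ range H, fourier k x

lemma norm_dirichletKernel_le (H : ℕ) (x : UnitAddCircle) : ‖dirichletKernel H x‖ ≤ H := by
  refine (norm_sum_le _ _).trans_eq ?_
  simp only [norm_fourier, sum_const, card_range, nsmul_eq_mul, mul_one]

lemma two_mul_norm_mul_norm_dirichletKernel_le (H : ℕ) (x : UnitAddCircle) :
    2 * ‖x‖ * ‖dirichletKernel H x‖ ≤ 1 := by
  have hpow (k : ℕ) : fourier k x = fourier 1 x ^ k := by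
    rw [fourier_apply, fourier_apply, one_smul, ← Circle.coe_pow, ← AddCircle.toCircle_nsmul,
      natCast_zsmul]
  have hgeom : dirichletKernel H x * (fourier 1 x - 1) = fourier H x - 1 := by
    rw [dirichletKernel, sum_congr rfl fun k _ => hpow k, geom_sum_mul, hpow]
  have hle : ‖dirichletKernel H x‖ * ‖fourier 1 x - 1‖ ≤ 2 := by
    rw [← norm_mul, hgeom]
    exact (norm_sub_le _ _).trans_eq (by rw [norm_fourier, norm_one]; norm_num)
  have := mul_le_mul_of_nonneg_left (four_mul_norm_le_norm_fourier_one_sub_one x)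
    (norm_nonneg (dirichletKernel H x))
  linarith

lemma norm_dirichletKernel_sub_comm (H : ℕ) (x y : UnitAddCircle) :
    ‖dirichletKernel H (x - y)‖ = ‖dirichletKernel H (y - x)‖ := by
  have : dirichletKernel H (x - y) = conj (dirichletKernel H (y - x)) := by
    rw [dirichletKernel, dirichletKernel, map_sum]
    refine sum_congr rfl fun k _ => ?_
    rw [fourier_apply_sub, fourier_apply_sub, map_mul, Complex.conj_conj, mul_comm]
  rw [this, RCLike.norm_conj]

lemma sum_norm_dirichletKernel_sq_le (s : Finset ι) (x : ι → UnitAddCircle) {δ : ℝ} (hδ : 0 < δ)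
    (hsep : ∀ i ∈ s, ∀ j ∈ s, i ≠ j → δ ≤ ‖x i - x j‖) (H : ℕ) {i : ι} (hi : i ∈ s) :
    ∑ j ∈ s, ‖dirichletKernel H (x j - x i)‖ ^ 2 ≤ (H : ℝ) ^ 2 + 1 / δ ^ 2 := by
  classical
  have hx (j : ι) (hj : j ∈ s.erase i) : δ ≤ ‖x j - x i‖ :=
    hsep j (mem_of_mem_erase hj) i hi (ne_of_mem_erase hj)
  rw [← add_sum_erase s _ hi]
  gcongr
  · exact norm_dirichletKernel_le H _
  calc ∑ j ∈ s.erase i, ‖dirichletKernel H (x j - x i)‖ ^ 2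
      ≤ ∑ j ∈ s.erase i, 1 / 4 * (1 / ‖x j - x i‖ ^ 2) := by
        refine sum_le_sum fun j hj => ?_
        have hpos : 0 < ‖x j - x i‖ := hδ.trans_le (hx j hj)
        have := two_mul_norm_mul_norm_dirichletKernel_le H (x j - x i)
        have hsq := pow_le_one₀ (n := 2) (by positivity) this
        rw [div_mul_div_comm, le_div_iff₀ (by positivity)]
        linarith
    _ ≤ 1 / 4 * (4 / δ ^ 2) := by
        rw [← mul_sum]
        gcongr
        refine sum_one_div_norm_sq_le_of_separated _ (fun j => x j - x i) hδ hx
          fun j hj k hk hjk => ?_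
        rw [sub_sub_sub_cancel_right]
        exact hsep j (mem_of_mem_erase hj) k (mem_of_mem_erase hk) hjk
    _ = 1 / δ ^ 2 := by ring

lemma schur_test (s : Finset ι) (c : ι → ℝ) (g : ι → ι → ℝ) {B : ℝ} (hg : ∀ i j, 0 ≤ g i j)
    (hsymm : ∀ i j, g i j = g j i) (hB : ∀ i ∈ s, ∑ j ∈ s, g i j ≤ B) :
    ∑ i ∈ s, ∑ j ∈ s, c i * c j * g i j ≤ B * ∑ i ∈ s, c i ^ 2 := by
  have hdiag : ∑ i ∈ s, ∑ j ∈ s, c i ^ 2 * g i j ≤ B * ∑ i ∈ s, c i ^ 2 := by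
    rw [mul_sum]
    refine sum_le_sum fun i hi => ?_
    rw [← mul_sum, mul_comm]
    exact mul_le_mul_of_nonneg_right (hB i hi) (sq_nonneg _)
  have hswap : ∑ i ∈ s, ∑ j ∈ s, c j ^ 2 * g i j = ∑ i ∈ s, ∑ j ∈ s, c i ^ 2 * g i j := by
    rw [sum_comm]
    simp_rw [hsymm]
  have hamgm : 2 * ∑ i ∈ s, ∑ j ∈ s, c i * c j * g i j
      ≤ ∑ i ∈ s, ∑ j ∈ s, c i ^ 2 * g i j + ∑ i ∈ s, ∑ j ∈ s, c j ^ 2 * g i j := by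
    simp_rw [← sum_add_distrib, mul_sum]
    refine sum_le_sum fun i _ => sum_le_sum fun j _ => ?_
    nlinarith [mul_nonneg (sq_nonneg (c i - c j)) (hg i j)]
  linarith

lemma norm_sum_sq_eq (s : Finset ι) (f : ι → ℂ) :
    ((‖∑ i ∈ s, f i‖ ^ 2 : ℝ) : ℂ) = ∑ i ∈ s, ∑ j ∈ s, f i * conj (f j) := by
  rw [Complex.ofReal_pow, ← Complex.mul_conj', map_sum, sum_mul_sum]

-- Averaging over `k - l` instead of a single frequency makes the kernel a perfect square.
lemma sum_sum_norm_exponential_sum_sq_eq (s : Finset ι) (x : ι → UnitAddCircle) (c : ι → ℂ)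
    (H : ℕ) :
    ((∑ k ∈ range H, ∑ l ∈ range H, ‖∑ i ∈ s, c i * fourier (k - l) (x i)‖ ^ 2 : ℝ) : ℂ) =
      ∑ i ∈ s, ∑ j ∈ s,
        c i * conj (c j) * (‖dirichletKernel H (x i - x j)‖ ^ 2 : ℝ) := by
  simp_rw [Complex.ofReal_sum, norm_sum_sq_eq]
  calc _ = ∑ i ∈ s, ∑ j ∈ s, ∑ k ∈ range H, ∑ l ∈ range H,
        c i * fourier (k - l) (x i) * conj (c j * fourier (k - l) (x j)) := by
        rw [sum_congr rfl fun k _ => sum_comm, sum_comm]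
        refine sum_congr rfl fun i _ => ?_
        rw [sum_congr rfl fun k _ => sum_comm, sum_comm]
    _ = _ := by
        refine sum_congr rfl fun i _ => sum_congr rfl fun j _ => ?_
        rw [dirichletKernel, norm_sum_sq_eq, mul_sum]
        refine sum_congr rfl fun k _ => ?_
        rw [mul_sum]
        refine sum_congr rfl fun l _ => ?_
        rw [fourier_apply_sub, fourier_apply_sub, sub_eq_add_neg]
        simp only [fourier_add, fourier_neg, map_mul, Complex.conj_conj]
        ring

lemma sum_sum_norm_exponential_sum_sq_le (s : Finset ι) (x : ι → UnitAddCircle) (c : ι → ℂ)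
    (H : ℕ) {B : ℝ} (hB : ∀ i ∈ s, ∑ j ∈ s, ‖dirichletKernel H (x j - x i)‖ ^ 2 ≤ B) :
    ∑ k ∈ range H, ∑ l ∈ range H, ‖∑ i ∈ s, c i * fourier (k - l) (x i)‖ ^ 2 ≤
      B * ∑ i ∈ s, ‖c i‖ ^ 2 := by
  calc ∑ k ∈ range H, ∑ l ∈ range H, ‖∑ i ∈ s, c i * fourier (k - l) (x i)‖ ^ 2
      = ‖∑ i ∈ s, ∑ j ∈ s,
          c i * conj (c j) * (‖dirichletKernel H (x i - x j)‖ ^ 2 : ℝ)‖ := by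
        rw [← sum_sum_norm_exponential_sum_sq_eq, Complex.norm_real,
          Real.norm_of_nonneg (by positivity)]
    _ ≤ ∑ i ∈ s, ∑ j ∈ s, ‖c i‖ * ‖c j‖ * ‖dirichletKernel H (x i - x j)‖ ^ 2 := by
        refine norm_sum_le_of_le _ fun i _ => norm_sum_le_of_le _ fun j _ => ?_
        rw [norm_mul, norm_mul, RCLike.norm_conj, Complex.norm_real,
          Real.norm_of_nonneg (by positivity)]
    _ ≤ B * ∑ i ∈ s, ‖c i‖ ^ 2 := by
        refine schur_test s (fun i => ‖c i‖) _ (fun _ _ => sq_nonneg _)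
          (fun i j => by rw [norm_dirichletKernel_sub_comm]) fun i hi => ?_
        simpa only [norm_dirichletKernel_sub_comm H (x i)] using hB i hi

-- Every `n < M` is a difference `k - l` with `k, l < H` in at least `H - M` ways.
lemma mul_sum_range_le_sum_sum_sub (f : ℤ → ℝ) (hf : ∀ n, 0 ≤ f n) (M H : ℕ) :
    ((H - M : ℕ) : ℝ) * ∑ n ∈ range M, f n ≤ ∑ k ∈ range H, ∑ l ∈ range H, f (k - l) := by
  let shear : ℕ × ℕ → ℕ × ℕ := fun p => (p.2 + p.1, p.2)
  have hinj : Set.InjOn shear (range M ×ˢ range (H - M) : Finset (ℕ × ℕ)) := by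
    rintro ⟨a, b⟩ _ ⟨a', b'⟩ _ h
    simp only [shear, Prod.mk.injEq] at h ⊢
    omega
  have hsub : (range M ×ˢ range (H - M)).image shear ⊆ range H ×ˢ range H := by
    intro p hp
    obtain ⟨⟨a, b⟩, hab, rfl⟩ := mem_image.1 hp
    simp only [shear, mem_product, mem_range] at hab ⊢
    omega
  calc ((H - M : ℕ) : ℝ) * ∑ n ∈ range M, f n
      = ∑ p ∈ range M ×ˢ range (H - M), f p.1 := by
        rw [sum_product, mul_sum]
        simp
    _ = ∑ p ∈ (range M ×ˢ range (H - M)).image shear, f (p.1 - p.2) := by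
        rw [sum_image hinj]
        simp [shear]
    _ ≤ ∑ p ∈ range H ×ˢ range H, f (p.1 - p.2) :=
        sum_le_sum_of_subset_of_nonneg hsub fun _ _ _ => hf _
    _ = _ := sum_product _ _ _

lemma dual_large_sieve (s : Finset ι) (x : ι → UnitAddCircle) {δ : ℝ} (hδ : 0 < δ)
    (hsep : ∀ i ∈ s, ∀ j ∈ s, i ≠ j → δ ≤ ‖x i - x j‖) {M H : ℕ} (hM : 2 * M ≤ H)
    (hH : 1 / δ ≤ H) (c : ι → ℂ) :
    ∑ n ∈ range M, ‖∑ i ∈ s, c i * fourier n (x i)‖ ^ 2 ≤ 4 * H * ∑ i ∈ s, ‖c i‖ ^ 2 := by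
  have hH0 : (0 : ℝ) < H := (by positivity : 0 < 1 / δ).trans_le hH
  have hHM : (H : ℝ) / 2 ≤ (H - M : ℕ) := by
    rw [Nat.cast_sub (by omega)]
    have : (2 : ℝ) * M ≤ H := by exact_mod_cast hM
    linarith
  have hδH : 1 / δ ^ 2 ≤ (H : ℝ) ^ 2 := by
    rw [← one_div_pow]
    gcongr
  have hmain : (H : ℝ) / 2 * ∑ n ∈ range M, ‖∑ i ∈ s, c i * fourier n (x i)‖ ^ 2
      ≤ H / 2 * (4 * H * ∑ i ∈ s, ‖c i‖ ^ 2) :=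
    calc (H : ℝ) / 2 * ∑ n ∈ range M, ‖∑ i ∈ s, c i * fourier n (x i)‖ ^ 2
        ≤ (H - M : ℕ) * ∑ n ∈ range M, ‖∑ i ∈ s, c i * fourier n (x i)‖ ^ 2 := by gcongr
      _ ≤ ∑ k ∈ range H, ∑ l ∈ range H, ‖∑ i ∈ s, c i * fourier (k - l) (x i)‖ ^ 2 :=
          mul_sum_range_le_sum_sum_sub (fun n => ‖∑ i ∈ s, c i * fourier n (x i)‖ ^ 2)
            (fun _ => sq_nonneg _) M H
      _ ≤ (H ^ 2 + 1 / δ ^ 2) * ∑ i ∈ s, ‖c i‖ ^ 2 :=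
          sum_sum_norm_exponential_sum_sq_le s x c H fun _ hi =>
            sum_norm_dirichletKernel_sq_le s x hδ hsep H hi
      _ ≤ (H ^ 2 + H ^ 2) * ∑ i ∈ s, ‖c i‖ ^ 2 := by gcongr
      _ = H / 2 * (4 * H * ∑ i ∈ s, ‖c i‖ ^ 2) := by ring
  exact le_of_mul_le_mul_left hmain (by positivity)

lemma duality_principle (s : Finset ι) (t : Finset κ) (f : ι → κ → ℂ) {B : ℝ} (hB : 0 ≤ B)
    (hf : ∀ c : ι → ℂ, ∑ n ∈ t, ‖∑ i ∈ s, c i * f i n‖ ^ 2 ≤ B * ∑ i ∈ s, ‖c i‖ ^ 2)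
    (a : κ → ℂ) :
    ∑ i ∈ s, ‖∑ n ∈ t, a n * f i n‖ ^ 2 ≤ B * ∑ n ∈ t, ‖a n‖ ^ 2 := by
  set S : ι → ℂ := fun i => ∑ n ∈ t, a n * f i n with hS
  set W := ∑ i ∈ s, ‖S i‖ ^ 2 with hW
  have hW0 : 0 ≤ W := by positivity
  have hWeq : (W : ℂ) = ∑ n ∈ t, a n * ∑ i ∈ s, conj (S i) * f i n := by
    simp_rw [hW, Complex.ofReal_sum, Complex.ofReal_pow, ← Complex.conj_mul', mul_sum]
    rw [sum_comm]
    refine sum_congr rfl fun i _ => ?_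
    conv_lhs => rw [hS, mul_sum]
    exact sum_congr rfl fun n _ => by ring
  have hWle : W ≤ ∑ n ∈ t, ‖a n‖ * ‖∑ i ∈ s, conj (S i) * f i n‖ := by
    rw [← Real.norm_of_nonneg hW0, ← Complex.norm_real, hWeq]
    exact norm_sum_le_of_le _ fun n _ => (norm_mul _ _).le
  have hsq : W ^ 2 ≤ (∑ n ∈ t, ‖a n‖ ^ 2) * (B * W) := by
    have hdual := hf fun i => conj (S i)
    simp only [RCLike.norm_conj] at hdual
    calc W ^ 2 ≤ (∑ n ∈ t, ‖a n‖ * ‖∑ i ∈ s, conj (S i) * f i n‖) ^ 2 := by gcongr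
      _ ≤ (∑ n ∈ t, ‖a n‖ ^ 2) * ∑ n ∈ t, ‖∑ i ∈ s, conj (S i) * f i n‖ ^ 2 :=
          sum_mul_sq_le_sq_mul_sq _ _ _
      _ ≤ (∑ n ∈ t, ‖a n‖ ^ 2) * (B * W) := by gcongr
  rcases hW0.eq_or_lt with hzero | hpos
  · rw [← hzero]
    positivity
  · exact le_of_mul_le_mul_left (by linarith) hpos

lemma large_sieve (s : Finset ι) (x : ι → UnitAddCircle) {δ : ℝ} (hδ : 0 < δ)
    (hsep : ∀ i ∈ s, ∀ j ∈ s, i ≠ j → δ ≤ ‖x i - x j‖) {M H : ℕ} (hM : 2 * M ≤ H)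
    (hH : 1 / δ ≤ H) (a : ℕ → ℂ) :
    ∑ i ∈ s, ‖∑ n ∈ range M, a n * fourier n (x i)‖ ^ 2 ≤ 4 * H * ∑ n ∈ range M, ‖a n‖ ^ 2 :=
  duality_principle s (range M) (fun i n => fourier n (x i)) (by positivity)
    (dual_large_sieve s x hδ hsep hM hH) a

end LargeSieve

section ResidueClasses

open Finset
open scoped ComplexConjugate

/-- The exponential sum `∑_{n < M} α(n) e(nx)`. -/
noncomputable def expSum (α : ℕ → ℝ) (M : ℕ) (x : UnitAddCircle) : ℂ :=
  ∑ n ∈ range M, (α n : ℂ) * fourier n x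

/-- The sum of `α` over the `m < M` in the residue class `a` modulo `r`. -/
noncomputable def residueSum (α : ℕ → ℝ) (M : ℕ) {r : ℕ} (a : ZMod r) : ℝ :=
  ∑ m ∈ range M, if (m : ZMod r) = a then α m else 0

/-- `1_{a = 1} - 1_{a ≠ 0} / (r - 1)`: for a prime `r`, the difference between the indicator
function of the residue class `1` and its mean over the invertible classes. -/
noncomputable def discrepancyKernel (r : ℕ) (a : ZMod r) : ℝ :=
  (if a = 1 then 1 else 0) - (if a = 0 then 0 else 1 / ((r : ℝ) - 1))

lemma sum_range_mul_apply_natCast (α : ℕ → ℝ) (M r : ℕ) [NeZero r] (g : ZMod r → ℝ) :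
    ∑ m ∈ range M, α m * g m = ∑ a : ZMod r, residueSum α M a * g a := by
  simp_rw [residueSum, sum_mul]
  rw [sum_comm]
  simp

lemma sum_residueSum (α : ℕ → ℝ) (M r : ℕ) [NeZero r] :
    ∑ a : ZMod r, residueSum α M a = ∑ m ∈ range M, α m := by
  simpa using (sum_range_mul_apply_natCast α M r fun _ => 1).symm

lemma sum_range_natCast {E : Type*} [AddCommMonoid E] (r : ℕ) [NeZero r] (g : ZMod r → E) :
    ∑ n ∈ range r, g n = ∑ a : ZMod r, g a :=
  sum_bij' (fun n _ => n) (fun a _ => a.val) (by simp) (fun a _ => mem_range.2 a.val_lt)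
    (fun n hn => ZMod.val_cast_of_lt (mem_range.1 hn)) (by simp) (by simp)

lemma expSum_toAddCircle (α : ℕ → ℝ) (M r : ℕ) [NeZero r] (b : ZMod r) :
    expSum α M (ZMod.toAddCircle b) =
      ∑ a : ZMod r, (residueSum α M a : ℂ) * ZMod.stdAddChar (a * b) := by
  have hchar (n : ℕ) : fourier n (ZMod.toAddCircle b) = ZMod.stdAddChar ((n : ZMod r) * b) := by
    rw [fourier_apply, ZMod.stdAddChar_apply, ← map_zsmul, zsmul_eq_mul, Int.cast_natCast]
    rfl
  simp_rw [residueSum, Complex.ofReal_sum, sum_mul]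
  rw [sum_comm, expSum]
  refine sum_congr rfl fun n _ => ?_
  simp [hchar, apply_ite Complex.ofReal, ite_mul]

lemma sum_norm_stdAddChar_transform_sq (r : ℕ) [NeZero r] (g : ZMod r → ℂ) :
    ∑ b, ‖∑ a, g a * ZMod.stdAddChar (a * b)‖ ^ 2 = r * ∑ a, ‖g a‖ ^ 2 := by
  have horth (a a' : ZMod r) :
      ∑ b, ZMod.stdAddChar (a * b) * conj (ZMod.stdAddChar (a' * b)) =
        if a = a' then (r : ℂ) else 0 := by
    have := AddChar.sum_mulShift (a - a') (ZMod.isPrimitive_stdAddChar r)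
    simp only [ZMod.card, sub_eq_zero] at this
    rw [← Nat.cast_zero (R := ℂ), ← Nat.cast_ite, ← this]
    refine sum_congr rfl fun b _ => ?_
    rw [← AddChar.map_neg_eq_conj, ← AddChar.map_add_eq_mul]
    ring_nf
  apply Complex.ofReal_injective
  simp_rw [Complex.ofReal_sum, norm_sum_sq_eq]
  calc _ = ∑ a, ∑ a', g a * conj (g a') *
        ∑ b, ZMod.stdAddChar (a * b) * conj (ZMod.stdAddChar (a' * b)) := by
        rw [sum_comm]
        refine sum_congr rfl fun a _ => ?_
        rw [sum_comm]
        refine sum_congr rfl fun a' _ => ?_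
        rw [mul_sum]
        refine sum_congr rfl fun b _ => ?_
        rw [map_mul (starRingEnd ℂ)]
        ring
    _ = _ := by
        simp [horth, Complex.mul_conj', mul_sum, mul_comm]

lemma mul_sum_residueSum_sub_mean_sq (α : ℕ → ℝ) (M r : ℕ) [NeZero r] :
    r * ∑ a : ZMod r, (residueSum α M a - (∑ m ∈ range M, α m) / r) ^ 2 =
      ∑ b ∈ Ico 1 r, ‖expSum α M ((b / r : ℝ) : UnitAddCircle)‖ ^ 2 := by
  set μ : ℝ := (∑ m ∈ range M, α m) / r
  have hr : (r : ℝ) ≠ 0 := Nat.cast_ne_zero.2 (NeZero.ne r)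
  have hzero : ∑ a : ZMod r, ((residueSum α M a - μ : ℝ) : ℂ) * ZMod.stdAddChar (a * 0) = 0 := by
    simp only [mul_zero, AddChar.map_zero_eq_one, mul_one, ← Complex.ofReal_sum, sum_sub_distrib,
      sum_residueSum, sum_const, card_univ, ZMod.card, nsmul_eq_mul, μ]
    rw [mul_div_cancel₀ _ hr, sub_self, Complex.ofReal_zero]
  have hne {b : ZMod r} (hb : b ≠ 0) :
      ∑ a : ZMod r, ((residueSum α M a - μ : ℝ) : ℂ) * ZMod.stdAddChar (a * b) =
        expSum α M (ZMod.toAddCircle b) := by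
    simp_rw [Complex.ofReal_sub, sub_mul, sum_sub_distrib, ← mul_sum,
      AddChar.sum_mulShift b (ZMod.isPrimitive_stdAddChar r), if_neg hb, expSum_toAddCircle]
    simp
  calc r * ∑ a : ZMod r, (residueSum α M a - μ) ^ 2
      = ∑ b : ZMod r, ‖∑ a : ZMod r,
          ((residueSum α M a - μ : ℝ) : ℂ) * ZMod.stdAddChar (a * b)‖ ^ 2 := by
        rw [sum_norm_stdAddChar_transform_sq]
        simp_rw [Complex.norm_real, Real.norm_eq_abs, sq_abs]
    _ = ∑ b ∈ range r, ‖∑ a : ZMod r,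
          ((residueSum α M a - μ : ℝ) : ℂ) * ZMod.stdAddChar (a * (b : ZMod r))‖ ^ 2 :=
        (sum_range_natCast r fun b => ‖∑ a : ZMod r,
          ((residueSum α M a - μ : ℝ) : ℂ) * ZMod.stdAddChar (a * b)‖ ^ 2).symm
    _ = ∑ b ∈ Ico 1 r, ‖∑ a : ZMod r,
          ((residueSum α M a - μ : ℝ) : ℂ) * ZMod.stdAddChar (a * (b : ZMod r))‖ ^ 2 := by
        rw [range_eq_Ico, sum_eq_sum_Ico_succ_bot (NeZero.pos r), Nat.cast_zero, hzero]
        simp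
    _ = _ := by
        refine sum_congr rfl fun b hb => ?_
        obtain ⟨hb1, hbr⟩ := mem_Ico.1 hb
        have hb0 : (b : ZMod r) ≠ 0 := by
          rw [Ne, ZMod.natCast_eq_zero_iff]
          exact Nat.not_dvd_of_pos_of_lt hb1 hbr
        rw [hne hb0, ZMod.toAddCircle_natCast]

lemma one_div_le_norm_of_nsmul_eq_zero {x : UnitAddCircle} (hx : x ≠ 0) {n : ℕ} (hn : 0 < n)
    (hnx : n • x = 0) : 1 / (n : ℝ) ≤ ‖x‖ := by
  have hfin : IsOfFinAddOrder x := isOfFinAddOrder_iff_nsmul_eq_zero.2 ⟨n, hn, hnx⟩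
  have hle := AddCircle.le_add_order_smul_norm_of_isOfFinAddOrder hfin hx
  have hord : (addOrderOf x : ℝ) ≤ n := by
    exact_mod_cast Nat.le_of_dvd hn (addOrderOf_dvd_of_nsmul_eq_zero hnx)
  rw [nsmul_eq_mul] at hle
  rw [div_le_iff₀' (by exact_mod_cast hn)]
  exact hle.trans (by gcongr)

lemma nsmul_coe_div_eq_zero (b : ℕ) {r : ℕ} (hr : r ≠ 0) :
    r • ((b / r : ℝ) : UnitAddCircle) = 0 := by
  rw [← AddCircle.coe_nsmul, AddCircle.coe_eq_zero_iff]
  refine ⟨b, ?_⟩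
  have : (r : ℝ) ≠ 0 := Nat.cast_ne_zero.2 hr
  simp only [zsmul_eq_mul, nsmul_eq_mul, Int.cast_natCast, mul_one]
  field_simp

lemma coe_div_ne_coe_div_of_prime {r r' b b' : ℕ} (hr : r.Prime) (hr' : r'.Prime)
    (hb : b ∈ Ico 1 r) (hb' : b' ∈ Ico 1 r') (hne : (r, b) ≠ (r', b')) :
    ((b / r : ℝ) : UnitAddCircle) ≠ ((b' / r' : ℝ) : UnitAddCircle) := by
  intro heq
  have : NeZero r := ⟨hr.ne_zero⟩
  rw [mem_Ico] at hb hb'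
  rcases eq_or_ne r r' with rfl | hrr
  · rw [← ZMod.toAddCircle_natCast, ← ZMod.toAddCircle_natCast, ZMod.toAddCircle_inj,
      ZMod.natCast_eq_natCast_iff', Nat.mod_eq_of_lt hb.2, Nat.mod_eq_of_lt hb'.2] at heq
    exact hne (by rw [heq])
  · have hdvd : addOrderOf ((b / r : ℝ) : UnitAddCircle) ∣ r.gcd r' :=
      Nat.dvd_gcd (addOrderOf_dvd_of_nsmul_eq_zero (nsmul_coe_div_eq_zero b hr.ne_zero))
        (addOrderOf_dvd_of_nsmul_eq_zero (heq ▸ nsmul_coe_div_eq_zero b' hr'.ne_zero))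
    rw [(Nat.coprime_primes hr hr').2 hrr, Nat.dvd_one, AddMonoid.addOrderOf_eq_one_iff,
      ← ZMod.toAddCircle_natCast, ZMod.toAddCircle_eq_zero, ZMod.natCast_eq_zero_iff] at hdvd
    exact Nat.not_dvd_of_pos_of_lt hb.1 hb.2 hdvd

lemma one_div_le_norm_coe_div_sub_coe_div {r r' b b' Q : ℕ} (hr : r.Prime) (hr' : r'.Prime)
    (hrQ : r ≤ Q) (hrQ' : r' ≤ Q) (hb : b ∈ Ico 1 r) (hb' : b' ∈ Ico 1 r')
    (hne : (r, b) ≠ (r', b')) :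
    1 / (Q : ℝ) ^ 2 ≤ ‖((b / r : ℝ) : UnitAddCircle) - ((b' / r' : ℝ) : UnitAddCircle)‖ := by
  have htors : (r * r') •
      (((b / r : ℝ) : UnitAddCircle) - ((b' / r' : ℝ) : UnitAddCircle)) = 0 := by
    rw [smul_sub, mul_comm, mul_smul, nsmul_coe_div_eq_zero b hr.ne_zero, mul_comm, mul_smul,
      nsmul_coe_div_eq_zero b' hr'.ne_zero, smul_zero, smul_zero, sub_zero]
  have hpos : 0 < r * r' := mul_pos hr.pos hr'.pos
  refine le_trans ?_ (one_div_le_norm_of_nsmul_eq_zero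
    (sub_ne_zero.2 (coe_div_ne_coe_div_of_prime hr hr' hb hb' hne)) hpos htors)
  rw [sq]
  push_cast
  gcongr
  · exact_mod_cast hpos

lemma large_sieve_prime_moduli (P : Finset ℕ) {Q : ℕ} (hQ : 0 < Q)
    (hP : ∀ r ∈ P, r.Prime ∧ r ≤ Q) (α : ℕ → ℝ) (M : ℕ) :
    ∑ r ∈ P, ∑ b ∈ Ico 1 r, ‖expSum α M ((b / r : ℝ) : UnitAddCircle)‖ ^ 2 ≤
      4 * (2 * M + (Q : ℝ) ^ 2) * ∑ n ∈ range M, α n ^ 2 := by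
  have hsieve := large_sieve (P.sigma fun r => Ico 1 r)
    (fun p => ((p.2 / p.1 : ℝ) : UnitAddCircle)) (δ := 1 / (Q : ℝ) ^ 2) (by positivity) (by
      rintro ⟨r, b⟩ hrb ⟨r', b'⟩ hrb' hne
      rw [mem_sigma] at hrb hrb'
      refine one_div_le_norm_coe_div_sub_coe_div (hP r hrb.1).1 (hP r' hrb'.1).1 (hP r hrb.1).2
        (hP r' hrb'.1).2 hrb.2 hrb'.2 fun h => hne ?_
      obtain ⟨rfl, rfl⟩ := Prod.mk.inj h
      rfl) (M := M) (H := 2 * M + Q ^ 2) (by omega) (by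
      rw [one_div_one_div]
      exact_mod_cast Nat.le_add_left _ _) fun n => (α n : ℂ)
  rw [sum_sigma] at hsieve
  simpa [expSum, Complex.norm_real] using hsieve

end ResidueClasses

section BilinearForms

open Finset

lemma sum_sub_mean_sq_le {ι : Type*} (s : Finset ι) (f : ι → ℝ) (c : ℝ) :
    ∑ i ∈ s, (f i - (∑ j ∈ s, f j) / #s) ^ 2 ≤ ∑ i ∈ s, (f i - c) ^ 2 := by
  rcases s.eq_empty_or_nonempty with rfl | hs
  · simp
  have : (0 : ℝ) < #s := by exact_mod_cast hs.card_pos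
  have hexpand (c : ℝ) : ∑ i ∈ s, (f i - c) ^ 2 =
      ∑ i ∈ s, f i ^ 2 - (∑ i ∈ s, f i) ^ 2 / #s + #s * (c - (∑ i ∈ s, f i) / #s) ^ 2 := by
    simp_rw [sub_sq, sum_add_distrib, sum_sub_distrib, ← sum_mul, ← mul_sum, sum_const,
      nsmul_eq_mul]
    field_simp
    ring
  rw [hexpand, hexpand c, sub_self]
  have : 0 ≤ #s * (c - (∑ i ∈ s, f i) / #s) ^ 2 := by positivity
  linarith

lemma covariance_sq_le {ι : Type*} (s : Finset ι) (f g : ι → ℝ) (c d : ℝ) :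
    (∑ i ∈ s, f i * g i - (∑ i ∈ s, f i) * (∑ i ∈ s, g i) / #s) ^ 2 ≤
      (∑ i ∈ s, (f i - c) ^ 2) * ∑ i ∈ s, (g i - d) ^ 2 := by
  rcases s.eq_empty_or_nonempty with rfl | hs
  · simp
  have hcard : (#s : ℝ) ≠ 0 := by exact_mod_cast hs.card_pos.ne'
  have hcov : ∑ i ∈ s, f i * g i - (∑ i ∈ s, f i) * (∑ i ∈ s, g i) / #s =
      ∑ i ∈ s, (f i - (∑ j ∈ s, f j) / #s) * (g i - (∑ j ∈ s, g j) / #s) := by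
    simp_rw [sub_mul, mul_sub, sum_sub_distrib, ← sum_mul, ← mul_sum, sum_const, nsmul_eq_mul]
    field_simp
    ring
  rw [hcov]
  calc _ ≤ (∑ i ∈ s, (f i - (∑ j ∈ s, f j) / #s) ^ 2) *
        ∑ i ∈ s, (g i - (∑ j ∈ s, g j) / #s) ^ 2 := sum_mul_sq_le_sq_mul_sq _ _ _
    _ ≤ _ := by
        gcongr ?_ * ?_
        · exact sum_sub_mean_sq_le s f c
        · exact sum_sub_mean_sq_le s g d

lemma sum_mul_discrepancyKernel_mul {r : ℕ} [Fact r.Prime] (g : ZMod r → ℝ) (a : ZMod r) :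
    ∑ b, g b * discrepancyKernel r (a * b) =
      if a = 0 then 0 else g a⁻¹ - (∑ b ∈ univ.erase 0, g b) / ((r : ℝ) - 1) := by
  split_ifs with ha
  · simp [ha, discrepancyKernel]
  have hone (b : ZMod r) : a * b = 1 ↔ b = a⁻¹ :=
    ⟨eq_inv_of_mul_eq_one_right, fun h => by rw [h, mul_inv_cancel₀ ha]⟩
  have hne : ∑ b, g b * (if b = 0 then 0 else 1 / ((r : ℝ) - 1)) =
      (∑ b ∈ univ.erase 0, g b) / ((r : ℝ) - 1) := by
    rw [← add_sum_erase univ _ (mem_univ 0), if_pos rfl, mul_zero, zero_add, sum_div]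
    refine sum_congr rfl fun b hb => ?_
    rw [if_neg (ne_of_mem_erase hb), mul_one_div]
  simp only [discrepancyKernel, mul_eq_zero, ha, false_or, hone, mul_sub, sum_sub_distrib, hne]
  simp

lemma sum_sum_mul_discrepancyKernel_eq (α β : ℕ → ℝ) (M N r : ℕ) [Fact r.Prime] :
    ∑ m ∈ range M, ∑ n ∈ range N, α m * β n * discrepancyKernel r (m * n : ℕ) =
      ∑ a ∈ univ.erase (0 : ZMod r), residueSum α M a * residueSum β N a⁻¹ -
        (∑ a ∈ univ.erase (0 : ZMod r), residueSum α M a) *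
          (∑ a ∈ univ.erase (0 : ZMod r), residueSum β N a⁻¹) / ((r : ℝ) - 1) := by
  have hinv : ∑ a ∈ univ.erase (0 : ZMod r), residueSum β N a⁻¹ =
      ∑ a ∈ univ.erase (0 : ZMod r), residueSum β N a := by
    apply sum_bij' (fun a _ => a⁻¹) (fun a _ => a⁻¹) <;> simp
  have hclasses : ∑ m ∈ range M, ∑ n ∈ range N, α m * β n * discrepancyKernel r (m * n : ℕ) =
      ∑ a : ZMod r, residueSum α M a * ∑ b, residueSum β N b * discrepancyKernel r (a * b) := by
    rw [← sum_range_mul_apply_natCast α M r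
      fun a => ∑ b, residueSum β N b * discrepancyKernel r (a * b)]
    refine sum_congr rfl fun m _ => ?_
    rw [← sum_range_mul_apply_natCast β N r fun b => discrepancyKernel r (m * b), mul_sum]
    exact sum_congr rfl fun n _ => by rw [Nat.cast_mul, mul_assoc]
  rw [hinv, hclasses]
  simp_rw [sum_mul_discrepancyKernel_mul]
  rw [← add_sum_erase univ _ (mem_univ 0), if_pos rfl, mul_zero, zero_add, mul_div_assoc, sum_mul,
    ← sum_sub_distrib]
  refine sum_congr rfl fun a ha => ?_
  rw [if_neg (ne_of_mem_erase ha), mul_sub]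

lemma sq_mul_bilinear_discrepancy_sq_le (α β : ℕ → ℝ) (M N : ℕ) {r : ℕ} (hr : r.Prime) :
    (r * ∑ m ∈ range M, ∑ n ∈ range N, α m * β n * discrepancyKernel r (m * n : ℕ)) ^ 2 ≤
      (∑ b ∈ Ico 1 r, ‖expSum α M ((b / r : ℝ) : UnitAddCircle)‖ ^ 2) *
        ∑ b ∈ Ico 1 r, ‖expSum β N ((b / r : ℝ) : UnitAddCircle)‖ ^ 2 := by
  have : Fact r.Prime := ⟨hr⟩
  set c := (∑ m ∈ range M, α m) / r
  set d := (∑ n ∈ range N, β n) / r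
  have hcard : ((#(univ.erase (0 : ZMod r)) : ℕ) : ℝ) = r - 1 := by
    rw [card_erase_of_mem (mem_univ _), card_univ, ZMod.card, Nat.cast_pred hr.pos]
  have hinv : ∑ a ∈ univ.erase (0 : ZMod r), (residueSum β N a⁻¹ - d) ^ 2 =
      ∑ a ∈ univ.erase (0 : ZMod r), (residueSum β N a - d) ^ 2 := by
    apply sum_bij' (fun a _ => a⁻¹) (fun a _ => a⁻¹) <;> simp
  have hcov := covariance_sq_le (univ.erase (0 : ZMod r)) (residueSum α M)
    (fun a => residueSum β N a⁻¹) c d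
  rw [hcard, hinv] at hcov
  rw [sum_sum_mul_discrepancyKernel_eq, mul_pow, ← mul_sum_residueSum_sub_mean_sq,
    ← mul_sum_residueSum_sub_mean_sq]
  calc _ ≤ (r : ℝ) ^ 2 * ((∑ a ∈ univ.erase (0 : ZMod r), (residueSum α M a - c) ^ 2) *
        ∑ a ∈ univ.erase (0 : ZMod r), (residueSum β N a - d) ^ 2) := by gcongr
    _ ≤ (r : ℝ) ^ 2 * ((∑ a : ZMod r, (residueSum α M a - c) ^ 2) *
        ∑ a : ZMod r, (residueSum β N a - d) ^ 2) := by
        gcongr <;> exact subset_univ _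
    _ = _ := by ring

lemma bilinear_large_sieve {R : ℕ} (hR : 0 < R) (P : Finset ℕ)
    (hP : ∀ r ∈ P, r.Prime ∧ R < r ∧ r ≤ 2 * R) (α β : ℕ → ℝ) (M N : ℕ) :
    (R * ∑ r ∈ P,
        |∑ m ∈ range M, ∑ n ∈ range N, α m * β n * discrepancyKernel r (m * n : ℕ)|) ^ 2 ≤
      (4 * (2 * M + 4 * (R : ℝ) ^ 2) * ∑ n ∈ range M, α n ^ 2) *
        (4 * (2 * N + 4 * (R : ℝ) ^ 2) * ∑ n ∈ range N, β n ^ 2) := by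
  set F : (ℕ → ℝ) → ℕ → ℕ → ℝ := fun γ K r =>
    ∑ b ∈ Ico 1 r, ‖expSum γ K ((b / r : ℝ) : UnitAddCircle)‖ ^ 2
  have hF0 (γ : ℕ → ℝ) (K r : ℕ) : 0 ≤ F γ K r := by positivity
  have hsieve (γ : ℕ → ℝ) (K : ℕ) :
      ∑ r ∈ P, F γ K r ≤ 4 * (2 * K + 4 * (R : ℝ) ^ 2) * ∑ n ∈ range K, γ n ^ 2 := by
    refine (large_sieve_prime_moduli P (Q := 2 * R) (by omega)
      (fun r hr => ⟨(hP r hr).1, (hP r hr).2.2⟩) γ K).trans_eq ?_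
    push_cast
    ring
  have hterm (r : ℕ) (hr : r ∈ P) :
      R * |∑ m ∈ range M, ∑ n ∈ range N, α m * β n * discrepancyKernel r (m * n : ℕ)| ≤
        √(F α M r) * √(F β N r) := by
    have hRr : (R : ℝ) ≤ r := by exact_mod_cast (hP r hr).2.1.le
    rw [← Real.sqrt_mul (hF0 _ _ _)]
    refine le_trans ?_
      (Real.abs_le_sqrt (sq_mul_bilinear_discrepancy_sq_le α β M N (hP r hr).1))
    rw [abs_mul, Nat.abs_cast]
    gcongr
  calc _ ≤ (∑ r ∈ P, √(F α M r) * √(F β N r)) ^ 2 := by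
        rw [mul_sum]
        exact pow_le_pow_left₀ (by positivity) (sum_le_sum hterm) 2
    _ ≤ (∑ r ∈ P, √(F α M r) ^ 2) * ∑ r ∈ P, √(F β N r) ^ 2 := sum_mul_sq_le_sq_mul_sq _ _ _
    _ = (∑ r ∈ P, F α M r) * ∑ r ∈ P, F β N r := by simp_rw [Real.sq_sqrt (hF0 _ _ _)]
    _ ≤ _ := mul_le_mul (hsieve α M) (hsieve β N) (sum_nonneg fun r _ => hF0 β N r)
        (by positivity)

end BilinearForms

section VaughanIdentity

open Finset

lemma exists_succ_pow_le_mul_two_pow (k : ℕ) :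
    ∃ C : ℕ, 1 ≤ C ∧ ∀ a : ℕ, (a + 1) ^ k ≤ C * 2 ^ a := by
  obtain ⟨B, hB⟩ := (tendsto_pow_const_div_const_pow_of_one_lt k
    (one_lt_two (α := ℝ))).bddAbove_range
  refine ⟨⌈2 * B⌉₊ + 1, by omega, fun a => ?_⟩
  have ha : ((a + 1 : ℕ) : ℝ) ^ k / 2 ^ (a + 1) ≤ B := hB ⟨a + 1, rfl⟩
  rw [div_le_iff₀ (by positivity)] at ha
  have hceil : 2 * B ≤ ⌈2 * B⌉₊ + 1 := by linarith [Nat.le_ceil (2 * B)]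
  have : (((a + 1) ^ k : ℕ) : ℝ) ≤ (((⌈2 * B⌉₊ + 1) * 2 ^ a : ℕ) : ℝ) := by
    push_cast at ha ⊢
    calc ((a : ℝ) + 1) ^ k ≤ 2 * B * 2 ^ a := ha.trans_eq (by ring)
      _ ≤ _ := by gcongr
  exact_mod_cast this

lemma exists_card_divisors_pow_le_mul (k : ℕ) :
    ∃ C : ℕ, 1 ≤ C ∧ ∀ n : ℕ, n ≠ 0 → #n.divisors ^ k ≤ C * n := by
  obtain ⟨C, hC1, hC⟩ := exists_succ_pow_le_mul_two_pow k
  refine ⟨C ^ 2 ^ k, Nat.one_le_pow _ _ hC1, fun n hn => ?_⟩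
  have hlocal (p : ℕ) (hp : p ∈ n.primeFactors) : (n.factorization p + 1) ^ k ≤
      (if p < 2 ^ k then C else 1) * p ^ n.factorization p := by
    split_ifs with h
    · have hp2 := (Nat.prime_of_mem_primeFactors hp).two_le
      exact (hC _).trans (by gcongr)
    · calc (n.factorization p + 1) ^ k ≤ (2 ^ n.factorization p) ^ k :=
            Nat.pow_le_pow_left Nat.lt_two_pow_self _
        _ = (2 ^ k) ^ n.factorization p := pow_right_comm _ _ _
        _ ≤ 1 * p ^ n.factorization p := by
            rw [one_mul]
            exact Nat.pow_le_pow_left (not_lt.1 h) _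
  calc #n.divisors ^ k = ∏ p ∈ n.primeFactors, (n.factorization p + 1) ^ k := by
        rw [Nat.card_divisors hn, prod_pow]
    _ ≤ ∏ p ∈ n.primeFactors, (if p < 2 ^ k then C else 1) * p ^ n.factorization p :=
        prod_le_prod' hlocal
    _ = C ^ #{p ∈ n.primeFactors | p < 2 ^ k} * n := by
        rw [prod_mul_distrib, ← prod_filter, prod_const]
        congr 1
        exact Nat.prod_factorization_pow_eq_self hn
    _ ≤ C ^ 2 ^ k * n := by
        gcongr
        calc #{p ∈ n.primeFactors | p < 2 ^ k} ≤ #(range (2 ^ k)) :=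
              card_le_card fun p hp => mem_range.2 (mem_filter.1 hp).2
          _ = 2 ^ k := card_range _

lemma sum_Ioc_mul_arithmeticFunction {R : Type*} [Semiring R] (a b : ArithmeticFunction R)
    (F : ℕ → R) (N : ℕ) :
    ∑ k ∈ Ioc 0 N, (a * b) k * F k =
      ∑ m ∈ Ioc 0 N, ∑ n ∈ Ioc 0 (N / m), a m * b n * F (m * n) := by
  simp_rw [ArithmeticFunction.mul_apply, sum_mul]
  rw [sum_sigma', sum_sigma']
  refine sum_nbij' (fun x => ⟨x.2.1, x.2.2⟩) (fun y => ⟨y.1 * y.2, y.1, y.2⟩) ?_ ?_ ?_ ?_ ?_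
  · rintro ⟨_, m, n⟩ h
    simp only [mem_sigma, mem_Ioc, Nat.mem_divisorsAntidiagonal] at h ⊢
    obtain ⟨⟨hpos, hle⟩, rfl, -⟩ := h
    have hm := Nat.pos_of_mul_pos_right hpos
    have hn := Nat.pos_of_mul_pos_left hpos
    exact ⟨⟨hm, (Nat.le_mul_of_pos_right m hn).trans hle⟩, hn,
      (Nat.le_div_iff_mul_le hm).2 (by rwa [mul_comm])⟩
  · rintro ⟨m, n⟩ h
    simp only [mem_sigma, mem_Ioc, Nat.mem_divisorsAntidiagonal] at h ⊢
    obtain ⟨⟨hm, -⟩, hn, hle⟩ := h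
    rw [Nat.le_div_iff_mul_le hm, mul_comm] at hle
    exact ⟨⟨by positivity, hle⟩, trivial, by positivity⟩
  all_goals
    rintro ⟨k, m⟩ h
    simp_all [Nat.mem_divisorsAntidiagonal]

/-- The restriction of an arithmetic function to the integers `n ≤ U`. -/
def truncate {R : Type*} [Zero R] (f : ArithmeticFunction R) (U : ℕ) : ArithmeticFunction R :=
  ⟨fun n => if n ≤ U then f n else 0, by simp⟩

lemma truncate_apply {R : Type*} [Zero R] (f : ArithmeticFunction R) (U n : ℕ) :
    truncate f U n = if n ≤ U then f n else 0 := rfl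

lemma sub_truncate_apply {R : Type*} [Ring R] (f : ArithmeticFunction R) (U n : ℕ) :
    (f - truncate f U) n = if n ≤ U then 0 else f n := by
  have : (f - truncate f U) n = f n - truncate f U n := by
    rw [sub_eq_add_neg, ArithmeticFunction.add_apply, sub_eq_add_neg]
    rfl
  rw [this, truncate_apply]
  split_ifs <;> simp

open ArithmeticFunction in
lemma vaughan_identity (U V : ℕ) : vonMangoldt = truncate vonMangoldt U
    + truncate (moebius : ArithmeticFunction ℝ) V * log
    - truncate (moebius : ArithmeticFunction ℝ) V * truncate vonMangoldt U *
      (zeta : ArithmeticFunction ℝ)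
    + ((moebius : ArithmeticFunction ℝ) - truncate (moebius : ArithmeticFunction ℝ) V) *
      (zeta : ArithmeticFunction ℝ) * (vonMangoldt - truncate vonMangoldt U) := by
  rw [← vonMangoldt_mul_zeta]
  linear_combination (truncate vonMangoldt U - vonMangoldt) *
    (coe_moebius_mul_coe_zeta : (moebius : ArithmeticFunction ℝ) * zeta = 1)

end VaughanIdentity

section TypeI

open Finset

lemma sum_ite_zero_one_div_pred {r : ℕ} [Fact r.Prime] :
    ∑ a : ZMod r, (if a = 0 then (0 : ℝ) else 1 / ((r : ℝ) - 1)) = 1 := by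
  have hr : (1 : ℝ) < r := by exact_mod_cast (Fact.out : r.Prime).one_lt
  have hcard : ((#{a : ZMod r | ¬ a = 0} : ℕ) : ℝ) = r - 1 := by
    rw [filter_not, filter_eq', if_pos (mem_univ _), card_sdiff_of_subset (subset_univ _),
      card_singleton, card_univ, ZMod.card, Nat.cast_pred (Fact.out : r.Prime).pos]
  rw [sum_ite, sum_const_zero, zero_add, sum_const, nsmul_eq_mul, hcard,
    mul_one_div_cancel (sub_pos.2 hr).ne']

lemma sum_discrepancyKernel (r : ℕ) [Fact r.Prime] : ∑ a, discrepancyKernel r a = 0 := by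
  simp_rw [discrepancyKernel]
  rw [sum_sub_distrib, sum_ite_zero_one_div_pred, sum_ite_eq' univ (1 : ZMod r),
    if_pos (mem_univ _), sub_self]

lemma sum_abs_discrepancyKernel_le (r : ℕ) [Fact r.Prime] :
    ∑ a, |discrepancyKernel r a| ≤ 2 := by
  have hr : (1 : ℝ) < r := by exact_mod_cast (Fact.out : r.Prime).one_lt
  have hterm (a : ZMod r) : |discrepancyKernel r a| ≤
      (if a = 1 then 1 else 0) + (if a = 0 then 0 else 1 / ((r : ℝ) - 1)) := by
    have : 0 ≤ 1 / ((r : ℝ) - 1) := one_div_nonneg.2 (sub_nonneg.2 hr.le)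
    refine (abs_sub _ _).trans_eq ?_
    congr 1 <;> exact abs_of_nonneg (by split_ifs <;> positivity)
  calc _ ≤ _ := sum_le_sum fun a _ => hterm a
    _ = 2 := by
        rw [sum_add_distrib, sum_ite_zero_one_div_pred, sum_ite_eq' univ (1 : ZMod r)]
        norm_num

lemma abs_sum_range_discrepancyKernel_le {r m : ℕ} (hr : r.Prime) (hm : ¬ r ∣ m) (j : ℕ) :
    |∑ n ∈ range j, discrepancyKernel r (m * n : ℕ)| ≤ 2 := by
  have : Fact r.Prime := ⟨hr⟩
  have hm0 : (m : ZMod r) ≠ 0 := by rwa [Ne, ZMod.natCast_eq_zero_iff]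
  have hperiod (g : ZMod r → ℝ) : ∑ n ∈ range r, g (m * n : ℕ) = ∑ a, g a := by
    simp_rw [Nat.cast_mul]
    rw [sum_range_natCast r fun a => g (m * a)]
    exact Equiv.sum_comp (Equiv.mulLeft₀ (m : ZMod r) hm0) g
  induction j using Nat.strong_induction_on with
  | _ j ih =>
    rcases lt_or_ge j r with hj | hj
    · calc _ ≤ ∑ n ∈ range j, |discrepancyKernel r (m * n : ℕ)| := abs_sum_le_sum_abs _ _
        _ ≤ ∑ n ∈ range r, |discrepancyKernel r (m * n : ℕ)| :=
            sum_le_sum_of_subset_of_nonneg (range_mono hj.le) fun _ _ _ => abs_nonneg _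
        _ ≤ 2 := by
            rw [hperiod fun a => |discrepancyKernel r a|]
            exact sum_abs_discrepancyKernel_le r
    · obtain ⟨i, rfl⟩ := Nat.exists_eq_add_of_le hj
      rw [sum_range_add, hperiod, sum_discrepancyKernel, zero_add]
      simpa [mul_add] using ih i (by have := hr.pos; omega)

lemma abs_sum_range_mul_le_of_monotone {b k : ℕ → ℝ} {K : ℝ} (hb : Monotone b) (hb0 : 0 ≤ b 0)
    (hk : ∀ j, |∑ n ∈ range j, k n| ≤ K) (n : ℕ) :
    |∑ i ∈ range (n + 1), b i * k i| ≤ 2 * K * b n := by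
  have hbn : 0 ≤ b n := hb0.trans (hb n.zero_le)
  have hK : 0 ≤ K := (abs_nonneg _).trans (hk 0)
  have hincr : |∑ i ∈ range n, (b (i + 1) - b i) * ∑ j ∈ range (i + 1), k j| ≤
      (b n - b 0) * K := by
    rw [← sum_range_sub b n, sum_mul]
    refine (abs_sum_le_sum_abs _ _).trans (sum_le_sum fun i _ => ?_)
    have hi : 0 ≤ b (i + 1) - b i := sub_nonneg.2 (hb i.le_succ)
    rw [abs_mul, abs_of_nonneg hi]
    exact mul_le_mul_of_nonneg_left (hk _) hi
  have hparts := sum_range_by_parts b k (n + 1)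
  simp only [smul_eq_mul, Nat.add_sub_cancel] at hparts
  calc _ ≤ |b n * ∑ i ∈ range (n + 1), k i| +
        |∑ i ∈ range n, (b (i + 1) - b i) * ∑ j ∈ range (i + 1), k j| := by
        rw [hparts]
        exact abs_sub _ _
    _ ≤ b n * K + (b n - b 0) * K := by
        rw [abs_mul, abs_of_nonneg hbn]
        gcongr
        exact hk _
    _ ≤ 2 * K * b n := by nlinarith

lemma type_I_estimate {a b : ℕ → ℝ} {A : ℝ} {W N r : ℕ} (hr : r.Prime) (hW : W < r)
    (hA0 : 0 ≤ A) (ha : ∀ m ∈ Ioc 0 N, |a m| ≤ A) (haW : ∀ m, W < m → a m = 0)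
    (hb : Monotone b) (hb0 : b 0 = 0) :
    |∑ m ∈ Ioc 0 N, ∑ n ∈ Ioc 0 (N / m), a m * b n * discrepancyKernel r (m * n : ℕ)| ≤
      W * (A * (4 * b N)) := by
  have hbN : 0 ≤ b N := hb0 ▸ hb N.zero_le
  have hinner (m : ℕ) (hm : m ∈ Ioc 0 W) :
      |∑ n ∈ Ioc 0 (N / m), b n * discrepancyKernel r (m * n : ℕ)| ≤ 4 * b N := by
    rw [mem_Ioc] at hm
    have hrm : ¬ r ∣ m := fun h => by have := Nat.le_of_dvd hm.1 h; omega
    have hzero : ∑ n ∈ Ioc 0 (N / m), b n * discrepancyKernel r (m * n : ℕ) =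
        ∑ n ∈ range (N / m + 1), b n * discrepancyKernel r (m * n : ℕ) := by
      rw [sum_range_eq_add_Ico _ (Nat.succ_pos _), hb0, zero_mul, zero_add]
      rfl
    calc _ ≤ 2 * 2 * b (N / m) := by
          rw [hzero]
          exact abs_sum_range_mul_le_of_monotone hb hb0.ge
            (abs_sum_range_discrepancyKernel_le hr hrm) _
      _ ≤ 4 * b N := by linarith [hb (Nat.div_le_self N m)]
  have hterm (m : ℕ) (hm : m ∈ Ioc 0 N) :
      |∑ n ∈ Ioc 0 (N / m), a m * b n * discrepancyKernel r (m * n : ℕ)| ≤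
        if m ∈ Ioc 0 W then A * (4 * b N) else 0 := by
    simp_rw [mul_assoc, ← mul_sum, abs_mul]
    split_ifs with h
    · exact mul_le_mul (ha m hm) (hinner m h) (abs_nonneg _) hA0
    · rw [haW m (by simp_all), abs_zero, zero_mul]
  calc _ ≤ ∑ m ∈ Ioc 0 N, if m ∈ Ioc 0 W then A * (4 * b N) else 0 :=
        (abs_sum_le_sum_abs _ _).trans (sum_le_sum hterm)
    _ = #{m ∈ Ioc 0 N | m ∈ Ioc 0 W} * (A * (4 * b N)) := by
        rw [← sum_filter, sum_const, nsmul_eq_mul]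
    _ ≤ #(Ioc 0 W) * (A * (4 * b N)) := by
        gcongr
        exact fun m hm => (mem_filter.1 hm).2
    _ = _ := by rw [Nat.card_Ioc, Nat.sub_zero]

end TypeI

section TypeII

open Finset

/-- The sum over the moduli `r ∈ P` of the discrepancies of the point mass at `k`; summed against a
sequence, it measures how far the sequence is from equidistribution modulo the members of `P`. -/
noncomputable def totalDiscrepancy (P : Finset ℕ) (k : ℕ) : ℝ :=
  ∑ r ∈ P, discrepancyKernel r (k : ZMod r)

/-- The index `j` of the multiplicative cell `exp (j / H) ≤ m < exp ((j + 1) / H)`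
containing `m`. -/
noncomputable def cellIndex (H m : ℕ) : ℕ := ⌊(H : ℝ) * Real.log m⌋₊

/-- The right endpoint of the multiplicative cell `exp (j / H) ≤ m < exp ((j + 1) / H)`. -/
noncomputable def cellEnd (H j : ℕ) : ℝ := Real.exp ((j + 1) / H)

lemma cellEnd_pos (H j : ℕ) : 0 < cellEnd H j := Real.exp_pos _

lemma lt_cellEnd_cellIndex {H m : ℕ} (hH : 0 < H) (hm : 0 < m) :
    (m : ℝ) < cellEnd H (cellIndex H m) := by
  rw [cellEnd, ← Real.log_lt_iff_lt_exp (by positivity), lt_div_iff₀ (by positivity), mul_comm]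
  exact Nat.lt_floor_add_one _

lemma cellEnd_cellIndex_mul_le {H m : ℕ} (hH : 0 < H) (hm : 0 < m) :
    cellEnd H (cellIndex H m) * (1 - 1 / H) ≤ m := by
  have hm1 : (1 : ℝ) ≤ m := by exact_mod_cast hm
  have hfloor : (cellIndex H m : ℝ) ≤ H * Real.log m :=
    Nat.floor_le (mul_nonneg H.cast_nonneg (Real.log_nonneg hm1))
  calc cellEnd H (cellIndex H m) * (1 - 1 / H)
      ≤ cellEnd H (cellIndex H m) * Real.exp (-(1 / H)) := by
        have := (cellEnd_pos H (cellIndex H m)).le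
        gcongr
        exact Real.one_sub_le_exp_neg _
    _ = Real.exp (cellIndex H m / H) := by
        rw [cellEnd, ← Real.exp_add]
        ring_nf
    _ ≤ Real.exp (Real.log m) := by
        gcongr
        rw [div_le_iff₀ (by positivity)]
        linarith
    _ = m := Real.exp_log (by positivity)

lemma cellIndex_mono {H m N : ℕ} (hm : 0 < m) (hmN : m ≤ N) : cellIndex H m ≤ cellIndex H N := by
  rw [cellIndex, cellIndex]
  gcongr

lemma sum_range_sq_le_of_abs_le {α : ℕ → ℝ} {A : ℝ} (hα : ∀ n, |α n| ≤ A) (N : ℕ) :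
    ∑ n ∈ range N, α n ^ 2 ≤ N * A ^ 2 := by
  calc ∑ n ∈ range N, α n ^ 2 ≤ ∑ _n ∈ range N, A ^ 2 :=
        sum_le_sum fun n _ => sq_le_sq' (abs_le.1 (hα n)).1 (abs_le.1 (hα n)).2
    _ = N * A ^ 2 := by simp

lemma type_II_cell_sq_le {R : ℕ} (hR : 0 < R) {P : Finset ℕ}
    (hP : ∀ r ∈ P, r.Prime ∧ R < r ∧ r ≤ 2 * R) {α β : ℕ → ℝ} {A E : ℝ} {U N : ℕ} (hU : 1 ≤ U)
    (hUE : U ≤ E) (hUNE : U ≤ N / E) (hα : ∀ m, |α m| ≤ A) (hβ : ∀ n, |β n| ≤ A) :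
    (R * ∑ r ∈ P, |∑ m ∈ range ⌈E⌉₊, ∑ n ∈ range (⌊N / E⌋₊ + 1),
        α m * β n * discrepancyKernel r (m * n : ℕ)|) ^ 2 ≤
      1024 * N * A ^ 4 * (N + 2 * R ^ 2 * (N / U) + R ^ 4) := by
  have hU1 : (1 : ℝ) ≤ U := by exact_mod_cast hU
  have hE : 0 < E := by linarith
  set M := ⌈E⌉₊
  set K := ⌊N / E⌋₊ + 1
  have hM : (M : ℝ) ≤ 2 * E := by linarith [(Nat.ceil_lt_add_one hE.le).le]
  have hK : (K : ℝ) ≤ 2 * (N / E) := by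
    have := Nat.floor_le (a := N / E) (by positivity)
    push_cast [K]
    linarith
  have hMK : (M : ℝ) * K ≤ 4 * N := by
    calc (M : ℝ) * K ≤ 2 * E * (2 * (N / E)) := by gcongr
      _ = 4 * N := by field_simp; ring
  have hE_le : E ≤ N / U := by
    rw [le_div_iff₀ hE] at hUNE
    rw [le_div_iff₀ (by positivity)]
    linarith
  have hfactors : (2 * (M : ℝ) + 4 * R ^ 2) * (2 * K + 4 * R ^ 2) ≤
      16 * (N + 2 * R ^ 2 * (N / U) + R ^ 4) := by
    have hNE : (N : ℝ) / E ≤ N / U := by gcongr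
    have : (R : ℝ) ^ 2 * (M + K) ≤ R ^ 2 * (4 * (N / U)) := by
      gcongr
      linarith
    nlinarith
  calc _ ≤ 4 * (2 * (M : ℝ) + 4 * R ^ 2) * (M * A ^ 2) *
        (4 * (2 * (K : ℝ) + 4 * R ^ 2) * (K * A ^ 2)) := by
        refine (bilinear_large_sieve hR P hP α β M K).trans ?_
        gcongr
        · exact sum_range_sq_le_of_abs_le hα M
        · exact sum_range_sq_le_of_abs_le hβ K
    _ = 16 * A ^ 4 * (M * K) * ((2 * (M : ℝ) + 4 * R ^ 2) * (2 * K + 4 * R ^ 2)) := by ring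
    _ ≤ 16 * A ^ 4 * (4 * N) * (16 * (N + 2 * R ^ 2 * (N / U) + R ^ 4)) := by gcongr
    _ = _ := by ring

lemma type_II_cell {R : ℕ} (hR : 0 < R) {P : Finset ℕ}
    (hP : ∀ r ∈ P, r.Prime ∧ R < r ∧ r ≤ 2 * R) {α β : ℕ → ℝ} {A B E : ℝ} {U N : ℕ} (hU : 1 ≤ U)
    (hE : 0 < E) (hB : 0 ≤ B) (hα : ∀ m, |α m| ≤ A) (hβ : ∀ n, |β n| ≤ A)
    (hαU : ∀ m ≤ U, α m = 0) (hβU : ∀ n ≤ U, β n = 0)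
    (hAB : 1024 * N * A ^ 4 * (N + 2 * R ^ 2 * (N / U) + R ^ 4) ≤ B ^ 2) :
    R * ∑ r ∈ P, |∑ m ∈ range ⌈E⌉₊, ∑ n ∈ range (⌊N / E⌋₊ + 1),
      α m * β n * discrepancyKernel r (m * n : ℕ)| ≤ B := by
  by_cases hcell : U ≤ E ∧ U ≤ N / E
  · exact le_of_sq_le_sq ((type_II_cell_sq_le hR hP hU hcell.1 hcell.2 hα hβ).trans hAB) hB
  have hzero (r : ℕ) : ∑ m ∈ range ⌈E⌉₊, ∑ n ∈ range (⌊N / E⌋₊ + 1),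
      α m * β n * discrepancyKernel r (m * n : ℕ) = 0 := by
    refine sum_eq_zero fun m hm => sum_eq_zero fun n hn => ?_
    rw [mem_range, Nat.lt_ceil] at hm
    rw [mem_range, Nat.lt_succ_iff, Nat.le_floor_iff (by positivity)] at hn
    rcases not_and_or.1 hcell with h | h
    · rw [hαU m (by exact_mod_cast (hm.trans (not_le.1 h)).le), zero_mul, zero_mul]
    · rw [hβU n (by exact_mod_cast (hn.trans (not_le.1 h).le)), mul_zero, zero_mul]
  rw [sum_eq_zero fun r _ => by rw [hzero, abs_zero], mul_zero]
  exact hB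

lemma sum_Ioc_eq_sum_cells {H N : ℕ} (hH : 0 < H) (g : ℕ → ℕ → ℝ) :
    ∑ m ∈ Ioc 0 N, g (cellIndex H m) m =
      ∑ j ∈ range (cellIndex H N + 1), ∑ m ∈ range ⌈cellEnd H j⌉₊,
        if m ∈ Ioc 0 N ∧ cellIndex H m = j then g j m else 0 := by
  rw [← sum_fiberwise_of_maps_to (t := range (cellIndex H N + 1)) (g := cellIndex H)
    fun m hm => mem_range.2 <| Nat.lt_succ_of_le <|
      cellIndex_mono (mem_Ioc.1 hm).1 (mem_Ioc.1 hm).2]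
  refine sum_congr rfl fun j _ => ?_
  have hcell : {m ∈ Ioc 0 N | cellIndex H m = j} =
      {m ∈ range ⌈cellEnd H j⌉₊ | m ∈ Ioc 0 N ∧ cellIndex H m = j} := by
    ext m
    simp only [mem_filter, mem_range, Nat.lt_ceil, iff_and_self]
    rintro ⟨hm, rfl⟩
    exact lt_cellEnd_cellIndex hH (mem_Ioc.1 hm).1
  rw [← sum_filter, ← hcell]
  exact sum_congr rfl fun m hm => by rw [(mem_filter.1 hm).2]

lemma type_II_main {R : ℕ} (hR : 0 < R) {P : Finset ℕ}
    (hP : ∀ r ∈ P, r.Prime ∧ R < r ∧ r ≤ 2 * R) {α β : ℕ → ℝ} {A B : ℝ} {U N H : ℕ} (hU : 1 ≤ U)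
    (hH : 0 < H) (hB : 0 ≤ B) (hα : ∀ m, |α m| ≤ A) (hβ : ∀ n, |β n| ≤ A)
    (hαU : ∀ m ≤ U, α m = 0) (hβU : ∀ n ≤ U, β n = 0)
    (hAB : 1024 * N * A ^ 4 * (N + 2 * R ^ 2 * (N / U) + R ^ 4) ≤ B ^ 2) :
    R * |∑ m ∈ Ioc 0 N, ∑ n ∈ range (⌊N / cellEnd H (cellIndex H m)⌋₊ + 1),
        α m * β n * totalDiscrepancy P (m * n)| ≤ (cellIndex H N + 1 : ℕ) * B := by
  set αc : ℕ → ℕ → ℝ := fun j m => if m ∈ Ioc 0 N ∧ cellIndex H m = j then α m else 0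
  set S : ℕ → ℕ → ℝ := fun j r => ∑ m ∈ range ⌈cellEnd H j⌉₊,
    ∑ n ∈ range (⌊N / cellEnd H j⌋₊ + 1), αc j m * β n * discrepancyKernel r (m * n : ℕ)
  have hcells : ∑ m ∈ Ioc 0 N, ∑ n ∈ range (⌊N / cellEnd H (cellIndex H m)⌋₊ + 1),
      α m * β n * totalDiscrepancy P (m * n) =
        ∑ j ∈ range (cellIndex H N + 1), ∑ r ∈ P, S j r := by
    rw [sum_Ioc_eq_sum_cells hH fun j m => ∑ n ∈ range (⌊N / cellEnd H j⌋₊ + 1),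
      α m * β n * totalDiscrepancy P (m * n)]
    refine sum_congr rfl fun j _ => ?_
    simp only [S]
    rw [sum_comm]
    refine sum_congr rfl fun m _ => ?_
    rw [sum_comm]
    simp_rw [← mul_sum]
    simp only [αc, totalDiscrepancy]
    split_ifs <;> simp
  have hS (j : ℕ) : R * ∑ r ∈ P, |S j r| ≤ B := by
    have hA : 0 ≤ A := (abs_nonneg _).trans (hα 0)
    refine type_II_cell hR hP hU (cellEnd_pos H j) hB (fun m => ?_) hβ (fun m hm => ?_) hβU hAB
    · simp only [αc]
      split_ifs
      exacts [hα m, by rwa [abs_zero]]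
    · simp [αc, hαU m hm]
  calc _ ≤ R * ∑ j ∈ range (cellIndex H N + 1), ∑ r ∈ P, |S j r| := by
        rw [hcells]
        gcongr
        exact (abs_sum_le_sum_abs _ _).trans (sum_le_sum fun j _ => abs_sum_le_sum_abs _ _)
    _ ≤ ∑ _j ∈ range (cellIndex H N + 1), B := by
        rw [mul_sum]
        exact sum_le_sum fun j _ => hS j
    _ = _ := by simp

lemma mul_one_sub_lt_of_floor_lt {H N m n : ℕ} (hH : 0 < H) (hm : 0 < m)
    (hn : ⌊N / cellEnd H (cellIndex H m)⌋₊ < n) : (N : ℝ) * (1 - 1 / H) < (m * n : ℕ) := by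
  have hn0 : 0 < n := by omega
  rcases (Nat.succ_le_of_lt hH).eq_or_lt with rfl | hH1
  · simpa using (by positivity : (0 : ℝ) < m * n)
  have hH1' : (1 : ℝ) < H := by exact_mod_cast hH1
  have hH_pos : 0 < 1 - 1 / (H : ℝ) := by
    rw [sub_pos, div_lt_one (by positivity)]
    exact hH1'
  have hE := cellEnd_pos H (cellIndex H m)
  rw [Nat.floor_lt (by positivity), div_lt_iff₀ hE] at hn
  calc (N : ℝ) * (1 - 1 / H) < n * cellEnd H (cellIndex H m) * (1 - 1 / H) := by gcongr
    _ = n * (cellEnd H (cellIndex H m) * (1 - 1 / H)) := mul_assoc _ _ _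
    _ ≤ n * m := by
        gcongr
        exact cellEnd_cellIndex_mul_le hH hm
    _ = (m * n : ℕ) := by push_cast; ring

lemma card_filter_mul_one_sub_lt_le (H N : ℕ) :
    (#{k ∈ Ioc 0 N | (N : ℝ) * (1 - 1 / H) < (k : ℕ)} : ℝ) ≤ N / H + 1 := by
  have hsub : {k ∈ Ioc 0 N | (N : ℝ) * (1 - 1 / H) < (k : ℕ)} ⊆ Ioc (N - (N / H + 1)) N := by
    intro k hk
    rw [mem_filter, mem_Ioc] at hk
    refine mem_Ioc.2 ⟨?_, hk.1.2⟩
    by_contra hcon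
    have hle : (k : ℝ) + ((N / H : ℕ) + 1) ≤ N := by
      exact_mod_cast (by omega : k + (N / H + 1) ≤ N)
    have hdiv : (N : ℝ) / H < (N / H : ℕ) + 1 := by
      rw [← Nat.floor_div_eq_div (K := ℝ)]
      exact Nat.lt_floor_add_one _
    linarith [hk.2, mul_one_sub (N : ℝ) (1 / H), mul_one_div (N : ℝ) H]
  have hcard : #{k ∈ Ioc 0 N | (N : ℝ) * (1 - 1 / H) < (k : ℕ)} ≤ N / H + 1 := by
    refine (card_le_card hsub).trans ?_
    rw [Nat.card_Ioc]
    exact tsub_tsub_le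
  calc _ ≤ ((N / H + 1 : ℕ) : ℝ) := by exact_mod_cast hcard
    _ ≤ N / H + 1 := by
        push_cast
        gcongr
        exact Nat.cast_div_le

lemma sum_sum_Ioc_div_eq_sum_card_divisors_mul (w : ℕ → ℝ) (N : ℕ) :
    ∑ m ∈ Ioc 0 N, ∑ n ∈ Ioc 0 (N / m), w (m * n) = ∑ k ∈ Ioc 0 N, #k.divisors * w k := by
  have h := sum_Ioc_mul_arithmeticFunction (ArithmeticFunction.zeta : ArithmeticFunction ℝ)
    (ArithmeticFunction.zeta : ArithmeticFunction ℝ) w N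
  have hzeta {n : ℕ} (hn : 0 < n) : (ArithmeticFunction.zeta : ArithmeticFunction ℝ) n = 1 := by
    rw [ArithmeticFunction.natCoe_apply, ArithmeticFunction.zeta_apply_ne hn.ne', Nat.cast_one]
  calc _ = ∑ m ∈ Ioc 0 N, ∑ n ∈ Ioc 0 (N / m), (ArithmeticFunction.zeta : ArithmeticFunction ℝ) m *
        (ArithmeticFunction.zeta : ArithmeticFunction ℝ) n * w (m * n) :=
        sum_congr rfl fun m hm => sum_congr rfl fun n hn => by
          rw [hzeta (mem_Ioc.1 hm).1, hzeta (mem_Ioc.1 hn).1, one_mul, one_mul]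
    _ = _ := h.symm
    _ = _ := by
        refine sum_congr rfl fun k _ => ?_
        rw [ArithmeticFunction.coe_mul_zeta_apply,
          sum_congr rfl fun i hi => hzeta (Nat.pos_of_mem_divisors hi), sum_const, nsmul_one]

lemma type_II_boundary {F α β : ℕ → ℝ} {A D G : ℝ} {N H : ℕ} (hH : 0 < H) (hG : 0 ≤ G)
    (hα : ∀ m, |α m| ≤ A) (hβ : ∀ n, |β n| ≤ A)
    (hF : ∀ k ∈ Ioc 0 N, (N : ℝ) * (1 - 1 / H) < k → |F k| ≤ G)
    (hD : ∀ k ∈ Ioc 0 N, (#k.divisors : ℝ) ≤ D) (hD0 : 0 ≤ D) :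
    |∑ m ∈ Ioc 0 N, ∑ n ∈ Ioc ⌊N / cellEnd H (cellIndex H m)⌋₊ (N / m),
        α m * β n * F (m * n)| ≤ (N / H + 1) * (D * (A ^ 2 * G)) := by
  have hA : 0 ≤ A := (abs_nonneg _).trans (hα 0)
  set w : ℕ → ℝ := fun k => if (N : ℝ) * (1 - 1 / H) < k then A ^ 2 * G else 0
  have hw (k : ℕ) : 0 ≤ w k := by
    simp only [w]
    split_ifs <;> positivity
  have hterm (m : ℕ) (hm : m ∈ Ioc 0 N) (n : ℕ)
      (hn : n ∈ Ioc ⌊N / cellEnd H (cellIndex H m)⌋₊ (N / m)) :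
      |α m * β n * F (m * n)| ≤ w (m * n) := by
    rw [mem_Ioc] at hm hn
    have hlt := mul_one_sub_lt_of_floor_lt hH hm.1 hn.1
    have hmn : m * n ∈ Ioc 0 N := mem_Ioc.2
      ⟨Nat.mul_pos hm.1 (by omega), (Nat.mul_le_mul_left m hn.2).trans (Nat.mul_div_le N m)⟩
    simp only [w, if_pos hlt, abs_mul, sq]
    gcongr
    exacts [hα m, hβ n, hF _ hmn hlt]
  calc _ ≤ ∑ m ∈ Ioc 0 N, ∑ n ∈ Ioc ⌊N / cellEnd H (cellIndex H m)⌋₊ (N / m), w (m * n) :=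
        (abs_sum_le_sum_abs _ _).trans <| sum_le_sum fun m hm =>
          (abs_sum_le_sum_abs _ _).trans <| sum_le_sum fun n hn => hterm m hm n hn
    _ ≤ ∑ m ∈ Ioc 0 N, ∑ n ∈ Ioc 0 (N / m), w (m * n) := by
        gcongr with m
        exact Nat.zero_le _
    _ ≤ ∑ k ∈ Ioc 0 N, D * w k := by
        rw [sum_sum_Ioc_div_eq_sum_card_divisors_mul]
        exact sum_le_sum fun k hk => mul_le_mul_of_nonneg_right (hD k hk) (hw k)
    _ = #{k ∈ Ioc 0 N | (N : ℝ) * (1 - 1 / H) < (k : ℕ)} * (D * (A ^ 2 * G)) := by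
        rw [← mul_sum, ← sum_filter, sum_const, nsmul_eq_mul, mul_left_comm]
    _ ≤ _ := by
        gcongr
        exact card_filter_mul_one_sub_lt_le H N

/- Splitting the range of `m` into multiplicative cells replaces the condition `m * n ≤ N` by
`n ≤ N / e` with `e` the end of the cell of `m`, so that the large sieve applies to each cell; the
pairs lost in this way satisfy `N * (1 - 1 / H) < m * n ≤ N`. -/
lemma type_II_estimate {R : ℕ} (hR : 0 < R) {P : Finset ℕ}
    (hP : ∀ r ∈ P, r.Prime ∧ R < r ∧ r ≤ 2 * R) {α β : ℕ → ℝ} {A B D G : ℝ} {U N H : ℕ}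
    (hU : 1 ≤ U) (hH : 0 < H) (hB : 0 ≤ B) (hG : 0 ≤ G) (hD0 : 0 ≤ D)
    (hα : ∀ m, |α m| ≤ A) (hβ : ∀ n, |β n| ≤ A)
    (hαU : ∀ m ≤ U, α m = 0) (hβU : ∀ n ≤ U, β n = 0)
    (hAB : 1024 * N * A ^ 4 * (N + 2 * R ^ 2 * (N / U) + R ^ 4) ≤ B ^ 2)
    (hF : ∀ k ∈ Ioc 0 N, (N : ℝ) * (1 - 1 / H) < k → |totalDiscrepancy P k| ≤ G)
    (hD : ∀ k ∈ Ioc 0 N, (#k.divisors : ℝ) ≤ D) :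
    |∑ m ∈ Ioc 0 N, ∑ n ∈ Ioc 0 (N / m), α m * β n * totalDiscrepancy P (m * n)| ≤
      (cellIndex H N + 1 : ℕ) * B / R + (N / H + 1) * (D * (A ^ 2 * G)) := by
  have hsplit (m : ℕ) (hm : m ∈ Ioc 0 N) :
      ∑ n ∈ Ioc 0 (N / m), α m * β n * totalDiscrepancy P (m * n) =
        ∑ n ∈ range (⌊N / cellEnd H (cellIndex H m)⌋₊ + 1),
          α m * β n * totalDiscrepancy P (m * n) +
        ∑ n ∈ Ioc ⌊N / cellEnd H (cellIndex H m)⌋₊ (N / m),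
          α m * β n * totalDiscrepancy P (m * n) := by
    have hm0 : 0 < m := (mem_Ioc.1 hm).1
    rw [sum_range_eq_add_Ico _ (Nat.succ_pos _), hβU 0 (Nat.zero_le _), mul_zero, zero_mul,
      zero_add]
    refine (sum_Ioc_consecutive _ (Nat.zero_le _) ?_).symm
    rw [← Nat.floor_div_eq_div (K := ℝ)]
    refine Nat.floor_le_floor ?_
    gcongr
    exact (lt_cellEnd_cellIndex hH hm0).le
  rw [sum_congr rfl hsplit, sum_add_distrib]
  refine (abs_add_le _ _).trans (add_le_add ?_ (type_II_boundary hH hG hα hβ hF hD hD0))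
  rw [le_div_iff₀' (by positivity)]
  exact type_II_main hR hP hU hH hB hα hβ hαU hβU hAB

end TypeII

section PrimesInDyadicModuli

open Finset
open ArithmeticFunction

variable {R : ℕ} {P : Finset ℕ}

lemma card_le_of_forall_dyadic (hP : ∀ r ∈ P, R < r ∧ r ≤ 2 * R) : #P ≤ R := by
  calc #P ≤ #(Ioc R (2 * R)) := card_le_card fun r hr => mem_Ioc.2 (hP r hr)
    _ = R := by rw [Nat.card_Ioc]; omega

lemma sum_one_div_pred_le_one (hR : 0 < R) (hP : ∀ r ∈ P, R < r ∧ r ≤ 2 * R) :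
    ∑ r ∈ P, 1 / ((r : ℝ) - 1) ≤ 1 := by
  have hterm (r : ℕ) (hr : r ∈ P) : 1 / ((r : ℝ) - 1) ≤ 1 / R := by
    have : (R : ℝ) + 1 ≤ r := by exact_mod_cast (hP r hr).1
    exact one_div_le_one_div_of_le (by positivity) (by linarith)
  calc ∑ r ∈ P, 1 / ((r : ℝ) - 1) ≤ ∑ _r ∈ P, 1 / (R : ℝ) := sum_le_sum hterm
    _ = #P / R := by rw [sum_const, nsmul_eq_mul, mul_one_div]
    _ ≤ 1 := by
        rw [div_le_one (by positivity)]
        exact_mod_cast card_le_of_forall_dyadic hP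

lemma totalDiscrepancy_eq (P : Finset ℕ) (k : ℕ) :
    totalDiscrepancy P k = #{r ∈ P | (k : ZMod r) = 1} -
      ∑ r ∈ P, if (k : ZMod r) = 0 then 0 else 1 / ((r : ℝ) - 1) := by
  simp_rw [totalDiscrepancy, discrepancyKernel]
  rw [sum_sub_distrib, ← sum_filter, sum_const, nsmul_one]

lemma abs_totalDiscrepancy_le (hR : 0 < R) (hP : ∀ r ∈ P, r.Prime ∧ R < r ∧ r ≤ 2 * R) (k : ℕ) :
    |totalDiscrepancy P k| ≤ #{r ∈ P | (k : ZMod r) = 1} + 1 := by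
  have hpred (r : ℕ) (hr : r ∈ P) : 0 ≤ 1 / ((r : ℝ) - 1) :=
    one_div_nonneg.2 (sub_nonneg.2 (by exact_mod_cast (hP r hr).1.one_le))
  have hmean : 0 ≤ ∑ r ∈ P, if (k : ZMod r) = 0 then 0 else 1 / ((r : ℝ) - 1) :=
    sum_nonneg fun r hr => by split_ifs; exacts [le_rfl, hpred r hr]
  have hmean_le : ∑ r ∈ P, (if (k : ZMod r) = 0 then 0 else 1 / ((r : ℝ) - 1)) ≤ 1 := by
    refine (sum_le_sum fun r hr => ?_).trans
      (sum_one_div_pred_le_one hR fun r hr => (hP r hr).2)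
    split_ifs
    exacts [hpred r hr, le_rfl]
  rw [totalDiscrepancy_eq]
  refine (abs_sub _ _).trans ?_
  rw [Nat.abs_cast, abs_of_nonneg hmean]
  gcongr

lemma card_filter_natCast_eq_one_le {k : ℕ} (hk : 1 < k) (P : Finset ℕ) :
    #{r ∈ P | (k : ZMod r) = 1} ≤ #(k - 1).divisors := by
  refine card_le_card fun r hr => Nat.mem_divisors.2 ⟨?_, by omega⟩
  rw [← ZMod.natCast_eq_zero_iff, Nat.cast_sub hk.le, (mem_filter.1 hr).2, Nat.cast_one, sub_self]

lemma abs_mul_apply_le_card_divisors_mul {a b : ArithmeticFunction ℝ} {A B : ℝ} {m : ℕ}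
    (hA : 0 ≤ A) (ha : ∀ d ∈ m.divisors, |a d| ≤ A) (hb : ∀ d ∈ m.divisors, |b d| ≤ B) :
    |(a * b) m| ≤ #m.divisors * (A * B) := by
  calc |(a * b) m| ≤ ∑ x ∈ m.divisorsAntidiagonal, |a x.1 * b x.2| := by
        rw [mul_apply]
        exact abs_sum_le_sum_abs _ _
    _ ≤ ∑ _x ∈ m.divisorsAntidiagonal, A * B := by
        refine sum_le_sum fun x hx => ?_
        rw [abs_mul]
        exact mul_le_mul (ha _ (Nat.fst_mem_divisors_of_mem_antidiagonal hx))
          (hb _ (Nat.snd_mem_divisors_of_mem_antidiagonal hx)) (abs_nonneg _) hA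
    _ = _ := by
        rw [sum_const, nsmul_eq_mul, ← Nat.map_div_right_divisors, card_map]

lemma abs_vonMangoldt_le_log {n N : ℕ} (hn : n ∈ Ioc 0 N) :
    |vonMangoldt n| ≤ Real.log N := by
  rw [mem_Ioc] at hn
  rw [abs_of_nonneg vonMangoldt_nonneg]
  exact vonMangoldt_le_log.trans
    (Real.log_le_log (by exact_mod_cast hn.1) (by exact_mod_cast hn.2))

lemma abs_coe_moebius_le_one (n : ℕ) : |(moebius : ArithmeticFunction ℝ) n| ≤ 1 := by
  rw [intCoe_apply, ← Int.cast_abs]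
  exact_mod_cast abs_moebius_le_one

lemma abs_coe_zeta_le_one (n : ℕ) : |(zeta : ArithmeticFunction ℝ) n| ≤ 1 := by
  rw [natCoe_apply, zeta_apply]
  split_ifs <;> simp

lemma monotone_coe_zeta : Monotone fun n => (zeta : ArithmeticFunction ℝ) n := by
  intro m n hmn
  simp only [natCoe_apply, zeta_apply]
  gcongr
  split_ifs <;> omega

lemma monotone_arithmeticFunction_log : Monotone fun n => ArithmeticFunction.log n := by
  intro m n hmn
  simp only [log_apply]
  rcases Nat.eq_zero_or_pos m with rfl | hm
  · simpa using Real.log_natCast_nonneg n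
  · gcongr

lemma abs_truncate_le {f : ArithmeticFunction ℝ} {A : ℝ} {n : ℕ} (h : |f n| ≤ A) (U : ℕ) :
    |truncate f U n| ≤ A := by
  rw [truncate_apply]
  split_ifs
  exacts [h, by rw [abs_zero]; exact (abs_nonneg _).trans h]

lemma abs_sub_truncate_le {f : ArithmeticFunction ℝ} {A : ℝ} {n : ℕ} (h : |f n| ≤ A) (U : ℕ) :
    |(f - truncate f U) n| ≤ A := by
  rw [sub_truncate_apply]
  split_ifs
  exacts [by rw [abs_zero]; exact (abs_nonneg _).trans h, h]

lemma truncate_mul_truncate_apply_eq_zero (f g : ArithmeticFunction ℝ) {U V n : ℕ}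
    (hn : U * V < n) : (truncate f U * truncate g V) n = 0 := by
  rw [mul_apply]
  refine sum_eq_zero fun x hx => ?_
  rw [Nat.mem_divisorsAntidiagonal] at hx
  rw [truncate_apply, truncate_apply]
  split_ifs with h₁ h₂
  · have := Nat.mul_le_mul h₁ h₂
    omega
  all_goals simp

lemma sub_truncate_mul_apply_eq_zero (f g : ArithmeticFunction ℝ) {U m : ℕ} (hm : m ≤ U) :
    ((f - truncate f U) * g) m = 0 := by
  rw [mul_apply]
  refine sum_eq_zero fun x hx => ?_
  have : x.1 ≤ U := (Nat.divisor_le (Nat.fst_mem_divisors_of_mem_antidiagonal hx)).trans hm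
  rw [sub_truncate_apply, if_pos this, zero_mul]

lemma abs_sum_mul_totalDiscrepancy_le (hR : 0 < R)
    (hP : ∀ r ∈ P, r.Prime ∧ R < r ∧ r ≤ 2 * R) {a : ℕ → ℝ} {A : ℝ} {U N : ℕ} (hA : 0 ≤ A)
    (ha : ∀ n ∈ Ioc 0 N, |a n| ≤ A) (haU : ∀ n, U < n → a n = 0) :
    |∑ n ∈ Ioc 0 N, a n * totalDiscrepancy P n| ≤ U * (A * (R + 1)) := by
  have htriv (k : ℕ) : |totalDiscrepancy P k| ≤ R + 1 := by
    refine (abs_totalDiscrepancy_le hR hP k).trans ?_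
    gcongr
    exact (card_filter_le _ _).trans (card_le_of_forall_dyadic fun r hr => (hP r hr).2)
  calc _ = |∑ n ∈ Ioc 0 N with n ≤ U, a n * totalDiscrepancy P n| := by
        rw [sum_filter_of_ne fun n _ hn => ?_]
        contrapose! hn
        rw [haU n hn, zero_mul]
    _ ≤ ∑ n ∈ Ioc 0 N with n ≤ U, A * (R + 1) := by
        refine (abs_sum_le_sum_abs _ _).trans (sum_le_sum fun n hn => ?_)
        rw [abs_mul]
        exact mul_le_mul (ha n (mem_filter.1 hn).1) (htriv n) (abs_nonneg _) hA
    _ ≤ U * (A * (R + 1)) := by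
        rw [sum_const, nsmul_eq_mul]
        gcongr
        calc #{n ∈ Ioc 0 N | n ≤ U} ≤ #(Ioc 0 U) := card_le_card fun n hn => by
              simp only [mem_filter, mem_Ioc] at hn ⊢
              omega
          _ = U := by simp

lemma abs_sum_convolution_mul_totalDiscrepancy_le (hP : ∀ r ∈ P, r.Prime ∧ R < r ∧ r ≤ 2 * R)
    {a b : ArithmeticFunction ℝ} {A : ℝ} {W N : ℕ} (hA : 0 ≤ A) (hW : W ≤ R)
    (ha : ∀ m ∈ Ioc 0 N, |a m| ≤ A) (haW : ∀ m, W < m → a m = 0) (hb : Monotone fun n => b n) :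
    |∑ n ∈ Ioc 0 N, (a * b) n * totalDiscrepancy P n| ≤ R * (W * (A * (4 * b N))) := by
  have hbN : 0 ≤ b N := by simpa using hb N.zero_le
  have hswap : ∑ n ∈ Ioc 0 N, (a * b) n * totalDiscrepancy P n =
      ∑ r ∈ P, ∑ m ∈ Ioc 0 N, ∑ n ∈ Ioc 0 (N / m),
        a m * b n * discrepancyKernel r (m * n : ℕ) := by
    rw [sum_Ioc_mul_arithmeticFunction, sum_comm]
    refine sum_congr rfl fun m _ => ?_
    rw [sum_comm]
    simp only [totalDiscrepancy, mul_sum]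
  calc _ ≤ ∑ r ∈ P, W * (A * (4 * b N)) := by
        rw [hswap]
        exact (abs_sum_le_sum_abs _ _).trans <| sum_le_sum fun r hr =>
          type_I_estimate (hP r hr).1 (hW.trans_lt (hP r hr).2.1) hA ha haW hb (by simp)
    _ = #P * (W * (A * (4 * b N))) := by rw [sum_const, nsmul_eq_mul]
    _ ≤ _ := by
        gcongr
        exact card_le_of_forall_dyadic fun r hr => (hP r hr).2

end PrimesInDyadicModuli

section VonMangoldtEquidistribution

open Finset ArithmeticFunction

variable {R : ℕ} {P : Finset ℕ}

lemma abs_totalDiscrepancy_le_add_one (hR : 0 < R) (hP : ∀ r ∈ P, r.Prime ∧ R < r ∧ r ≤ 2 * R)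
    {N k : ℕ} {A : ℝ} (hd : ∀ n ∈ Ioc 0 N, (#n.divisors : ℝ) ≤ A) (hk : 1 < k) (hkN : k ≤ N) :
    |totalDiscrepancy P k| ≤ A + 1 := by
  refine (abs_totalDiscrepancy_le hR hP k).trans ?_
  gcongr
  calc (#{r ∈ P | (k : ZMod r) = 1} : ℝ) ≤ #(k - 1).divisors := by
        exact_mod_cast card_filter_natCast_eq_one_le hk P
    _ ≤ A := hd _ (mem_Ioc.2 (by omega))

lemma abs_sum_type_II_mul_totalDiscrepancy_le (hR : 0 < R)
    (hP : ∀ r ∈ P, r.Prime ∧ R < r ∧ r ≤ 2 * R) {A B : ℝ} {U N H : ℕ}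
    (hU : 1 ≤ U) (hH : 2 ≤ H) (hN : 2 ≤ N) (hB : 0 ≤ B)
    (hd : ∀ n ∈ Ioc 0 N, (#n.divisors : ℝ) ≤ A) (hlog : Real.log N ≤ A)
    (hAB : 1024 * N * A ^ 4 * (N + 2 * R ^ 2 * (N / U) + R ^ 4) ≤ B ^ 2) :
    |∑ k ∈ Ioc 0 N, (((moebius : ArithmeticFunction ℝ) -
        truncate (moebius : ArithmeticFunction ℝ) U) * (zeta : ArithmeticFunction ℝ) *
          (vonMangoldt - truncate vonMangoldt U)) k * totalDiscrepancy P k| ≤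
      (cellIndex H N + 1 : ℕ) * B / R + (N / H + 1) * (A * (A ^ 2 * (A + 1))) := by
  have hA : 0 ≤ A := (Real.log_natCast_nonneg N).trans hlog
  set a : ArithmeticFunction ℝ :=
    ((moebius : ArithmeticFunction ℝ) - truncate (moebius : ArithmeticFunction ℝ) U) *
      (zeta : ArithmeticFunction ℝ)
  set b : ArithmeticFunction ℝ := vonMangoldt - truncate vonMangoldt U
  let α (m : ℕ) : ℝ := if m ∈ Ioc 0 N then a m else 0
  let β (n : ℕ) : ℝ := if n ∈ Ioc 0 N then b n else 0
  have hα (m : ℕ) : |α m| ≤ A := by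
    simp only [α]
    split_ifs with hm
    · have hbound := abs_mul_apply_le_card_divisors_mul (m := m) (B := 1) zero_le_one
        (fun d _ => abs_sub_truncate_le (abs_coe_moebius_le_one d) U)
        (fun d _ => abs_coe_zeta_le_one d)
      exact hbound.trans ((mul_le_of_le_one_right (by positivity) (by norm_num)).trans (hd m hm))
    · simpa using hA
  have hβ (n : ℕ) : |β n| ≤ A := by
    simp only [β]
    split_ifs with hn
    · exact (abs_sub_truncate_le (abs_vonMangoldt_le_log hn) U).trans hlog
    · simpa using hA
  have hαU : ∀ m ≤ U, α m = 0 := fun m hm =>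
    ite_eq_right_iff.2 fun _ => sub_truncate_mul_apply_eq_zero _ _ hm
  have hβU : ∀ n ≤ U, β n = 0 := fun n hn =>
    ite_eq_right_iff.2 fun _ => by rw [sub_truncate_apply, if_pos hn]
  have hF (k : ℕ) (hk : k ∈ Ioc 0 N) (hNk : (N : ℝ) * (1 - 1 / H) < k) :
      |totalDiscrepancy P k| ≤ A + 1 := by
    refine abs_totalDiscrepancy_le_add_one hR hP hd ?_ (mem_Ioc.1 hk).2
    have hH' : (1 : ℝ) / H ≤ 1 / 2 :=
      one_div_le_one_div_of_le two_pos (by exact_mod_cast hH)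
    have hN' : (2 : ℝ) ≤ N := by exact_mod_cast hN
    exact_mod_cast (show (1 : ℝ) < k by nlinarith)
  have key := type_II_estimate hR hP hU (by omega) hB (by positivity) hA hα hβ hαU hβU hAB hF hd
  rw [sum_Ioc_mul_arithmeticFunction]
  convert key using 5 with m hm n hn
  have hnN : n ∈ Ioc 0 N :=
    mem_Ioc.2 ⟨(mem_Ioc.1 hn).1, (mem_Ioc.1 hn).2.trans (Nat.div_le_self N m)⟩
  simp only [α, β, if_pos hm, if_pos hnN]

lemma sum_vonMangoldt_mul_eq_vaughan (U N : ℕ) (F : ℕ → ℝ) :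
    ∑ n ∈ Ioc 0 N, vonMangoldt n * F n =
      ∑ n ∈ Ioc 0 N, truncate vonMangoldt U n * F n
      + ∑ n ∈ Ioc 0 N, (truncate (moebius : ArithmeticFunction ℝ) U * log) n * F n
      - ∑ n ∈ Ioc 0 N, (truncate (moebius : ArithmeticFunction ℝ) U *
          truncate vonMangoldt U * (zeta : ArithmeticFunction ℝ)) n * F n
      + ∑ n ∈ Ioc 0 N, (((moebius : ArithmeticFunction ℝ) -
          truncate (moebius : ArithmeticFunction ℝ) U) * (zeta : ArithmeticFunction ℝ) *
            (vonMangoldt - truncate vonMangoldt U)) n * F n := by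
  rw [← sum_add_distrib, ← sum_sub_distrib, ← sum_add_distrib]
  refine sum_congr rfl fun n _ => ?_
  rw [← add_mul, ← sub_mul, ← add_mul]
  congr 1
  have happ := congrArg (fun F : ArithmeticFunction ℝ => F n) (vaughan_identity U U)
  simp only [sub_eq_add_neg, ArithmeticFunction.add_apply] at happ ⊢
  exact happ

lemma abs_sum_vonMangoldt_mul_totalDiscrepancy_le (hR : 0 < R)
    (hP : ∀ r ∈ P, r.Prime ∧ R < r ∧ r ≤ 2 * R) {A B : ℝ} {U N H : ℕ}
    (hU : 1 ≤ U) (hUR : U * U ≤ R) (hH : 2 ≤ H) (hN : 2 ≤ N) (hB : 0 ≤ B)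
    (hd : ∀ n ∈ Ioc 0 N, (#n.divisors : ℝ) ≤ A) (hlog : Real.log N ≤ A)
    (hAB : 1024 * N * A ^ 4 * (N + 2 * R ^ 2 * (N / U) + R ^ 4) ≤ B ^ 2) :
    |∑ n ∈ Ioc 0 N, vonMangoldt n * totalDiscrepancy P n| ≤
      U * (A * (R + 1)) + R * (U * (1 * (4 * A))) + R * ((U * U : ℕ) * (A * A * (4 * 1))) +
        ((cellIndex H N + 1 : ℕ) * B / R + (N / H + 1) * (A * (A ^ 2 * (A + 1)))) := by
  have hA : 0 ≤ A := (Real.log_natCast_nonneg N).trans hlog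
  have hΛ (n : ℕ) (hn : n ∈ Ioc 0 N) : |truncate vonMangoldt U n| ≤ A :=
    abs_truncate_le ((abs_vonMangoldt_le_log hn).trans hlog) U
  have hμ (n : ℕ) : |truncate (moebius : ArithmeticFunction ℝ) U n| ≤ 1 :=
    abs_truncate_le (abs_coe_moebius_le_one n) U
  have hsmall := abs_sum_mul_totalDiscrepancy_le hR hP hA hΛ
    (fun n (hn : U < n) => (truncate_apply _ U n).trans (if_neg hn.not_ge))
  have hlogs := abs_sum_convolution_mul_totalDiscrepancy_le hP zero_le_one
    ((Nat.le_mul_self U).trans hUR) (fun m (_ : m ∈ Ioc 0 N) => hμ m)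
    (fun m (hm : U < m) => (truncate_apply _ U m).trans (if_neg hm.not_ge))
    monotone_arithmeticFunction_log
  have hconv (m : ℕ) (hm : m ∈ Ioc 0 N) :
      |(truncate (moebius : ArithmeticFunction ℝ) U * truncate vonMangoldt U) m| ≤ A * A := by
    have hdiv (d : ℕ) (h : d ∈ m.divisors) : d ∈ Ioc 0 N :=
      mem_Ioc.2 ⟨Nat.pos_of_mem_divisors h, (Nat.divisor_le h).trans (mem_Ioc.1 hm).2⟩
    refine (abs_mul_apply_le_card_divisors_mul zero_le_one (fun d _ => hμ d)
      fun d h => hΛ d (hdiv d h)).trans ?_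
    rw [one_mul]
    exact mul_le_mul_of_nonneg_right (hd m hm) hA
  have htypeI := abs_sum_convolution_mul_totalDiscrepancy_le hP (mul_nonneg hA hA) hUR hconv
    (fun m hm => truncate_mul_truncate_apply_eq_zero _ _ hm) monotone_coe_zeta
  have htypeII := abs_sum_type_II_mul_totalDiscrepancy_le hR hP hU hH hN hB hd hlog hAB
  have hzeta : (zeta : ArithmeticFunction ℝ) N = 1 := by
    rw [natCoe_apply, zeta_apply_ne (by omega), Nat.cast_one]
  rw [hzeta] at htypeI
  rw [log_apply] at hlogs
  rw [sum_vonMangoldt_mul_eq_vaughan U N]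
  refine (abs_add_le _ _).trans (add_le_add ((abs_sub _ _).trans (add_le_add
    ((abs_add_le _ _).trans (add_le_add hsmall (hlogs.trans ?_))) htypeI)) htypeII)
  gcongr

end VonMangoldtEquidistribution

section CubicScale

open Finset ArithmeticFunction

lemma dispersion_le_sq {T V R : ℝ} (hT : 1 ≤ T) (hTV : T ^ 100 ≤ V) (hR : 0 ≤ R)
    (hRV : R ≤ 4 * V) :
    1024 * V ^ 3 * T ^ 4 * (V ^ 3 + 2 * R ^ 2 * (V ^ 3 / T ^ 100) + R ^ 4) ≤
      (544 * V ^ 4 / T ^ 48) ^ 2 := by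
  have hV : 1 ≤ V := (one_le_pow₀ hT).trans hTV
  have hV5 : V ^ 4 ≤ V ^ 5 / T ^ 100 := by
    rw [le_div_iff₀ (by positivity)]
    calc V ^ 4 * T ^ 100 ≤ V ^ 4 * V := by gcongr
      _ = V ^ 5 := by ring
  calc 1024 * V ^ 3 * T ^ 4 * (V ^ 3 + 2 * R ^ 2 * (V ^ 3 / T ^ 100) + R ^ 4)
      ≤ 1024 * V ^ 3 * T ^ 4 * (V ^ 4 + 2 * (4 * V) ^ 2 * (V ^ 3 / T ^ 100) + (4 * V) ^ 4) := by
        gcongr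
        norm_num
    _ = 1024 * V ^ 3 * T ^ 4 * (257 * V ^ 4 + 32 * (V ^ 5 / T ^ 100)) := by ring
    _ ≤ 1024 * V ^ 3 * T ^ 4 * (257 * (V ^ 5 / T ^ 100) + 32 * (V ^ 5 / T ^ 100)) := by gcongr
    _ = (544 * V ^ 4 / T ^ 48) ^ 2 := by
        field_simp
        ring

lemma cellIndex_add_one_le {H N : ℕ} {A : ℝ} (hH : 1 ≤ H) (hA : 1 ≤ A)
    (hlog : Real.log N ≤ A) : (cellIndex H N + 1 : ℕ) ≤ 2 * (H * A) := by
  have hHA : (1 : ℝ) ≤ H * A := one_le_mul_of_one_le_of_one_le (by exact_mod_cast hH) hA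
  have : (cellIndex H N : ℝ) ≤ H * A :=
    (Nat.floor_le (by positivity [Real.log_natCast_nonneg N])).trans (by gcongr)
  push_cast
  linarith

lemma vaughan_terms_le {T V R c : ℝ} (hT : 1200 ≤ T) (hTV : T ^ 300 ≤ V) (hVR : V ≤ R)
    (hRV : R ≤ 4 * V) (hc : c ≤ 2 * (T ^ 20 * T)) :
    T ^ 100 * (T * (R + 1)) + R * (T ^ 100 * (1 * (4 * T))) +
        R * (T ^ 100 * T ^ 100 * (T * T * (4 * 1))) +
        (c * (544 * V ^ 4 / T ^ 48) / R + (V ^ 3 / T ^ 20 + 1) * (T * (T ^ 2 * (T + 1)))) ≤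
      V ^ 3 / T ^ 15 := by
  have hT1 : 1 ≤ T := by linarith
  have hV1 : 1 ≤ V := (one_le_pow₀ hT1).trans hTV
  have hV0 : V ≠ 0 := by positivity
  have hTpow {k : ℕ} (hk : k ≤ 300) : T ^ k ≤ V := (pow_le_pow_right₀ hT1 hk).trans hTV
  have hsize : V * T ^ 202 ≤ V ^ 3 / T ^ 16 := by
    rw [le_div_iff₀ (by positivity)]
    calc V * T ^ 202 * T ^ 16 = V * T ^ 218 := by ring
      _ ≤ V * V := by gcongr; exact hTpow (by norm_num)
      _ = V ^ 2 := by ring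
      _ ≤ V ^ 3 := pow_le_pow_right₀ hV1 (by norm_num)
  have hsmall : T ^ 100 * (T * (R + 1)) ≤ 5 * (V * T ^ 202) := by
    calc T ^ 100 * (T * (R + 1)) ≤ T ^ 100 * (T * (4 * V + V)) := by gcongr
      _ = 5 * (V * T ^ 101) := by ring
      _ ≤ 5 * (V * T ^ 202) := by gcongr; norm_num
  have hlogs : R * (T ^ 100 * (1 * (4 * T))) ≤ 16 * (V * T ^ 202) := by
    calc R * (T ^ 100 * (1 * (4 * T))) ≤ 4 * V * (T ^ 100 * (1 * (4 * T))) := by gcongr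
      _ = 16 * (V * T ^ 101) := by ring
      _ ≤ 16 * (V * T ^ 202) := by gcongr; norm_num
  have htypeI : R * (T ^ 100 * T ^ 100 * (T * T * (4 * 1))) ≤ 16 * (V * T ^ 202) := by
    calc _ ≤ 4 * V * (T ^ 100 * T ^ 100 * (T * T * (4 * 1))) := by gcongr
      _ = 16 * (V * T ^ 202) := by ring
  have hcells : c * (544 * V ^ 4 / T ^ 48) / R ≤ 1088 * (V ^ 3 / T ^ 16) := by
    calc c * (544 * V ^ 4 / T ^ 48) / R
        ≤ 2 * (T ^ 20 * T) * (544 * V ^ 4 / T ^ 48) / V := by gcongr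
      _ = 1088 * (V ^ 3 / T ^ 27) := by field_simp; ring
      _ ≤ 1088 * (V ^ 3 / T ^ 16) := by gcongr; norm_num
  have hboundary : (V ^ 3 / T ^ 20 + 1) * (T * (T ^ 2 * (T + 1))) ≤ 4 * (V ^ 3 / T ^ 16) := by
    have hone : 1 ≤ V ^ 3 / T ^ 20 := by
      rw [one_le_div (by positivity)]
      exact (hTpow (by norm_num)).trans (le_self_pow₀ hV1 (by norm_num))
    calc (V ^ 3 / T ^ 20 + 1) * (T * (T ^ 2 * (T + 1)))
        ≤ (V ^ 3 / T ^ 20 + V ^ 3 / T ^ 20) * (T * (T ^ 2 * (T + T))) := by gcongr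
      _ = 4 * (V ^ 3 / T ^ 16) := by field_simp; ring
  calc _ ≤ (5 + 16 + 16) * (V * T ^ 202) + (1088 + 4) * (V ^ 3 / T ^ 16) := by linarith
    _ ≤ 1200 * (V ^ 3 / T ^ 16) := by
        have : 0 ≤ V ^ 3 / T ^ 16 := by positivity
        linarith
    _ ≤ T * (V ^ 3 / T ^ 16) := by gcongr
    _ = V ^ 3 / T ^ 15 := by field_simp

lemma abs_sum_vonMangoldt_mul_totalDiscrepancy_le_cube {T V R : ℕ} {P : Finset ℕ}
    (hT : 1200 ≤ T) (hTV : T ^ 300 ≤ V) (hVR : V ≤ R) (hRV : R ≤ 4 * V)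
    (hP : ∀ r ∈ P, r.Prime ∧ R < r ∧ r ≤ 2 * R)
    (hd : ∀ n ∈ Ioc 0 (V ^ 3), (#n.divisors : ℝ) ≤ T) (hlog : Real.log (V ^ 3 : ℕ) ≤ T) :
    |∑ n ∈ Ioc 0 (V ^ 3), vonMangoldt n * totalDiscrepancy P n| ≤ (V : ℝ) ^ 3 / T ^ 15 := by
  have hT1 : 1 ≤ T := by omega
  have hTV' : (T : ℝ) ^ 300 ≤ V := by exact_mod_cast hTV
  have hRV' : (R : ℝ) ≤ 4 * V := by exact_mod_cast hRV
  have hTpow {k : ℕ} (hk : k ≤ 300) : T ^ k ≤ V :=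
    (pow_le_pow_right₀ hT1 hk).trans hTV
  have hTV1 : T ≤ V := by simpa using hTpow (k := 1) (by norm_num)
  have hV : 2 ≤ V := (le_trans (by norm_num) hT).trans hTV1
  have hAB := dispersion_le_sq (T := T) (V := V) (R := R) (by exact_mod_cast hT1)
    (by exact_mod_cast hTpow (by norm_num)) (by positivity) hRV'
  have hvaughan := abs_sum_vonMangoldt_mul_totalDiscrepancy_le (U := T ^ 100) (H := T ^ 20)
    (B := 544 * V ^ 4 / T ^ 48) (by omega) hP (Nat.one_le_pow _ _ hT1)
    (by rw [← pow_add]; exact (hTpow (by norm_num)).trans hVR)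
    (le_trans (by omega) (Nat.le_self_pow (by norm_num) T))
    (hV.trans (Nat.le_self_pow (by norm_num) V)) (by positivity) hd hlog
    (by push_cast at hAB ⊢; exact hAB)
  refine hvaughan.trans ?_
  have hcells : ((cellIndex (T ^ 20) (V ^ 3) + 1 : ℕ) : ℝ) ≤ 2 * ((T : ℝ) ^ 20 * T) := by
    simpa using cellIndex_add_one_le (Nat.one_le_pow 20 T hT1) (by exact_mod_cast hT1) hlog
  simpa only [Nat.cast_mul, Nat.cast_pow] using vaughan_terms_le (by exact_mod_cast hT) hTV'
    (by exact_mod_cast hVR) hRV' hcells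

end CubicScale

section PrimesInDyadicIntervals

open Finset Filter Asymptotics

lemma eventually_mul_le_theta {c : ℝ} (hc : c < Real.log 2) :
    ∀ᶠ x : ℝ in atTop, c * x ≤ Chebyshev.theta x := by
  have hlog : (fun x : ℝ => Real.log (x + 2)) =o[atTop] (id : ℝ → ℝ) :=
    (Real.isLittleO_log_id_atTop.comp_tendsto
      (tendsto_atTop_add_const_right _ 2 tendsto_id)).trans_isBigO
        ((isBigO_refl id atTop).add (isLittleO_const_id_atTop 2).isBigO)
  have hsqrt : (fun x : ℝ => 2 * √x * Real.log x) =o[atTop] (id : ℝ → ℝ) := by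
    refine (((isBigO_refl (fun x : ℝ => √x) atTop).const_mul_left 2).mul_isLittleO
      (isLittleO_log_rpow_atTop (r := 1 / 2) (by norm_num))).congr' .rfl ?_
    filter_upwards [eventually_ge_atTop 0] with x hx
    rw [← Real.sqrt_eq_rpow, Real.mul_self_sqrt hx, id]
  have herr := ((isLittleO_const_id_atTop (Real.log 2)).add hlog).add hsqrt
  filter_upwards [herr.bound (sub_pos.2 hc), eventually_ge_atTop 1] with x hx hx1
  have := Chebyshev.theta_ge' hx1
  rw [Real.norm_eq_abs, id, Real.norm_eq_abs, abs_of_nonneg (by linarith : 0 ≤ x)] at hx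
  linarith [le_of_abs_le hx]

lemma theta_two_mul_sub_theta_le (R : ℕ) :
    Chebyshev.theta (2 * R : ℕ) - Chebyshev.theta R ≤
      #{r ∈ Ioc R (2 * R) | r.Prime} * Real.log (2 * R : ℕ) := by
  have hsplit : Chebyshev.theta (2 * R : ℕ) =
      Chebyshev.theta R + ∑ p ∈ Ioc R (2 * R) with p.Prime, Real.log p := by
    simp only [Chebyshev.theta, Nat.floor_natCast]
    rw [sum_filter, sum_filter, sum_filter, sum_Ioc_consecutive _ (Nat.zero_le _) (by omega)]
  calc _ = ∑ p ∈ Ioc R (2 * R) with p.Prime, Real.log p := by rw [hsplit, add_sub_cancel_left]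
    _ ≤ ∑ p ∈ Ioc R (2 * R) with p.Prime, Real.log (2 * R : ℕ) := by
        refine sum_le_sum fun p hp => ?_
        rw [mem_filter, mem_Ioc] at hp
        exact Real.log_le_log (by exact_mod_cast hp.2.pos) (by exact_mod_cast hp.1.2)
    _ = _ := by rw [sum_const, nsmul_eq_mul]

lemma eventually_exists_dyadic_interval : ∀ᶠ A : ℕ in atTop, ∃ R, A ≤ R ∧ R ≤ 4 * A ∧
    (A : ℝ) ≤ #{r ∈ Ioc R (2 * R) | r.Prime} * Real.log (8 * A : ℕ) := by
  have hlower := tendsto_natCast_atTop_atTop.eventually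
    (eventually_mul_le_theta (c := 0.65) (by linarith [Real.log_two_gt_d9]))
  filter_upwards [(tendsto_id.const_mul_atTop' (by norm_num : 0 < 8)).eventually hlower,
    eventually_gt_atTop 0] with A hA hA0
  by_contra! hcon
  have hstep (R : ℕ) (hAR : A ≤ R) (hRA : R ≤ 4 * A) :
      Chebyshev.theta (2 * R : ℕ) - Chebyshev.theta R < A := by
    refine (theta_two_mul_sub_theta_le R).trans_lt (lt_of_le_of_lt ?_ (hcon R hAR hRA))
    exact mul_le_mul_of_nonneg_left (Real.log_le_log (by exact_mod_cast (by omega : 0 < 2 * R))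
      (by exact_mod_cast (by omega : 2 * R ≤ 8 * A))) (Nat.cast_nonneg _)
  have h₁ := hstep A le_rfl (by omega)
  have h₂ := hstep (2 * A) (by omega) (by omega)
  have h₄ := hstep (2 * (2 * A)) (by omega) (by omega)
  have hupper := Chebyshev.theta_le_log4_mul_x (x := A) (by positivity)
  have hlog : Real.log 4 ≤ 1.4 := by
    rw [show (4 : ℝ) = 2 ^ 2 by norm_num, Real.log_pow]
    linarith [Real.log_two_lt_d9]
  have hA' : (0 : ℝ) < A := by exact_mod_cast hA0
  rw [show 2 * (2 * (2 * A)) = 8 * A by ring] at h₄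
  push_cast [id] at hA h₁ h₂ h₄
  nlinarith

end PrimesInDyadicIntervals

section ShiftedPrimes

open Finset Filter ArithmeticFunction

variable {N R V : ℕ} {P : Finset ℕ}

lemma psi_natCast (N : ℕ) : Chebyshev.psi N = ∑ n ∈ Ioc 0 N, vonMangoldt n := by
  rw [Chebyshev.psi, Nat.floor_natCast]

lemma psi_sub_div_pred_le_sum_vonMangoldt {r : ℕ} (hr : r.Prime) (N : ℕ) :
    (Chebyshev.psi N - N / r * Real.log N) / ((r : ℝ) - 1) ≤
      ∑ n ∈ Ioc 0 N, vonMangoldt n * if (n : ZMod r) = 0 then 0 else 1 / ((r : ℝ) - 1) := by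
  have hpred : 0 ≤ (r : ℝ) - 1 := sub_nonneg.2 (by exact_mod_cast hr.one_le)
  have hmultiples : ∑ n ∈ Ioc 0 N with r ∣ n, vonMangoldt n ≤ N / r * Real.log N := by
    calc _ ≤ ∑ n ∈ Ioc 0 N with r ∣ n, Real.log N :=
          sum_le_sum fun n hn =>
            (le_abs_self _).trans (abs_vonMangoldt_le_log (mem_filter.1 hn).1)
      _ = (N / r : ℕ) * Real.log N := by
          rw [sum_const, nsmul_eq_mul, Nat.Ioc_filter_dvd_card_eq_div]
      _ ≤ N / r * Real.log N := by
          gcongr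
          exact Nat.cast_div_le
  calc _ ≤ (∑ n ∈ Ioc 0 N with ¬r ∣ n, vonMangoldt n) / ((r : ℝ) - 1) := by
        gcongr
        rw [psi_natCast, ← sum_filter_add_sum_filter_not (Ioc 0 N) (r ∣ ·)]
        linarith
    _ = _ := by
        rw [sum_div, sum_filter]
        simp only [ZMod.natCast_eq_zero_iff, ite_not, mul_ite, mul_zero, mul_one_div]

lemma mul_card_div_le_sum_vonMangoldt (hR : 0 < R)
    (hP : ∀ r ∈ P, r.Prime ∧ R < r ∧ r ≤ 2 * R)
    (hlog : 4 * Real.log N ≤ R) (hψ : (N : ℝ) / 2 ≤ Chebyshev.psi N) :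
    (N : ℝ) * #P / (8 * R) ≤ ∑ n ∈ Ioc 0 N, vonMangoldt n *
      ∑ r ∈ P, if (n : ZMod r) = 0 then 0 else 1 / ((r : ℝ) - 1) := by
  simp_rw [mul_sum]
  rw [sum_comm]
  calc (N : ℝ) * #P / (8 * R) = ∑ _r ∈ P, (N : ℝ) / 4 / (2 * R) := by
        rw [sum_const, nsmul_eq_mul]
        ring
    _ ≤ _ := sum_le_sum fun r hr => ?_
  obtain ⟨hrp, hRr, hr2⟩ := hP r hr
  have : (0 : ℝ) < R := by exact_mod_cast hR
  have hRr' : (R : ℝ) < r := by exact_mod_cast hRr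
  have hr2' : (r : ℝ) ≤ 2 * R := by exact_mod_cast hr2
  have hr1 : (1 : ℝ) < r := by exact_mod_cast hrp.one_lt
  have hmultiples : N / r * Real.log N ≤ (N : ℝ) / 4 := by
    calc N / r * Real.log N ≤ N / R * (R / 4) := by
          gcongr
          linarith
      _ = (N : ℝ) / 4 := by field_simp
  calc (N : ℝ) / 4 / (2 * R)
      ≤ (Chebyshev.psi N - N / r * Real.log N) / ((r : ℝ) - 1) := by
        have : (N : ℝ) / 4 ≤ Chebyshev.psi N - N / r * Real.log N := by linarith
        have hN : (0 : ℝ) ≤ N / 4 := by positivity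
        gcongr <;> linarith
    _ ≤ _ := psi_sub_div_pred_le_sum_vonMangoldt hrp N

lemma mul_card_div_sub_le_sum_vonMangoldt_mul_card (hR : 0 < R)
    (hP : ∀ r ∈ P, r.Prime ∧ R < r ∧ r ≤ 2 * R)
    (hlog : 4 * Real.log N ≤ R) (hψ : (N : ℝ) / 2 ≤ Chebyshev.psi N) :
    (N : ℝ) * #P / (8 * R) - |∑ n ∈ Ioc 0 N, vonMangoldt n * totalDiscrepancy P n| ≤
      ∑ n ∈ Ioc 0 N, vonMangoldt n * #{r ∈ P | (n : ZMod r) = 1} := by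
  have hsplit : ∑ n ∈ Ioc 0 N, vonMangoldt n * (#{r ∈ P | (n : ZMod r) = 1} : ℝ) =
      ∑ n ∈ Ioc 0 N, vonMangoldt n * totalDiscrepancy P n + ∑ n ∈ Ioc 0 N, vonMangoldt n *
        ∑ r ∈ P, if (n : ZMod r) = 0 then 0 else 1 / ((r : ℝ) - 1) := by
    rw [← sum_add_distrib]
    refine sum_congr rfl fun n _ => ?_
    rw [totalDiscrepancy_eq]
    ring
  rw [hsplit]
  linarith [mul_card_div_le_sum_vonMangoldt hR hP hlog hψ,
    neg_abs_le (∑ n ∈ Ioc 0 N, vonMangoldt n * totalDiscrepancy P n)]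

lemma sum_vonMangoldt_mul_le {G : ℕ → ℝ} {D : ℝ} (hN : 1 ≤ N) (hG : ∀ n, 0 ≤ G n) (hD : 0 ≤ D)
    (hGD : ∀ n, 1 < n → n ≤ N → G n ≤ D) :
    ∑ n ∈ Ioc 0 N, vonMangoldt n * G n ≤
      #{q ∈ Ioc 0 N | q.Prime ∧ 0 < G q} * (Real.log N * D) + 2 * √N * Real.log N * D := by
  have hlog := Real.log_natCast_nonneg N
  have hterm (n : ℕ) (hn : n ∈ Ioc 0 N) : vonMangoldt n * G n ≤
      (if n.Prime ∧ 0 < G n then Real.log N * D else 0) +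
        if ¬n.Prime then vonMangoldt n * D else 0 := by
    have hΛ := (le_abs_self _).trans (abs_vonMangoldt_le_log hn)
    have hΛ0 : 0 ≤ vonMangoldt n := vonMangoldt_nonneg
    rw [mem_Ioc] at hn
    by_cases hp : n.Prime
    · rcases (hG n).eq_or_lt with hG0 | hG0
      · simp [← hG0, hp]
      · simpa [hp, hG0] using mul_le_mul hΛ (hGD n hp.one_lt hn.2) (hG n) hlog
    · obtain rfl | hn1 := (show 1 ≤ n from hn.1).eq_or_lt
      · simp [Nat.not_prime_one]
      · simpa [hp] using mul_le_mul_of_nonneg_left (hGD n hn1 hn.2) hΛ0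
  refine (sum_le_sum hterm).trans ?_
  rw [sum_add_distrib, ← sum_filter, ← sum_filter, sum_const, nsmul_eq_mul, ← sum_mul]
  gcongr
  have hpsi := Chebyshev.psi_sub_theta_le (x := (N : ℝ)) (by exact_mod_cast hN)
  rwa [Chebyshev.psi_sub_theta_eq_sum_not_prime, Nat.floor_natCast] at hpsi

lemma sub_one_dvd_factorial_sq {q r : ℕ} (hq : 2 ≤ q) (hqV : q ≤ V ^ 3) (hVr : V ≤ r)
    (hrV : r ≤ 8 * V) (hr : (q : ZMod r) = 1) : q - 1 ∣ (8 * V ^ 2).factorial ^ 2 := by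
  have hrq : r ∣ q - 1 := by
    rw [← ZMod.natCast_eq_zero_iff, Nat.cast_sub (by omega), hr, Nat.cast_one, sub_self]
  obtain ⟨c, hc⟩ := hrq
  have hc0 : 0 < c := Nat.pos_of_ne_zero (by rintro rfl; omega)
  have hr0 : 0 < r := Nat.pos_of_ne_zero (by rintro rfl; omega)
  have hV : 0 < V := by omega
  rw [hc, sq]
  refine mul_dvd_mul (Nat.dvd_factorial hr0 ?_) (Nat.dvd_factorial hc0 ?_)
  · exact hrV.trans (by gcongr; exact Nat.le_self_pow two_ne_zero V)
  · have : V * c ≤ V * V ^ 2 := by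
      calc V * c ≤ r * c := by gcongr
        _ ≤ V ^ 3 := by omega
        _ = V * V ^ 2 := by ring
    linarith [Nat.le_of_mul_le_mul_left this hV]

end ShiftedPrimes

section SmoothShiftedPrimes

open Finset Filter ArithmeticFunction

variable {T V R e : ℕ} {P : Finset ℕ}

lemma sqrt_cube_le_sq (hV : 1 ≤ V) : √((V ^ 3 : ℕ) : ℝ) ≤ (V : ℝ) ^ 2 := by
  rw [Real.sqrt_le_left (by positivity), Nat.cast_pow, ← pow_mul]
  exact pow_le_pow_right₀ (by exact_mod_cast hV) (by norm_num)

lemma cube_div_le_sum_vonMangoldt_mul_card (hT : 1200 ≤ T) (hTV : T ^ 300 ≤ V) (hVR : V ≤ R)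
    (hRV : R ≤ 4 * V) (hP : ∀ r ∈ P, r.Prime ∧ R < r ∧ r ≤ 2 * R) (hcard : (V : ℝ) ≤ #P * T)
    (hd : ∀ n ∈ Ioc 0 (V ^ 3), (#n.divisors : ℝ) ≤ T) (hlog : Real.log (V ^ 3 : ℕ) ≤ T)
    (hψ : ((V ^ 3 : ℕ) : ℝ) / 2 ≤ Chebyshev.psi (V ^ 3 : ℕ)) :
    (V : ℝ) ^ 3 / (64 * T) ≤
      ∑ n ∈ Ioc 0 (V ^ 3), vonMangoldt n * #{r ∈ P | (n : ZMod r) = 1} := by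
  have hT1 : 1 ≤ T := by omega
  have hT0 : (1200 : ℝ) ≤ T := by exact_mod_cast hT
  have hTV4 : T ^ 4 ≤ V := (pow_le_pow_right₀ hT1 (by norm_num)).trans hTV
  have hV0 : 0 < V := (pow_pos (by omega) 4).trans_le hTV4
  have hR0 : 0 < R := by omega
  have : (0 : ℝ) < V := by exact_mod_cast hV0
  have hRV' : (R : ℝ) ≤ 4 * V := by exact_mod_cast hRV
  have hlogR : 4 * Real.log (V ^ 3 : ℕ) ≤ R := by
    have h4T : 4 * T ≤ R := by
      calc 4 * T ≤ T ^ 3 * T := by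
            gcongr
            exact (show 4 ≤ T by omega).trans (Nat.le_self_pow (by norm_num) T)
        _ = T ^ 4 := by ring
        _ ≤ R := hTV4.trans hVR
    have : (4 : ℝ) * T ≤ R := by exact_mod_cast h4T
    linarith
  have hmain : (V : ℝ) ^ 3 / (32 * T) ≤ ((V ^ 3 : ℕ) : ℝ) * #P / (8 * R) := by
    push_cast
    rw [div_le_div_iff₀ (by positivity) (by positivity)]
    calc (V : ℝ) ^ 3 * (8 * R) ≤ V ^ 3 * (8 * (4 * V)) := by gcongr
      _ = (V : ℝ) ^ 3 * 32 * V := by ring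
      _ ≤ (V : ℝ) ^ 3 * 32 * (#P * T) := by gcongr
      _ = (V : ℝ) ^ 3 * #P * (32 * T) := by ring
  have herror : (V : ℝ) ^ 3 / T ^ 15 ≤ (V : ℝ) ^ 3 / (64 * T) := by
    gcongr
    calc (64 : ℝ) * T ≤ T ^ 14 * T := by
          gcongr
          exact (show (64 : ℝ) ≤ T by linarith).trans (le_self_pow₀ (by linarith) (by norm_num))
      _ = T ^ 15 := by ring
  have hhalf : (V : ℝ) ^ 3 / (32 * T) = V ^ 3 / (64 * T) + V ^ 3 / (64 * T) := by
    field_simp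
    norm_num
  linarith [mul_card_div_sub_le_sum_vonMangoldt_mul_card hR0 hP hlogR hψ,
    abs_sum_vonMangoldt_mul_totalDiscrepancy_le_cube hT hTV hVR hRV hP hd hlog]

lemma cube_div_le_card_prime_congr_one (hT : 1200 ≤ T) (hTV : T ^ 300 ≤ V) (hVR : V ≤ R)
    (hRV : R ≤ 4 * V) (hP : ∀ r ∈ P, r.Prime ∧ R < r ∧ r ≤ 2 * R) (hcard : (V : ℝ) ≤ #P * T)
    (hd : ∀ n ∈ Ioc 0 (V ^ 3), (#n.divisors : ℝ) ≤ T) (hlog : Real.log (V ^ 3 : ℕ) ≤ T)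
    (hψ : ((V ^ 3 : ℕ) : ℝ) / 2 ≤ Chebyshev.psi (V ^ 3 : ℕ)) :
    (V : ℝ) ^ 3 / T ^ 4 ≤ #{q ∈ Ioc 0 (V ^ 3) | q.Prime ∧ ∃ r ∈ P, (q : ZMod r) = 1} := by
  have hT1 : 1 ≤ T := by omega
  have hT0 : (1200 : ℝ) ≤ T := by exact_mod_cast hT
  have hTV6 : T ^ 6 ≤ V := (pow_le_pow_right₀ hT1 (by norm_num)).trans hTV
  have hTV6' : (T : ℝ) ^ 6 ≤ V := by exact_mod_cast hTV6
  have hV1 : 1 ≤ V := (Nat.one_le_pow _ _ hT1).trans hTV6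
  have hlower := cube_div_le_sum_vonMangoldt_mul_card hT hTV hVR hRV hP hcard hd hlog hψ
  have hupper := sum_vonMangoldt_mul_le (G := fun n => #{r ∈ P | (n : ZMod r) = 1}) (D := T)
    (Nat.one_le_pow 3 V hV1) (fun n => by positivity) (by positivity) fun n hn1 hnN => by
      have hpred := hd (n - 1) (mem_Ioc.2 ⟨by omega, by omega⟩)
      exact (Nat.cast_le.2 (card_filter_natCast_eq_one_le hn1 P)).trans hpred
  simp only [Nat.cast_pos, card_pos, filter_nonempty_iff] at hupper
  set Q := {q ∈ Ioc 0 (V ^ 3) | q.Prime ∧ ∃ r ∈ P, (q : ZMod r) = 1}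
  have hpowers : 2 * √((V ^ 3 : ℕ) : ℝ) * Real.log (V ^ 3 : ℕ) * T ≤ (V : ℝ) ^ 3 / (128 * T) := by
    rw [le_div_iff₀ (by positivity)]
    calc 2 * √((V ^ 3 : ℕ) : ℝ) * Real.log (V ^ 3 : ℕ) * T * (128 * T)
        ≤ 2 * (V : ℝ) ^ 2 * T * T * (128 * T) := by
          gcongr
          exact sqrt_cube_le_sq hV1
      _ = 256 * T ^ 3 * (V : ℝ) ^ 2 := by ring
      _ ≤ T ^ 3 * T ^ 3 * (V : ℝ) ^ 2 := by
          gcongr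
          exact (show (256 : ℝ) ≤ T by linarith).trans (le_self_pow₀ (by linarith) (by norm_num))
      _ = T ^ 6 * (V : ℝ) ^ 2 := by ring
      _ ≤ V * (V : ℝ) ^ 2 := by gcongr
      _ = (V : ℝ) ^ 3 := by ring
  have hhalf : (V : ℝ) ^ 3 / (64 * T) = V ^ 3 / (128 * T) + V ^ 3 / (128 * T) := by
    field_simp
    norm_num
  have hprimes : (V : ℝ) ^ 3 / (128 * T) ≤ #Q * T ^ 2 := by
    calc (V : ℝ) ^ 3 / (128 * T) ≤ #Q * (Real.log (V ^ 3 : ℕ) * T) := by linarith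
      _ ≤ #Q * (T * T) := by gcongr
      _ = #Q * T ^ 2 := by ring
  refine le_of_mul_le_mul_right (le_trans ?_ hprimes) (show (0 : ℝ) < T ^ 2 by positivity)
  calc (V : ℝ) ^ 3 / T ^ 4 * T ^ 2 = V ^ 3 / (T * T) := by field_simp
    _ ≤ (V : ℝ) ^ 3 / (128 * T) := by
        gcongr
        linarith

lemma card_filter_not_le_mul_le (S : Finset ℕ) (N : ℕ) {a : ℕ} (ha : 0 < a)
    (hS : ∀ q ∈ S, 0 < q) : (#{q ∈ S | ¬N ≤ a * q} : ℝ) ≤ (N : ℝ) / a := by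
  have hsub : {q ∈ S | ¬N ≤ a * q} ⊆ Ioc 0 (N / a) := fun q hq => by
    obtain ⟨hqS, hlt⟩ := mem_filter.1 hq
    rw [mem_Ioc, Nat.le_div_iff_mul_le ha, mul_comm q]
    exact ⟨hS q hqS, (not_le.1 hlt).le⟩
  calc (#{q ∈ S | ¬N ≤ a * q} : ℝ) ≤ (N / a : ℕ) := by
        exact_mod_cast (card_le_card hsub).trans (by simp)
    _ ≤ (N : ℝ) / a := Nat.cast_div_le

lemma exists_finset_prime_sub_one_dvd_factorial_sq (hT : 1200 ≤ T) (hTV : T ^ 300 ≤ V)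
    (hVR : V ≤ R) (hRV : R ≤ 4 * V) (hcard : (V : ℝ) ≤ #{r ∈ Ioc R (2 * R) | r.Prime} * T)
    (hd : ∀ n ∈ Ioc 0 (V ^ 3), (#n.divisors : ℝ) ≤ T) (hlog : Real.log (V ^ 3 : ℕ) ≤ T)
    (hψ : ((V ^ 3 : ℕ) : ℝ) / 2 ≤ Chebyshev.psi (V ^ 3 : ℕ)) :
    ∃ Q : Finset ℕ, (∀ q ∈ Q, q.Prime ∧ V ^ 3 ≤ T ^ 10 * q ∧ q ≤ V ^ 3 ∧
      q - 1 ∣ (8 * V ^ 2).factorial ^ 2) ∧ V ^ 3 ≤ T ^ 7 * #Q := by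
  have hT0 : (1200 : ℝ) ≤ T := by exact_mod_cast hT
  set P := {r ∈ Ioc R (2 * R) | r.Prime}
  have hP (r : ℕ) (hr : r ∈ P) : r.Prime ∧ R < r ∧ r ≤ 2 * R := by
    rw [mem_filter, mem_Ioc] at hr
    exact ⟨hr.2, hr.1⟩
  have hQ₀ := cube_div_le_card_prime_congr_one hT hTV hVR hRV hP hcard hd hlog hψ
  set Q₀ := {q ∈ Ioc 0 (V ^ 3) | q.Prime ∧ ∃ r ∈ P, (q : ZMod r) = 1}
  refine ⟨{q ∈ Q₀ | V ^ 3 ≤ T ^ 10 * q}, fun q hq => ?_, ?_⟩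
  · obtain ⟨hqQ₀, hlarge⟩ := mem_filter.1 hq
    obtain ⟨hqV, hqp, r, hr, hqr⟩ := mem_filter.1 hqQ₀
    obtain ⟨-, hRr, hrR⟩ := hP r hr
    have hqV := (mem_Ioc.1 hqV).2
    exact ⟨hqp, hlarge, hqV, sub_one_dvd_factorial_sq hqp.two_le hqV (by omega) (by omega) hqr⟩
  · have hsmall := card_filter_not_le_mul_le Q₀ (V ^ 3) (show 0 < T ^ 10 by positivity)
      fun q hq => (mem_Ioc.1 (mem_filter.1 hq).1).1
    push_cast at hsmall
    have hsplit : (#{q ∈ Q₀ | V ^ 3 ≤ T ^ 10 * q} : ℝ) + #{q ∈ Q₀ | ¬V ^ 3 ≤ T ^ 10 * q} = #Q₀ := by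
      exact_mod_cast card_filter_add_card_filter_not _
    have hscale : (V : ℝ) ^ 3 / T ^ 7 + V ^ 3 / T ^ 10 ≤ V ^ 3 / T ^ 4 := by
      have hratio : 1 / (T : ℝ) ^ 3 + 1 / T ^ 6 ≤ 1 := by
        have hT3 : (2 : ℝ) ≤ T ^ 3 :=
          (show (2 : ℝ) ≤ T by linarith).trans (le_self_pow₀ (by linarith) (by norm_num))
        have hT6 : (2 : ℝ) ≤ T ^ 6 :=
          (show (2 : ℝ) ≤ T by linarith).trans (le_self_pow₀ (by linarith) (by norm_num))
        have := one_div_le_one_div_of_le two_pos hT3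
        have := one_div_le_one_div_of_le two_pos hT6
        linarith
      calc (V : ℝ) ^ 3 / T ^ 7 + V ^ 3 / T ^ 10 = V ^ 3 / T ^ 4 * (1 / T ^ 3 + 1 / T ^ 6) := by
            ring
        _ ≤ (V : ℝ) ^ 3 / T ^ 4 := mul_le_of_le_one_right (by positivity) hratio
    have hfinal : (V : ℝ) ^ 3 / T ^ 7 ≤ #{q ∈ Q₀ | V ^ 3 ≤ T ^ 10 * q} := by linarith
    rw [div_le_iff₀' (by positivity)] at hfinal
    exact_mod_cast hfinal

lemma eventually_mul_log_add_le (a b : ℝ) {c : ℝ} (hc : 0 < c) :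
    ∀ᶠ T : ℕ in atTop, a * Real.log T + b ≤ c * T := by
  have hlin : (fun x : ℝ => a * Real.log x + b) =o[atTop] id :=
    (Real.isLittleO_log_id_atTop.const_mul_left a).add
      (Asymptotics.isLittleO_const_id_atTop b)
  have hbound := (hlin.bound hc).and (eventually_ge_atTop 0)
  filter_upwards [tendsto_natCast_atTop_atTop.eventually hbound] with T hT
  simpa using (le_abs_self _).trans hT.1

lemma eventually_card_divisors_le (k : ℕ) :
    ∀ᶠ T : ℕ in atTop, ∀ n ∈ Ioc 0 (T ^ k), (#n.divisors : ℝ) ≤ T := by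
  obtain ⟨C, -, hC⟩ := exists_card_divisors_pow_le_mul (k + 1)
  filter_upwards [eventually_ge_atTop C] with T hCT n hn
  obtain ⟨hn0, hnT⟩ := mem_Ioc.1 hn
  have hpow : #n.divisors ^ (k + 1) ≤ T ^ (k + 1) := by
    calc #n.divisors ^ (k + 1) ≤ C * n := hC n hn0.ne'
      _ ≤ T * T ^ k := by gcongr
      _ = T ^ (k + 1) := by ring
  exact_mod_cast le_of_pow_le_pow_left₀ k.succ_ne_zero T.zero_le hpow

lemma eventually_exists_finset_prime_sub_one_dvd_factorial_sq (he : 300 ≤ e) :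
    ∀ᶠ T : ℕ in atTop, ∃ Q : Finset ℕ,
      (∀ q ∈ Q, q.Prime ∧ T ^ (3 * e - 10) ≤ q ∧ q ≤ T ^ (3 * e) ∧
        q - 1 ∣ (8 * T ^ (2 * e)).factorial ^ 2) ∧ T ^ (3 * e - 7) ≤ #Q := by
  have hVtop : Tendsto (fun T : ℕ => T ^ e) atTop atTop := tendsto_pow_atTop (by omega)
  have hNtop : Tendsto (fun T : ℕ => (((T ^ e) ^ 3 : ℕ) : ℝ)) atTop atTop :=
    tendsto_natCast_atTop_atTop.comp ((tendsto_pow_atTop (by norm_num)).comp hVtop)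
  have hψ := hNtop.eventually (eventually_mul_le_theta (c := 1 / 2)
    (by linarith [Real.log_two_gt_d9]))
  filter_upwards [eventually_ge_atTop 1200, hVtop.eventually eventually_exists_dyadic_interval, hψ,
    eventually_card_divisors_le (3 * e), eventually_mul_log_add_le (3 * e) 0 one_pos,
    eventually_mul_log_add_le e (Real.log 8) one_pos] with T hT hdyadic hψ hd hlog hlog8
  have hT0 : 0 < T := by omega
  obtain ⟨R, hVR, hRV, hcard⟩ := hdyadic
  have hN : (T ^ e) ^ 3 = T ^ (3 * e) := by rw [← pow_mul, mul_comm]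
  obtain ⟨Q, hQ, hQcard⟩ := exists_finset_prime_sub_one_dvd_factorial_sq hT
    (pow_le_pow_right₀ (by omega : 1 ≤ T) he) hVR hRV
    (hcard.trans (by
      gcongr
      push_cast
      rw [Real.log_mul (by norm_num) (by positivity), Real.log_pow]
      linarith))
    (by rwa [hN])
    (by
      rw [hN]
      push_cast
      rw [Real.log_pow]
      push_cast
      linarith)
    (by linarith [Chebyshev.theta_le_psi (((T ^ e) ^ 3 : ℕ) : ℝ)])
  have hdivide {a m : ℕ} (ha : a ≤ 3 * e) (h : (T ^ e) ^ 3 ≤ T ^ a * m) : T ^ (3 * e - a) ≤ m := by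
    rw [hN, ← Nat.add_sub_of_le ha, pow_add] at h
    exact Nat.le_of_mul_le_mul_left h (by positivity)
  refine ⟨Q, fun q hq => ?_, hdivide (by omega) hQcard⟩
  obtain ⟨hqp, hlow, hupp, hdvd⟩ := hQ q hq
  exact ⟨hqp, hdivide (by omega) hlow, hN ▸ hupp, by rwa [← pow_mul, mul_comm e 2] at hdvd⟩

end SmoothShiftedPrimes

section ZeroSums

open Finset

variable {A G ι : Type*} {m : ℕ}

lemma exists_ne_zero_card_div_le_card_filter_apply_eq [AddCommGroup A] (hm : 0 < m) {x : A}
    (hx : m • x = 0) (B : Finset (AddChar A ℂ)) :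
    ∃ y : ℂ, y ≠ 0 ∧ (#B : ℝ) / m ≤ #{χ ∈ B | χ x = y} := by
  have : (0 : ℝ) < m := by exact_mod_cast hm
  set roots := Polynomial.nthRootsFinset m (1 : ℂ)
  have hmaps (χ : AddChar A ℂ) (_ : χ ∈ B) : χ x ∈ roots := by
    rw [Polynomial.mem_nthRootsFinset hm, ← AddChar.map_nsmul_eq_pow, hx, AddChar.map_zero_eq_one]
  have hne : roots.Nonempty := ⟨1, by simp [roots, Polynomial.mem_nthRootsFinset hm]⟩
  have hcard : #roots ≤ m :=
    (Multiset.toFinset_card_le _).trans (Polynomial.card_nthRoots m 1)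
  obtain ⟨y, hy, hyB⟩ := exists_le_card_fiber_of_nsmul_le_card_of_maps_to
    (b := (#B : ℝ) / m) hmaps hne (by
      calc #roots • ((#B : ℝ) / m) ≤ m * ((#B : ℝ) / m) := by
            rw [nsmul_eq_mul]
            gcongr
        _ = #B := by field_simp)
  refine ⟨y, ?_, hyB⟩
  rintro rfl
  rw [Polynomial.mem_nthRootsFinset hm, zero_pow hm.ne'] at hy
  exact zero_ne_one hy

-- Each factor `χ (g i) + a i` is chosen greedily so as to vanish at the most common value of
-- `χ (g i)` among the characters that survive so far.
lemma exists_card_prod_add_ne_zero_le [AddCommGroup A] [Fintype A] (hm : 0 < m) (g : ι → A)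
    (P : Finset ι) (hg : ∀ i ∈ P, m • g i = 0) :
    ∃ a : ι → ℂ, (∀ i, a i ≠ 0) ∧ (#{χ : AddChar A ℂ | ∏ i ∈ P, (χ (g i) + a i) ≠ 0} : ℝ) ≤
      Fintype.card A * (1 - 1 / (m : ℝ)) ^ #P := by
  classical
  induction P using Finset.induction_on with
  | empty =>
    refine ⟨fun _ => 1, fun _ => one_ne_zero, ?_⟩
    simp
  | insert j P hj ih =>
    obtain ⟨a, ha, hcard⟩ := ih fun i hi => hg i (mem_insert_of_mem hi)
    set B : Finset (AddChar A ℂ) := {χ | ∏ i ∈ P, (χ (g i) + a i) ≠ 0} with hB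
    obtain ⟨y, hy, hyB⟩ :=
      exists_ne_zero_card_div_le_card_filter_apply_eq hm (hg j (mem_insert_self j P)) B
    refine ⟨Function.update a j (-y), fun i => ?_, ?_⟩
    · obtain rfl | hij := eq_or_ne i j
      · simpa using hy
      · simpa [hij] using ha i
    have hold (χ : AddChar A ℂ) :
        ∏ i ∈ P, (χ (g i) + Function.update a j (-y) i) = ∏ i ∈ P, (χ (g i) + a i) :=
      prod_congr rfl fun i hi => by rw [Function.update_of_ne (ne_of_mem_of_not_mem hi hj)]
    have hsurvivors : ({χ | ∏ i ∈ insert j P, (χ (g i) + Function.update a j (-y) i) ≠ 0} :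
        Finset (AddChar A ℂ)) = {χ ∈ B | ¬χ (g j) = y} := by
      ext χ
      simp [hB, prod_insert hj, hold, add_neg_eq_zero, and_comm]
    have hsplit : (#{χ ∈ B | χ (g j) = y} : ℝ) + #{χ ∈ B | ¬χ (g j) = y} = #B := by
      exact_mod_cast card_filter_add_card_filter_not _
    have hm1 : (0 : ℝ) ≤ 1 - 1 / (m : ℝ) := by
      rw [sub_nonneg, div_le_one (by exact_mod_cast hm)]
      exact_mod_cast hm
    rw [hsurvivors, card_insert_of_notMem hj, pow_succ, ← mul_assoc]
    calc (#{χ ∈ B | ¬χ (g j) = y} : ℝ) ≤ #B - #B / m := by linarith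
      _ = #B * (1 - 1 / (m : ℝ)) := by ring
      _ ≤ _ := by gcongr

lemma sum_prod_add_eq_of_forall_sum_ne_zero [AddCommGroup A] [Fintype A] {g : ι → A}
    {P : Finset ι} (hP : ∀ S ⊆ P, S.Nonempty → ∑ i ∈ S, g i ≠ 0) (a : ι → ℂ) :
    ∑ χ : AddChar A ℂ, ∏ i ∈ P, (χ (g i) + a i) = Fintype.card A * ∏ i ∈ P, a i := by
  classical
  have hmap (χ : AddChar A ℂ) (S : Finset ι) : ∏ i ∈ S, χ (g i) = χ (∑ i ∈ S, g i) :=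
    (map_prod χ.toMonoidHom (fun i => Multiplicative.ofAdd (g i)) S).symm
  simp_rw [prod_add, hmap]
  rw [sum_comm]
  have hterm (S : Finset ι) (hS : S ∈ P.powerset) :
      ∑ χ : AddChar A ℂ, χ (∑ i ∈ S, g i) * ∏ i ∈ P \ S, a i =
        if S = ∅ then (Fintype.card A : ℂ) * ∏ i ∈ P, a i else 0 := by
    rw [← sum_mul, AddChar.sum_apply_eq_ite]
    obtain rfl | hne := S.eq_empty_or_nonempty
    · simp
    · rw [if_neg hne.ne_empty, if_neg (hP S (mem_powerset.1 hS) hne), zero_mul]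
  rw [sum_congr rfl hterm, sum_ite_eq', if_pos (empty_mem_powerset P)]

lemma exists_nonempty_sum_eq_zero [AddCommGroup A] [Fintype A] (hm : 0 < m) (g : ι → A)
    (P : Finset ι) (hg : ∀ i ∈ P, m • g i = 0)
    (hcard : (Fintype.card A : ℝ) * (1 - 1 / (m : ℝ)) ^ #P < 1) :
    ∃ S ⊆ P, S.Nonempty ∧ ∑ i ∈ S, g i = 0 := by
  by_contra! hP
  obtain ⟨a, ha, hle⟩ := exists_card_prod_add_ne_zero_le hm g P hg
  have hempty : #{χ : AddChar A ℂ | ∏ i ∈ P, (χ (g i) + a i) ≠ 0} = 0 :=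
    Nat.lt_one_iff.1 (by exact_mod_cast hle.trans_lt hcard)
  rw [card_eq_zero, filter_eq_empty_iff] at hempty
  have hzero : (Fintype.card A : ℂ) * ∏ i ∈ P, a i = 0 := by
    rw [← sum_prod_add_eq_of_forall_sum_ne_zero hP]
    exact sum_eq_zero fun χ hχ => not_not.1 (hempty hχ)
  refine mul_ne_zero ?_ (prod_ne_zero_iff.2 fun i _ => ha i) hzero
  exact_mod_cast Fintype.card_ne_zero

lemma exists_nonempty_prod_eq_one [CommGroup G] [Fintype G] (hm : 0 < m) (g : ι → G)
    (P : Finset ι) (hg : ∀ i ∈ P, g i ^ m = 1)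
    (hcard : (m : ℝ) * Real.log (Fintype.card G) < #P) :
    ∃ S ⊆ P, S.Nonempty ∧ ∏ i ∈ S, g i = 1 := by
  refine exists_nonempty_sum_eq_zero (A := Additive G) hm (fun i => Additive.ofMul (g i)) P hg ?_
  have hm' : (0 : ℝ) < m := by exact_mod_cast hm
  have hbase : (0 : ℝ) ≤ 1 - 1 / (m : ℝ) := by
    rw [sub_nonneg, div_le_one hm']
    exact_mod_cast hm
  have hG : (0 : ℝ) < Fintype.card G := by exact_mod_cast Fintype.card_pos
  calc (Fintype.card (Additive G) : ℝ) * (1 - 1 / (m : ℝ)) ^ #P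
      ≤ Real.exp (Real.log (Fintype.card G)) * Real.exp (-(1 / (m : ℝ))) ^ #P := by
        rw [Real.exp_log hG, Fintype.card_additive]
        gcongr
        exact Real.one_sub_le_exp_neg _
    _ = Real.exp (Real.log (Fintype.card G) - #P / m) := by
        rw [← Real.exp_nat_mul, ← Real.exp_add]
        congr 1
        ring
    _ < 1 := by
        rw [Real.exp_lt_one_iff, sub_neg, lt_div_iff₀ hm']
        linarith

lemma card_filter_powerset_card_lt_le (P : Finset ι) (t : ℕ) :
    #{S ∈ P.powerset | #S < t} ≤ (#P + 1) ^ t := by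
  classical
  have hsub : {S ∈ P.powerset | #S < t} ⊆ (range t).biUnion fun j => P.powersetCard j :=
    fun S hS => by
      obtain ⟨hSP, hSt⟩ := mem_filter.1 hS
      exact mem_biUnion.2 ⟨#S, mem_range.2 hSt, mem_powersetCard.2 ⟨mem_powerset.1 hSP, rfl⟩⟩
  calc #{S ∈ P.powerset | #S < t} ≤ ∑ j ∈ range t, (#P).choose j := by
        simpa only [card_powersetCard] using (card_le_card hsub).trans card_biUnion_le
    _ ≤ ∑ j ∈ range t, #P ^ j * 1 ^ (t - j) * t.choose j := sum_le_sum fun j hj => by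
        rw [one_pow, mul_one]
        exact (Nat.choose_le_pow _ _).trans
          (Nat.le_mul_of_pos_right _ (Nat.choose_pos (mem_range.1 hj).le))
    _ ≤ ∑ j ∈ range (t + 1), #P ^ j * 1 ^ (t - j) * t.choose j :=
        sum_le_sum_of_subset (range_subset_range.2 t.le_succ)
    _ = (#P + 1) ^ t := (add_pow _ _ _).symm

lemma exists_prod_eq_one_card_sdiff_lt [CommMonoid G] [DecidableEq ι] (g : ι → G)
    {P : Finset ι} {t₀ : ℕ}
    (hP : ∀ R ⊆ P, t₀ ≤ #R → ∃ S ⊆ R, S.Nonempty ∧ ∏ i ∈ S, g i = 1) {T : Finset ι} (hT : T ⊆ P) :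
    ∃ S ⊆ T, ∏ i ∈ S, g i = 1 ∧ #(T \ S) < t₀ := by
  classical
  obtain ⟨S, hS, hmax⟩ := exists_max_image {S ∈ T.powerset | ∏ i ∈ S, g i = 1} card ⟨∅, by simp⟩
  simp only [mem_filter, mem_powerset] at hS hmax
  refine ⟨S, hS.1, hS.2, not_le.1 fun hle => ?_⟩
  obtain ⟨S', hS', hne, hprod⟩ := hP (T \ S) (sdiff_subset.trans hT) hle
  have hdisj : Disjoint S S' := disjoint_sdiff.mono_right hS'
  have hunion := hmax (S ∪ S') ⟨union_subset hS.1 (hS'.trans sdiff_subset), by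
    rw [prod_union hdisj, hS.2, hprod, one_mul]⟩
  rw [card_union_of_disjoint hdisj] at hunion
  have := hne.card_pos
  omega

-- A `t`-subset is recovered from a maximal product-one subset together with its small complement.
lemma choose_le_card_prod_eq_one_mul [CommMonoid G] [DecidableEq G] (g : ι → G) (P : Finset ι)
    (t t₀ : ℕ) (hP : ∀ R ⊆ P, t₀ ≤ #R → ∃ S ⊆ R, S.Nonempty ∧ ∏ i ∈ S, g i = 1) :
    (#P).choose t ≤
      #{S ∈ P.powerset | ∏ i ∈ S, g i = 1 ∧ t < #S + t₀ ∧ #S ≤ t} * (#P + 1) ^ t₀ := by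
  classical
  choose! F hFT hFone hFcard using
    fun T (hT : T ⊆ P) => exists_prod_eq_one_card_sdiff_lt g hP hT
  rw [← card_powersetCard]
  refine le_trans ?_ (Nat.mul_le_mul_left _ (card_filter_powerset_card_lt_le P t₀))
  rw [← card_product]
  refine card_le_card_of_injOn (fun T => (F T, T \ F T)) (fun T hT => ?_) fun T hT T' hT' h => ?_
  · obtain ⟨hTP, hTt⟩ := mem_powersetCard.1 hT
    have hsmall := hFcard T hTP
    have hsum := card_sdiff_add_card_eq_card (hFT T hTP)
    simp only [mem_coe, mem_product, mem_filter, mem_powerset]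
    exact ⟨⟨(hFT T hTP).trans hTP, hFone T hTP, by omega, by omega⟩, sdiff_subset.trans hTP, hsmall⟩
  · rw [Prod.mk.injEq] at h
    rw [← union_sdiff_of_subset (hFT T (mem_powersetCard.1 hT).1), h.2, h.1,
      union_sdiff_of_subset (hFT T' (mem_powersetCard.1 hT').1)]

end ZeroSums

section CarmichaelProducts

open Finset

variable {P Q : Finset ℕ} {N Λ k m n p s t t₀ z : ℕ}

lemma mem_of_prime_dvd_prod (hP : ∀ p ∈ P, p.Prime) (hp : p.Prime) (hdvd : p ∣ ∏ q ∈ P, q) :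
    p ∈ P := by
  rw [← Nat.primeFactors_prod hP]
  exact hp.mem_primeFactors hdvd (prod_ne_zero_iff.2 fun q hq => (hP q hq).ne_zero)

lemma injOn_prod_of_forall_prime (hP : ∀ p ∈ P, p.Prime) :
    Set.InjOn (fun S : Finset ℕ => ∏ p ∈ S, p) {S | S ⊆ P} := fun S hS S' hS' h => by
  rw [← Nat.primeFactors_prod fun p hp => hP p (hS hp),
    ← Nat.primeFactors_prod fun p hp => hP p (hS' hp)]
  exact congrArg Nat.primeFactors h

lemma int_pow_modEq_one_prod {a : ℤ} (hP : ∀ p ∈ P, p.Prime ∧ p - 1 ∣ n)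
    (ha : ∀ p ∈ P, IsCoprime a p) : a ^ n ≡ 1 [ZMOD ∏ p ∈ P, (p : ℤ)] := by
  refine (Int.modEq_iff_dvd.2 (prod_dvd_of_coprime (fun p hp q hq hpq => ?_) fun p hp => ?_)).symm
  · exact Nat.isCoprime_iff_coprime.2 ((Nat.coprime_primes (hP p hp).1 (hP q hq).1).2 hpq)
  · obtain ⟨j, rfl⟩ := (hP p hp).2
    rw [← Int.modEq_iff_dvd, pow_mul]
    simpa using ((Int.ModEq.pow_card_sub_one_eq_one (hP p hp).1 (ha p hp)).pow j).symm

lemma int_pow_modEq_one_mul {a : ℤ} {g k : ℕ} (hg : g ∣ k) (ha : a ≡ 1 [ZMOD k]) :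
    a ^ g ≡ 1 [ZMOD k * g] := by
  have hsum : ∑ i ∈ range g, a ^ i ≡ 0 [ZMOD g] :=
    calc ∑ i ∈ range g, a ^ i ≡ ∑ _i ∈ range g, 1 [ZMOD g] := Int.ModEq.sum fun i _ => by
          simpa using (ha.of_dvd (Int.natCast_dvd_natCast.2 hg)).pow i
      _ ≡ 0 [ZMOD g] := by simp [Int.ModEq]
  refine (Int.modEq_iff_dvd.2 ?_).symm
  rw [← geom_sum_mul, mul_comm (k : ℤ)]
  exact mul_dvd_mul (Int.modEq_zero_iff_dvd.1 hsum) (Int.modEq_iff_dvd.1 ha.symm)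

lemma isCarmichael_prod (hP : ∀ p ∈ P, p.Prime ∧ p - 1 ∣ n) (hcard : 2 ≤ #P)
    (hmod : ∏ p ∈ P, p ≡ 1 [MOD n]) : IsCarmichael (∏ p ∈ P, p) := by
  obtain ⟨p, hp, q, hq, hpq⟩ := one_lt_card.1 hcard
  have hpos : 0 < ∏ p ∈ P, p := prod_pos fun p hp => (hP p hp).1.pos
  have hdvd (r : ℕ) (hr : r ∈ P) : r ∣ ∏ p ∈ P, p := dvd_prod_of_mem (fun p => p) hr
  refine ⟨(hP p hp).1.one_lt.trans_le (Nat.le_of_dvd hpos (hdvd p hp)), fun hprime => hpq ?_,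
    fun a ha => ?_⟩
  · rw [(Nat.prime_dvd_prime_iff_eq (hP p hp).1 hprime).1 (hdvd p hp),
      (Nat.prime_dvd_prime_iff_eq (hP q hq).1 hprime).1 (hdvd q hq)]
  · have hn : n ∣ ∏ p ∈ P, p - 1 := (Nat.modEq_iff_dvd' hpos).1 hmod.symm
    have := int_pow_modEq_one_prod (a := a) (fun r hr => ⟨(hP r hr).1, (hP r hr).2.trans hn⟩)
      fun r hr => ha.of_isCoprime_of_dvd_right (Int.natCast_dvd_natCast.2 (hdvd r hr))
    rwa [← Nat.cast_prod] at this

-- The primes dividing both `k` and `∏ q ∈ Q, q` are ramified modulo `k * ∏ q ∈ Q, q`: each of them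
-- multiplies the exponent by itself instead of contributing through `q - 1`.
lemma pow_modEq_one_mul_prod (hQ : ∀ q ∈ Q, q.Prime ∧ q - 1 ∣ Λ) (hp : p.Prime) (hpQ : p ∉ Q)
    (hpk : p ≡ 1 [MOD k]) :
    p ^ (Λ * ∏ q ∈ Q with q ∣ k, q) ≡ 1 [MOD k * ∏ q ∈ Q, q] := by
  set g := ∏ q ∈ Q with q ∣ k, q
  set r := ∏ q ∈ Q with ¬q ∣ k, q with hr
  have hgk : g ∣ k := prod_primes_dvd k (fun q hq => (hQ q (mem_filter.1 hq).1).1.prime)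
    fun q hq => (mem_filter.1 hq).2
  have hkr : Nat.Coprime k r := Nat.Coprime.prod_right fun q hq =>
    ((hQ q (mem_filter.1 hq).1).1.coprime_iff_not_dvd.2 (mem_filter.1 hq).2).symm
  have hmod_kg : p ^ (Λ * g) ≡ 1 [MOD k * g] := by
    have := int_pow_modEq_one_mul hgk (Int.natCast_modEq_iff.2 hpk)
    have hpow : p ^ g ≡ 1 [MOD k * g] := Int.natCast_modEq_iff.1 (by exact_mod_cast this)
    rw [mul_comm Λ, pow_mul]
    simpa using hpow.pow Λ
  have hmod_r : p ^ (Λ * g) ≡ 1 [MOD r] := by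
    rw [← Int.natCast_modEq_iff, hr]
    push_cast
    refine int_pow_modEq_one_prod (fun q hq => ?_) fun q hq => ?_
    · exact ⟨(hQ q (mem_filter.1 hq).1).1, (hQ q (mem_filter.1 hq).1).2.mul_right g⟩
    · have hqQ := (mem_filter.1 hq).1
      exact Nat.isCoprime_iff_coprime.2
        ((Nat.coprime_primes hp (hQ q hqQ).1).2 (ne_of_mem_of_not_mem hqQ hpQ).symm)
  rw [← prod_filter_mul_prod_filter_not Q (· ∣ k), ← mul_assoc,
    ← Nat.modEq_and_modEq_iff_modEq_mul (hkr.mul_left (hkr.coprime_dvd_left hgk))]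
  exact ⟨hmod_kg, hmod_r⟩

lemma exists_nonempty_prod_natCast_eq_one [NeZero N] (hm : 0 < m)
    (hP : ∀ p ∈ P, (p : ZMod N) ^ m = 1) (hcard : (m : ℝ) * Real.log N < #P) :
    ∃ S ⊆ P, S.Nonempty ∧ ∏ p ∈ S, (p : ZMod N) = 1 := by
  have hunit (p : ℕ) (hp : p ∈ P) : ∃ u : (ZMod N)ˣ, (u : ZMod N) = p :=
    IsUnit.of_pow_eq_one (hP p hp) hm.ne'
  choose! g hg using hunit
  have hunits : Fintype.card (ZMod N)ˣ ≤ N := by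
    rw [ZMod.card_units_eq_totient]
    exact Nat.totient_le N
  obtain ⟨S, hSP, hS, hprod⟩ := exists_nonempty_prod_eq_one hm g P
    (fun p hp => Units.ext (by simpa [hg p hp] using hP p hp)) (by
      refine lt_of_le_of_lt ?_ hcard
      gcongr)
  refine ⟨S, hSP, hS, ?_⟩
  calc ∏ p ∈ S, (p : ZMod N) = ((∏ p ∈ S, g p : (ZMod N)ˣ) : ZMod N) := by
        rw [Units.coe_prod]
        exact prod_congr rfl fun p hp => (hg p (hSP hp)).symm
    _ = 1 := by rw [hprod, Units.val_one]

lemma exists_nonempty_prod_natCast_eq_one_of_modEq_one (hk : 0 < k) (hΛ : 0 < Λ) (hz : 0 < z)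
    (hQ : ∀ q ∈ Q, q.Prime ∧ q - 1 ∣ Λ ∧ q ≤ z) (hs : #{q ∈ Q | q ∣ k} ≤ s)
    (hP : ∀ p ∈ P, p.Prime ∧ p ∉ Q ∧ p ≡ 1 [MOD k])
    (hcard : (Λ * z ^ s : ℝ) * Real.log (k * ∏ q ∈ Q, q : ℕ) < #P) :
    ∃ S ⊆ P, S.Nonempty ∧ ∏ p ∈ S, (p : ZMod (k * ∏ q ∈ Q, q)) = 1 := by
  set g := ∏ q ∈ Q with q ∣ k, q
  have hgpos : 0 < g := prod_pos fun q hq => (hQ q (mem_filter.1 hq).1).1.pos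
  have hgz : g ≤ z ^ s :=
    (prod_le_pow_card _ _ _ fun q hq => (hQ q (mem_filter.1 hq).1).2.2).trans
      (Nat.pow_le_pow_right hz hs)
  have : NeZero (k * ∏ q ∈ Q, q) := ⟨(Nat.mul_pos hk (prod_pos fun q hq => (hQ q hq).1.pos)).ne'⟩
  refine exists_nonempty_prod_natCast_eq_one (Nat.mul_pos hΛ hgpos) (fun p hp => ?_)
    (lt_of_le_of_lt ?_ hcard)
  · obtain ⟨hprime, hpQ, hpk⟩ := hP p hp
    exact_mod_cast (ZMod.natCast_eq_natCast_iff _ _ _).2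
      (pow_modEq_one_mul_prod (fun q hq => ⟨(hQ q hq).1, (hQ q hq).2.1⟩) hprime hpQ hpk)
  · have hgz' : (g : ℝ) ≤ z ^ s := by exact_mod_cast hgz
    rw [Nat.cast_mul]
    gcongr

lemma exists_finset_isCarmichael {x : ℝ} (hk : 0 < k) (hΛ : 0 < Λ) (hz : 0 < z) (hx : 1 ≤ x)
    (hQ : ∀ q ∈ Q, q.Prime ∧ q - 1 ∣ Λ ∧ q ≤ z) (hs : #{q ∈ Q | q ∣ k} ≤ s)
    (hP : ∀ p ∈ P, p.Prime ∧ p ∉ Q ∧ p ≡ 1 [MOD k] ∧ p - 1 ∣ k * ∏ q ∈ Q, q ∧ (p : ℝ) ≤ x)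
    (ht₀ : (Λ * z ^ s : ℝ) * Real.log (k * ∏ q ∈ Q, q : ℕ) < t₀) (ht : t₀ < t) :
    ∃ M : Finset ℕ,
      (∀ m ∈ M, IsCarmichael m ∧ (m : ℝ) ≤ x ^ t ∧ ∀ p, p.Prime → p ∣ m → p ∈ P) ∧
      (#P).choose t ≤ #M * (#P + 1) ^ t₀ := by
  set N := k * ∏ q ∈ Q, q
  have hcount := choose_le_card_prod_eq_one_mul (fun p : ℕ => (p : ZMod N)) P t t₀
    fun R hR hRcard => exists_nonempty_prod_natCast_eq_one_of_modEq_one hk hΛ hz hQ hs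
      (fun p hp => ⟨(hP p (hR hp)).1, (hP p (hR hp)).2.1, (hP p (hR hp)).2.2.1⟩)
      (ht₀.trans_le (by exact_mod_cast hRcard))
  set F := {S ∈ P.powerset | ∏ i ∈ S, ((i : ℕ) : ZMod N) = 1 ∧ t < #S + t₀ ∧ #S ≤ t}
  have hFP {S : Finset ℕ} (hS : S ∈ F) : S ⊆ P := mem_powerset.1 (mem_filter.1 hS).1
  have hinj : Set.InjOn (fun S : Finset ℕ => ∏ p ∈ S, p) F :=
    (injOn_prod_of_forall_prime fun p hp => (hP p hp).1).mono fun _ => hFP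
  refine ⟨F.image fun S => ∏ p ∈ S, p, fun m hm => ?_, by rwa [card_image_of_injOn hinj]⟩
  obtain ⟨S, hS, rfl⟩ := mem_image.1 hm
  have hSP := hFP hS
  obtain ⟨-, hone, hcard, hSt⟩ := mem_filter.1 hS
  refine ⟨isCarmichael_prod (n := N) (fun p hp => ⟨(hP p (hSP hp)).1, (hP p (hSP hp)).2.2.2.1⟩)
    (by omega) ?_, ?_, fun p hp hpd => ?_⟩
  · rw [← ZMod.natCast_eq_natCast_iff]
    rw [Nat.cast_prod, hone, Nat.cast_one]
  · rw [Nat.cast_prod]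
    calc ∏ p ∈ S, (p : ℝ) ≤ ∏ _p ∈ S, x :=
          prod_le_prod (fun _ _ => Nat.cast_nonneg _) fun p hp => (hP p (hSP hp)).2.2.2.2
      _ = x ^ #S := prod_const x
      _ ≤ x ^ t := pow_le_pow_right₀ hx hSt
  · exact hSP (mem_of_prime_dvd_prod (fun p hp => (hP p (hSP hp)).1) hp hpd)

end CarmichaelProducts

section PrimesInProgressions

open Finset

lemma primePi_eq_primeCounting (y : ℝ) : primePi y = Nat.primeCounting ⌊y⌋₊ := by
  rw [primePi, ← Nat.primesLE_card_eq_primeCounting, ← Set.ncard_coe_finset]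
  congr 1
  ext p
  simp only [Set.mem_ofPred_eq, mem_coe, Nat.mem_primesLE, and_comm (a := p ≤ _)]
  exact and_congr_right fun hp => (Nat.le_floor_iff' hp.ne_zero).symm

lemma eventually_le_two_mul_primePi_mul_log :
    ∀ᶠ y : ℝ in Filter.atTop, y ≤ 2 * (primePi y * Real.log y) := by
  filter_upwards [eventually_mul_le_theta (c := 1 / 2) (by linarith [Real.log_two_gt_d9])] with y hy
  rw [primePi_eq_primeCounting]
  linarith [(Chebyshev.theta_le_psi y).trans (Chebyshev.psi_le_primeCounting_mul_log' y)]

variable {D J Q : Finset ℕ} {H N K s z : ℕ}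

lemma card_dvd_ge_mul_pow_le (hQ : ∀ q ∈ Q, q.Prime ∧ z ≤ q) :
    #{k ∈ Ioc 0 K | s ≤ #{q ∈ Q | q ∣ k}} * z ^ s ≤ (#Q).choose s * K := by
  have hsub : {k ∈ Ioc 0 K | s ≤ #{q ∈ Q | q ∣ k}} ⊆
      (Q.powersetCard s).biUnion fun S => {k ∈ Ioc 0 K | ∏ q ∈ S, q ∣ k} := fun k hk => by
    obtain ⟨hkK, hks⟩ := mem_filter.1 hk
    obtain ⟨S, hS, hScard⟩ := exists_subset_card_eq hks
    have hdvd : ∏ q ∈ S, q ∣ k :=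
      prod_primes_dvd k (fun q hq => (hQ q (mem_filter.1 (hS hq)).1).1.prime)
        fun q hq => (mem_filter.1 (hS hq)).2
    exact mem_biUnion.2 ⟨S, mem_powersetCard.2 ⟨hS.trans (filter_subset _ _), hScard⟩,
      mem_filter.2 ⟨hkK, hdvd⟩⟩
  calc #{k ∈ Ioc 0 K | s ≤ #{q ∈ Q | q ∣ k}} * z ^ s
      ≤ ∑ S ∈ Q.powersetCard s, #{k ∈ Ioc 0 K | ∏ q ∈ S, q ∣ k} * z ^ s := by
        rw [← sum_mul]
        gcongr
        exact (card_le_card hsub).trans card_biUnion_le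
    _ ≤ ∑ _S ∈ Q.powersetCard s, K := sum_le_sum fun S hS => by
        obtain ⟨hSQ, hScard⟩ := mem_powersetCard.1 hS
        have hprod : z ^ s ≤ ∏ q ∈ S, q := by
          rw [← hScard, ← prod_const]
          exact prod_le_prod' fun q hq => (hQ q (hSQ hq)).2
        rw [Nat.Ioc_filter_dvd_card_eq_div]
        exact (Nat.mul_le_mul_left _ hprod).trans (Nat.div_mul_le_self _ _)
    _ = (#Q).choose s * K := by rw [sum_const, card_powersetCard, smul_eq_mul]

lemma card_dvd_ge_mul_two_pow_le {n : ℕ} (hQ : ∀ q ∈ Q, q.Prime ∧ z ≤ q) (hz : 0 < z) (hH : 0 < H)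
    (hQcard : #Q ≤ H * z) (hn : (2 * H) ^ 2 ≤ n) :
    #{k ∈ Ioc 0 K | 2 * n ≤ #{q ∈ Q | q ∣ k}} * 2 ^ (2 * n) ≤ K := by
  set s := 2 * n
  set B := #{k ∈ Ioc 0 K | s ≤ #{q ∈ Q | q ∣ k}}
  have hfactorial : (2 * H) ^ s ≤ s.factorial :=
    calc (2 * H) ^ s = ((2 * H) ^ 2) ^ n := by rw [← pow_mul]
      _ ≤ n ^ (s - n) := by
          rw [show s - n = n by omega]
          exact Nat.pow_le_pow_left hn n
      _ ≤ n.factorial * n ^ (s - n) := Nat.le_mul_of_pos_left _ n.factorial_pos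
      _ ≤ s.factorial := Nat.factorial_mul_pow_sub_le_factorial (by omega)
  refine Nat.le_of_mul_le_mul_right (c := H ^ s * z ^ s) ?_ (by positivity)
  calc B * 2 ^ s * (H ^ s * z ^ s) = (2 * H) ^ s * (B * z ^ s) := by
        rw [mul_pow]
        ring
    _ ≤ s.factorial * ((#Q).choose s * K) := Nat.mul_le_mul hfactorial (card_dvd_ge_mul_pow_le hQ)
    _ = (#Q).descFactorial s * K := by
        rw [Nat.descFactorial_eq_factorial_mul_choose]
        ring
    _ ≤ (H * z) ^ s * K := by
        gcongr
        exact (Nat.descFactorial_le_pow _ _).trans (Nat.pow_le_pow_left hQcard s)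
    _ = K * (H ^ s * z ^ s) := by
        rw [mul_pow]
        ring

lemma exists_finset_primes_prod (u : ℕ) (hQ : ∀ q ∈ Q, q.Prime ∧ q ≤ z) :
    ∃ D : Finset ℕ, #D = (#Q).choose u ∧ ∀ d ∈ D, 0 < d ∧ d ∣ ∏ q ∈ Q, q ∧ d ≤ z ^ u ∧
      ∀ p, p.Prime → p ∣ d → p ∈ Q := by
  refine ⟨(Q.powersetCard u).image fun S => ∏ q ∈ S, q, ?_, fun d hd => ?_⟩
  · rw [card_image_of_injOn, card_powersetCard]
    exact (injOn_prod_of_forall_prime fun q hq => (hQ q hq).1).mono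
      fun S hS => (mem_powersetCard.1 hS).1
  · obtain ⟨S, hS, rfl⟩ := mem_image.1 hd
    obtain ⟨hSQ, rfl⟩ := mem_powersetCard.1 hS
    have hprime (q : ℕ) (hq : q ∈ S) : q.Prime := (hQ q (hSQ hq)).1
    exact ⟨prod_pos fun q hq => (hprime q hq).pos, prod_dvd_prod_of_subset _ _ _ hSQ,
      prod_le_pow_card _ _ _ fun q hq => (hQ q (hSQ hq)).2,
      fun p hp hpd => hSQ (mem_of_prime_dvd_prod hprime hp hpd)⟩

lemma pow_le_choose {a b u : ℕ} (hu : u ≤ b) (h : a * b + u ≤ N + 1) : a ^ u ≤ N.choose u := by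
  obtain rfl | hu0 := Nat.eq_zero_or_pos u
  · simp
  refine Nat.le_of_mul_le_mul_left (c := b ^ u) ?_ (pow_pos (hu0.trans_le hu) u)
  calc b ^ u * a ^ u = (a * b) ^ u := by rw [mul_pow, mul_comm]
    _ ≤ (N + 1 - u) ^ u := Nat.pow_le_pow_left (by omega) u
    _ ≤ u.factorial * N.choose u := by
        rw [← Nat.descFactorial_eq_factorial_mul_choose]
        exact Nat.pow_sub_le_descFactorial N u
    _ ≤ b ^ u * N.choose u :=
        Nat.mul_le_mul_right _ ((Nat.factorial_le_pow u).trans (Nat.pow_le_pow_left hu u))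

lemma exists_card_mul_le_card_mul_card_filter {α β : Type*} {A : Finset α} {B : Finset β}
    (r : α → β → Prop) [∀ a b, Decidable (r a b)] {c : ℝ} (hB : B.Nonempty)
    (h : ∀ a ∈ A, c ≤ #{b ∈ B | r a b}) : ∃ b ∈ B, #A * c ≤ #B * #{a ∈ A | r a b} := by
  obtain ⟨b, hb, hle⟩ := exists_le_of_sum_le (f := fun _ => #A * c)
    (g := fun b => (#B : ℝ) * #{a ∈ A | r a b}) hB (by
      have hdouble := sum_card_bipartiteAbove_eq_sum_card_bipartiteBelow (s := A) (t := B) r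
      simp only [bipartiteAbove, bipartiteBelow] at hdouble
      rw [sum_const, nsmul_eq_mul, ← mul_sum, ← Nat.cast_sum, ← hdouble, Nat.cast_sum]
      gcongr
      simpa using card_nsmul_le_sum A _ c h)
  exact ⟨b, hb, hle⟩

lemma ncard_prime_modEq_one_le {d : ℕ} (good : ℕ → Prop) [DecidablePred good] (x : ℝ) :
    {p : ℕ | p.Prime ∧ (p : ℝ) < d * x ∧ p ≡ 1 [MOD d] ∧ good p}.ncard ≤
      #{k ∈ Ioc 0 ⌊x⌋₊ \ J | (d * k + 1).Prime ∧ ((d * k + 1 : ℕ) : ℝ) < d * x ∧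
        good (d * k + 1) ∧ d * k + 1 ∉ Q} + #J + #Q := by
  set W := {k ∈ Ioc 0 ⌊x⌋₊ \ J | (d * k + 1).Prime ∧ ((d * k + 1 : ℕ) : ℝ) < d * x ∧
    good (d * k + 1) ∧ d * k + 1 ∉ Q}
  have hsub : {p : ℕ | p.Prime ∧ (p : ℝ) < d * x ∧ p ≡ 1 [MOD d] ∧ good p} ⊆
      ((W ∪ J).image (fun k => d * k + 1) ∪ Q : Finset ℕ) := by
    rintro p ⟨hp, hpx, hpd, hgood⟩
    obtain ⟨k, hk⟩ := (Nat.modEq_iff_dvd' hp.one_le).1 hpd.symm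
    obtain rfl : p = d * k + 1 := by have := hp.one_le; omega
    have hd : 0 < d := Nat.pos_of_ne_zero fun hd => hp.ne_one (by simp [hd])
    have hk0 : 0 < k := Nat.pos_of_ne_zero fun hk => hp.ne_one (by simp [hk])
    have hkx : k ≤ ⌊x⌋₊ := Nat.le_floor (by
      refine le_of_mul_le_mul_left (a := (d : ℝ)) ?_ (by exact_mod_cast hd)
      push_cast at hpx
      linarith)
    by_cases hpQ : d * k + 1 ∈ Q
    · exact mem_union_right _ hpQ
    refine mem_union_left _ (mem_image_of_mem _ ?_)
    by_cases hkJ : k ∈ J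
    · exact mem_union_right _ hkJ
    · exact mem_union_left _ (mem_filter.2
        ⟨mem_sdiff.2 ⟨mem_Ioc.2 ⟨hk0, hkx⟩, hkJ⟩, hp, hpx, hgood, hpQ⟩)
  calc _ ≤ #((W ∪ J).image (fun k => d * k + 1) ∪ Q) := by
        rw [← Set.ncard_coe_finset]
        exact Set.ncard_le_ncard hsub (finite_toSet _)
    _ ≤ #W + #J + #Q := (card_union_le _ _).trans
        (Nat.add_le_add_right (card_image_le.trans (card_union_le _ _)) _)

lemma exists_multiplier {c x : ℝ} (good : ℕ → Prop) (hc : 0 < c) (hx : 0 ≤ x) (hD : D.Nonempty)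
    (h : ∀ d ∈ D, c + #J + #Q ≤
      {p : ℕ | p.Prime ∧ (p : ℝ) < d * x ∧ p ≡ 1 [MOD d] ∧ good p}.ncard) :
    ∃ k ∈ Ioc 0 ⌊x⌋₊ \ J, ∃ D' ⊆ D,
      (∀ d ∈ D', (d * k + 1).Prime ∧ ((d * k + 1 : ℕ) : ℝ) < d * x ∧ good (d * k + 1) ∧
        d * k + 1 ∉ Q) ∧ #D * c ≤ x * #D' := by
  classical
  have hcount (d : ℕ) (hd : d ∈ D) : c ≤ #{k ∈ Ioc 0 ⌊x⌋₊ \ J | (d * k + 1).Prime ∧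
      ((d * k + 1 : ℕ) : ℝ) < d * x ∧ good (d * k + 1) ∧ d * k + 1 ∉ Q} := by
    have := (h d hd).trans (Nat.cast_le.2 (ncard_prime_modEq_one_le (J := J) (Q := Q) good x))
    rw [Nat.cast_add, Nat.cast_add] at this
    linarith
  obtain ⟨d, hd⟩ := hD
  have hne : (Ioc 0 ⌊x⌋₊ \ J).Nonempty := by
    have := hc.trans_le (hcount d hd)
    exact (card_pos.1 (by exact_mod_cast this)).mono (filter_subset _ _)
  obtain ⟨k, hk, hle⟩ := exists_card_mul_le_card_mul_card_filter _ hne hcount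
  refine ⟨k, hk, _, filter_subset _ _, fun d hd => (mem_filter.1 hd).2, hle.trans ?_⟩
  gcongr
  calc (#(Ioc 0 ⌊x⌋₊ \ J) : ℝ) ≤ ⌊x⌋₊ := by
        exact_mod_cast (card_le_card sdiff_subset).trans (by simp)
    _ ≤ x := Nat.floor_le hx

end PrimesInProgressions

section GoodPrimes

open Finset Filter

/-- The lower bound `c * π(y) / φ(q)`, at level `x`, for the number of primes
`p < y` with `p ≡ 1 (mod q)` and `good p`, where `x ^ (1 / 2) < y ≤ x` and `q ≤ x ^ η` ranges over
the moduli that are not multiples of the exceptional modulus `ℓ`. -/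
def HasPrimesCongrOne (good : ℕ → Prop) (c η x : ℝ) (ℓ : ℕ) : Prop :=
  ∀ y : ℝ, x ^ (1 / 2 : ℝ) < y → y ≤ x → ∀ q : ℕ, 0 < q → (q : ℝ) ≤ x ^ η → ¬ℓ ∣ q →
    c * primePi y / q.totient ≤
      ({p : ℕ | p.Prime ∧ (p : ℝ) < y ∧ p ≡ 1 [MOD q] ∧ good p}.ncard : ℝ)

variable {good : ℕ → Prop} {c η : ℝ} {e : ℕ}

lemma eventually_le_ncard_prime_modEq_one (hc : 0 < c) (hη : η < 1 / 2) :
    ∀ᶠ x : ℝ in atTop, ∀ ℓ, HasPrimesCongrOne good c η x ℓ → ∀ d : ℕ, 0 < d → (d : ℝ) ≤ x ^ η →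
      ¬ℓ ∣ d → c * x ^ (1 - η) / (2 * Real.log x) ≤
        {p : ℕ | p.Prime ∧ (p : ℝ) < d * x ^ (1 - η) ∧ p ≡ 1 [MOD d] ∧ good p}.ncard := by
  filter_upwards [(tendsto_rpow_atTop (by linarith : 0 < 1 - η)).eventually
    (eventually_forall_ge_atTop.2 eventually_le_two_mul_primePi_mul_log), eventually_gt_atTop 1]
    with x hx hx1 ℓ hℓ d hd hdx hℓd
  have hx0 : 0 < x := by linarith
  have hd1 : (1 : ℝ) ≤ d := by exact_mod_cast hd
  have hφ0 : (0 : ℝ) < d.totient := by exact_mod_cast Nat.totient_pos.2 hd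
  have hφd : (d.totient : ℝ) ≤ d := by exact_mod_cast Nat.totient_le d
  set K := x ^ (1 - η)
  have hK0 : 0 < K := Real.rpow_pos_of_pos hx0 _
  have hKd : K ≤ d * K := le_mul_of_one_le_left hK0.le hd1
  have hdK : d * K ≤ x := by
    calc d * K ≤ x ^ η * x ^ (1 - η) := by gcongr
      _ = x := by rw [← Real.rpow_add hx0, add_sub_cancel, Real.rpow_one]
  have hsqrt : x ^ (1 / 2 : ℝ) < d * K :=
    (Real.rpow_lt_rpow_of_exponent_lt hx1 (by linarith)).trans_le hKd
  refine le_trans ?_ (hℓ (d * K) hsqrt hdK d hd hdx hℓd)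
  have hlog : Real.log (d * K) ≤ Real.log x := Real.log_le_log (hK0.trans_le hKd) hdK
  rw [div_le_div_iff₀ (by linarith [Real.log_pos hx1]) hφ0]
  calc c * K * d.totient ≤ c * (d * K) := by
        rw [mul_assoc, mul_comm K]
        gcongr
    _ ≤ c * (2 * (primePi (d * K) * Real.log x)) := by
        refine mul_le_mul_of_nonneg_left ((hx _ hKd).trans ?_) hc.le
        gcongr
    _ = c * primePi (d * K) * (2 * Real.log x) := by ring

lemma exists_finset_good_primes {D Q : Finset ℕ} {s : ℕ} {a x y K : ℝ} (ha : 0 < a) (hK : 0 ≤ K)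
    (hy : 1 ≤ y) (hyK : y * K ≤ x) (hDne : D.Nonempty)
    (hD : ∀ d ∈ D, d ∣ ∏ q ∈ Q, q ∧ (d : ℝ) ≤ y ∧ 4 * a ≤
      {p : ℕ | p.Prime ∧ (p : ℝ) < d * K ∧ p ≡ 1 [MOD d] ∧ good p}.ncard)
    (hbad : #{k ∈ Ioc 0 ⌊K⌋₊ | s ≤ #{q ∈ Q | q ∣ k}} ≤ a) (hQ : #Q ≤ a) :
    ∃ (k : ℕ) (P : Finset ℕ), 0 < k ∧ (k : ℝ) ≤ x ∧ #{q ∈ Q | q ∣ k} ≤ s ∧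
      (∀ p ∈ P, p.Prime ∧ p ∉ Q ∧ p ≡ 1 [MOD k] ∧ p - 1 ∣ k * ∏ q ∈ Q, q ∧ (p : ℝ) ≤ x ∧ good p) ∧
      #D * (2 * a) ≤ K * #P := by
  set J := {k ∈ Ioc 0 ⌊K⌋₊ | s ≤ #{q ∈ Q | q ∣ k}}
  obtain ⟨k, hk, D', hD'D, hD', hcard⟩ := exists_multiplier (J := J) (Q := Q) good
    (mul_pos two_pos ha) hK hDne fun d hd => by linarith [(hD d hd).2.2]
  obtain ⟨hkK, hkJ⟩ := mem_sdiff.1 hk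
  have hk0 : 0 < k := (mem_Ioc.1 hkK).1
  have hks : #{q ∈ Q | q ∣ k} ≤ s :=
    le_of_lt (not_le.1 fun h => hkJ (mem_filter.2 ⟨hkK, h⟩))
  have hkx : (k : ℝ) ≤ x := by
    calc (k : ℝ) ≤ K := (Nat.le_floor_iff hK).1 (mem_Ioc.1 hkK).2
      _ ≤ y * K := le_mul_of_one_le_left hK hy
      _ ≤ x := hyK
  have hinj : Function.Injective fun d => d * k + 1 := fun d d' h =>
    Nat.eq_of_mul_eq_mul_right hk0 (Nat.succ_injective h)
  refine ⟨k, D'.image fun d => d * k + 1, hk0, hkx, hks, fun p hp => ?_,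
    by rwa [card_image_of_injective _ hinj]⟩
  obtain ⟨d, hd, rfl⟩ := mem_image.1 hp
  obtain ⟨hprime, hlt, hgood, hnotMem⟩ := hD' d hd
  obtain ⟨hdQ, hdy, -⟩ := hD d (hD'D hd)
  refine ⟨hprime, hnotMem, by simp [Nat.ModEq], ?_, ?_, hgood⟩
  · rw [Nat.add_sub_cancel, mul_comm]
    exact mul_dvd_mul_left k hdQ
  · exact hlt.le.trans ((mul_le_mul_of_nonneg_right hdy hK).trans hyK)

lemma eventually_mul_pow_le_exp (a : ℝ) (n : ℕ) :
    ∀ᶠ T : ℕ in atTop, a * (T : ℝ) ^ n ≤ Real.exp T := by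
  have h := ((Real.isLittleO_pow_exp_atTop (n := n)).const_mul_left a).comp_tendsto
    tendsto_natCast_atTop_atTop
  filter_upwards [h.bound one_pos] with T hT
  simpa using (le_abs_self _).trans hT

lemma card_dvd_ge_mul_exp_le {T K : ℕ} {Q : Finset ℕ} (he : 300 ≤ e) (hT : 4 ≤ T)
    (hQ : ∀ q ∈ Q, q.Prime ∧ T ^ (3 * e - 10) ≤ q) (hcard : #Q ≤ T ^ (3 * e)) :
    #{k ∈ Ioc 0 K | 2 * T ^ (2 * e) ≤ #{q ∈ Q | q ∣ k}} * Real.exp T ≤ K := by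
  have hbad := card_dvd_ge_mul_two_pow_le (K := K) (H := T ^ 10) (n := T ^ (2 * e))
    hQ (by positivity) (by positivity)
    (by rwa [← pow_add, show 10 + (3 * e - 10) = 3 * e by omega]) (by
      calc (2 * T ^ 10) ^ 2 = 4 * T ^ 20 := by ring
        _ ≤ T * T ^ 20 := by gcongr
        _ = T ^ 21 := by ring
        _ ≤ T ^ (2 * e) := Nat.pow_le_pow_right (by omega) (by omega))
  have hexp : Real.exp T ≤ 2 ^ (2 * T ^ (2 * e)) := by
    calc Real.exp T = Real.exp 1 ^ T := by rw [← Real.exp_nat_mul, mul_one]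
      _ ≤ (2 ^ 2) ^ T := by
          gcongr
          linarith [Real.exp_one_lt_d9]
      _ = 2 ^ (2 * T) := by rw [← pow_mul]
      _ ≤ 2 ^ (2 * T ^ (2 * e)) := by
          gcongr
          · norm_num
          · exact Nat.le_self_pow (by omega) T
  exact (mul_le_mul_of_nonneg_left hexp (Nat.cast_nonneg _)).trans (by exact_mod_cast hbad)

lemma eventually_card_dvd_ge_le (he : 300 ≤ e) (hc : 0 < c) :
    ∀ᶠ T : ℕ in atTop, ∀ (Q : Finset ℕ) (K : ℝ), Real.exp T ≤ K →
      (∀ q ∈ Q, q.Prime ∧ T ^ (3 * e - 10) ≤ q ∧ q ≤ T ^ (3 * e)) →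
      #{k ∈ Ioc 0 ⌊K⌋₊ | 2 * T ^ (2 * e) ≤ #{q ∈ Q | q ∣ k}} ≤ c * K / (8 * (T : ℝ) ^ (2 * e + 6)) ∧
      #Q ≤ c * K / (8 * (T : ℝ) ^ (2 * e + 6)) := by
  filter_upwards [eventually_mul_pow_le_exp (8 / c) (5 * e + 6), eventually_ge_atTop 4]
    with T hexp hT Q K hK hQ
  have hTR : (1 : ℝ) ≤ T := by exact_mod_cast (by omega : 1 ≤ T)
  have hpoly : (T : ℝ) ^ (3 * e) * (8 * (T : ℝ) ^ (2 * e + 6)) ≤ c * Real.exp T := by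
    calc (T : ℝ) ^ (3 * e) * (8 * (T : ℝ) ^ (2 * e + 6))
        = c * (8 / c * (T : ℝ) ^ (5 * e + 6)) := by
          field_simp
          ring
      _ ≤ c * Real.exp T := by gcongr
  have hQcard : #Q ≤ T ^ (3 * e) := by
    have hsub : Q ⊆ Ioc 0 (T ^ (3 * e)) := fun q hq =>
      mem_Ioc.2 ⟨(hQ q hq).1.pos, (hQ q hq).2.2⟩
    simpa using card_le_card hsub
  have hbad : #{k ∈ Ioc 0 ⌊K⌋₊ | 2 * T ^ (2 * e) ≤ #{q ∈ Q | q ∣ k}} * Real.exp T ≤ K :=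
    (card_dvd_ge_mul_exp_le he hT (fun q hq => ⟨(hQ q hq).1, (hQ q hq).2.1⟩) hQcard).trans
      (Nat.floor_le ((Real.exp_pos _).le.trans hK))
  rw [le_div_iff₀ (by positivity), le_div_iff₀ (by positivity)]
  constructor
  · set B := #{k ∈ Ioc 0 ⌊K⌋₊ | 2 * T ^ (2 * e) ≤ #{q ∈ Q | q ∣ k}}
    calc (B : ℝ) * (8 * (T : ℝ) ^ (2 * e + 6)) ≤ B * (c * Real.exp T) :=
          mul_le_mul_of_nonneg_left
            ((le_mul_of_one_le_left (by positivity) (one_le_pow₀ hTR)).trans hpoly) (by positivity)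
      _ = c * (B * Real.exp T) := by ring
      _ ≤ c * K := by gcongr
  · calc (#Q : ℝ) * (8 * (T : ℝ) ^ (2 * e + 6))
        ≤ (T : ℝ) ^ (3 * e) * (8 * (T : ℝ) ^ (2 * e + 6)) := by
          gcongr
          exact_mod_cast hQcard
      _ ≤ c * Real.exp T := hpoly
      _ ≤ c * K := by gcongr

lemma pow_pow_le_choose {N T u : ℕ} (he : 300 ≤ e) (hT : 2 ≤ T) (hu : u ≤ T ^ (2 * e + 6))
    (hN : T ^ (3 * e - 7) ≤ N + 1) : (T ^ (e - 14)) ^ u ≤ N.choose u :=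
  pow_le_choose hu <| by
    calc T ^ (e - 14) * T ^ (2 * e + 6) + u ≤ T ^ (3 * e - 8) + T ^ (3 * e - 8) := by
          rw [← pow_add]
          refine add_le_add (le_of_eq (by congr 1; omega)) (hu.trans ?_)
          exact Nat.pow_le_pow_right (by omega) (by omega)
      _ = 2 * T ^ (3 * e - 8) := by ring
      _ ≤ T * T ^ (3 * e - 8) := Nat.mul_le_mul_right _ (by omega)
      _ = T ^ (3 * e - 7) := by
          rw [← pow_succ']
          congr 1
          omega
      _ ≤ N + 1 := hN

lemma exists_nat_mul_le_and_sub_le_mul {a b L : ℝ} (ha : 0 ≤ a) (hb : 0 < b) (hL : 0 < L) :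
    ∃ u : ℕ, u * (b * L) ≤ a ∧ a / b - L ≤ u * L := by
  refine ⟨⌊a / (b * L)⌋₊, ?_, ?_⟩
  · rw [← le_div_iff₀ (by positivity)]
    exact Nat.floor_le (by positivity)
  · have := Nat.lt_floor_add_one (a / (b * L))
    rw [div_lt_iff₀ (by positivity)] at this
    rw [sub_le_iff_le_add, div_le_iff₀ hb]
    linarith

lemma exists_finset_exp_le_card {T : ℕ} {Q : Finset ℕ} (he : 300 ≤ e) (hη0 : 0 ≤ η) (hη1 : η ≤ 1)
    (hT : 3 ≤ T) (hQ : ∀ q ∈ Q, q.Prime ∧ q ≤ T ^ (3 * e)) (hcard : T ^ (3 * e - 7) ≤ #Q + 1) :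
    ∃ D : Finset ℕ, (∀ d ∈ D, 0 < d ∧ d ∣ ∏ q ∈ Q, q ∧
        (d : ℝ) ≤ Real.exp (η * (T : ℝ) ^ (2 * e + 6)) ∧ ∀ p, p.Prime → p ∣ d → p ∈ Q) ∧
      Real.exp ((e - 14) * (η * (T : ℝ) ^ (2 * e + 6) / (3 * e) - Real.log T)) ≤ #D := by
  set w : ℝ := (T : ℝ) ^ (2 * e + 6)
  have hT0 : (0 : ℝ) < T := by exact_mod_cast (by omega : 0 < T)
  have heR : (300 : ℝ) ≤ e := by exact_mod_cast he
  have hlogT : 1 ≤ Real.log T := by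
    rw [Real.le_log_iff_exp_le hT0]
    have : (3 : ℝ) ≤ T := by exact_mod_cast hT
    linarith [Real.exp_one_lt_d9]
  obtain ⟨u, hexponent, hexponent'⟩ := exists_nat_mul_le_and_sub_le_mul
    (by positivity : 0 ≤ η * w) (by positivity : (0 : ℝ) < 3 * e) (zero_lt_one.trans_le hlogT)
  have huw : u ≤ T ^ (2 * e + 6) := by
    have h1 : 1 ≤ 3 * (e : ℝ) * Real.log T :=
      one_le_mul_of_one_le_of_one_le (by linarith) hlogT
    have : (u : ℝ) ≤ (T : ℝ) ^ (2 * e + 6) :=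
      calc (u : ℝ) ≤ u * (3 * e * Real.log T) := le_mul_of_one_le_right u.cast_nonneg h1
        _ ≤ η * w := hexponent
        _ ≤ w := mul_le_of_le_one_left (by positivity) hη1
    exact_mod_cast this
  obtain ⟨D, hDcard, hD⟩ := exists_finset_primes_prod u hQ
  refine ⟨D, fun d hd => ?_, ?_⟩
  · obtain ⟨hd0, hdQ, hdu, hdp⟩ := hD d hd
    refine ⟨hd0, hdQ, ?_, hdp⟩
    calc (d : ℝ) ≤ ((T : ℝ) ^ (3 * e)) ^ u := by exact_mod_cast hdu
      _ = Real.exp (u * (3 * e * Real.log T)) := by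
          rw [← Real.exp_log (by positivity : 0 < ((T : ℝ) ^ (3 * e)) ^ u), Real.log_pow,
            Real.log_pow, Nat.cast_mul, Nat.cast_ofNat]
      _ ≤ Real.exp (η * w) := Real.exp_le_exp.2 hexponent
  · calc Real.exp ((e - 14) * (η * w / (3 * e) - Real.log T))
        ≤ Real.exp ((e - 14) * (u * Real.log T)) :=
          Real.exp_le_exp.2 (mul_le_mul_of_nonneg_left hexponent' (by linarith))
      _ = ((T : ℝ) ^ (e - 14)) ^ u := by
          rw [← Real.exp_log (by positivity : 0 < ((T : ℝ) ^ (e - 14)) ^ u), Real.log_pow,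
            Real.log_pow, Nat.cast_sub (by omega), Nat.cast_ofNat]
          ring_nf
      _ ≤ (#Q).choose u := by exact_mod_cast pow_pow_le_choose he (by omega) huw hcard
      _ = #D := by rw [hDcard]

lemma eventually_exp_mul_le_exp (he : 300 ≤ e) (hc : 0 < c) (hη : 0 < η) :
    ∀ᶠ T : ℕ in atTop, Real.exp (η * ((e - 16) / (3 * e)) * (T : ℝ) ^ (2 * e + 6)) *
        (4 * (T : ℝ) ^ (2 * e + 6) / c) ≤
      Real.exp ((e - 14) * (η * (T : ℝ) ^ (2 * e + 6) / (3 * e) - Real.log T)) := by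
  have : (0 : ℝ) < e := by exact_mod_cast (by omega : 0 < e)
  filter_upwards [eventually_mul_log_add_le (3 * e - 8) (Real.log (4 / c))
    (by positivity : 0 < 2 * η / (3 * e)), eventually_ge_atTop 1] with T hlog hT
  have hT1 : (1 : ℝ) ≤ T := by exact_mod_cast hT
  have hpow : (T : ℝ) ≤ (T : ℝ) ^ (2 * e + 6) := le_self_pow₀ hT1 (by omega)
  have hfactor : 4 * (T : ℝ) ^ (2 * e + 6) / c =
      Real.exp (Real.log (4 / c) + (2 * e + 6) * Real.log T) := by
    rw [← Real.exp_log (by positivity : 0 < 4 * (T : ℝ) ^ (2 * e + 6) / c), mul_div_right_comm,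
      Real.log_mul (by positivity) (by positivity), Real.log_pow]
    push_cast
    rfl
  rw [hfactor, ← Real.exp_add, Real.exp_le_exp]
  calc η * ((e - 16) / (3 * e)) * (T : ℝ) ^ (2 * e + 6) +
        (Real.log (4 / c) + (2 * e + 6) * Real.log T)
      = η * ((e - 16) / (3 * e)) * (T : ℝ) ^ (2 * e + 6) - (e - 14) * Real.log T +
        ((3 * e - 8) * Real.log T + Real.log (4 / c)) := by ring
    _ ≤ η * ((e - 16) / (3 * e)) * (T : ℝ) ^ (2 * e + 6) - (e - 14) * Real.log T +
        2 * η / (3 * e) * (T : ℝ) ^ (2 * e + 6) := by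
        gcongr
        exact hlog.trans (by gcongr)
    _ = (e - 14) * (η * (T : ℝ) ^ (2 * e + 6) / (3 * e) - Real.log T) := by ring

lemma eventually_exp_div_le_ncard_prime_modEq_one {n : ℕ} (hn : n ≠ 0) (hc : 0 < c)
    (hη : η < 1 / 2)
    (hAP : ∀ᶠ x : ℝ in atTop, ∃ ℓ : ℕ, ℓ.Prime ∧ HasPrimesCongrOne good c η x ℓ) :
    ∀ᶠ T : ℕ in atTop, ∃ ℓ : ℕ, ℓ.Prime ∧ ∀ d : ℕ, 0 < d → (d : ℝ) ≤ Real.exp (η * (T : ℝ) ^ n) →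
      ¬ℓ ∣ d → c * Real.exp ((1 - η) * (T : ℝ) ^ n) / (2 * (T : ℝ) ^ n) ≤
        {p : ℕ | p.Prime ∧ (p : ℝ) < d * Real.exp ((1 - η) * (T : ℝ) ^ n) ∧ p ≡ 1 [MOD d] ∧
          good p}.ncard := by
  have hlim : Tendsto (fun T : ℕ => Real.exp ((T : ℝ) ^ n)) atTop atTop :=
    Real.tendsto_exp_atTop.comp ((tendsto_pow_atTop hn).comp tendsto_natCast_atTop_atTop)
  filter_upwards [hlim.eventually hAP,
    hlim.eventually (eventually_le_ncard_prime_modEq_one (good := good) hc hη)]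
    with T ⟨ℓ, hℓ, hgood⟩ hmany
  have hpow (s : ℝ) : Real.exp ((T : ℝ) ^ n) ^ s = Real.exp (s * (T : ℝ) ^ n) := by
    rw [← Real.exp_mul, mul_comm]
  simp only [hpow, Real.log_exp] at hmany
  exact ⟨ℓ, hℓ, hmany ℓ hgood⟩

lemma eventually_exists_finset_many_good_primes (he : 300 ≤ e) (hc : 0 < c) (hη0 : 0 < η)
    (hη : η < 1 / 2)
    (hAP : ∀ᶠ x : ℝ in atTop, ∃ ℓ : ℕ, ℓ.Prime ∧ HasPrimesCongrOne good c η x ℓ) :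
    ∀ᶠ T : ℕ in atTop, ∃ (Q P : Finset ℕ) (k : ℕ),
      0 < k ∧ (k : ℝ) ≤ Real.exp ((T : ℝ) ^ (2 * e + 6)) ∧
      (∀ q ∈ Q, q.Prime ∧ q - 1 ∣ (8 * T ^ (2 * e)).factorial ^ 2 ∧ q ≤ T ^ (3 * e)) ∧
      #{q ∈ Q | q ∣ k} ≤ 2 * T ^ (2 * e) ∧
      (∀ p ∈ P, p.Prime ∧ p ∉ Q ∧ p ≡ 1 [MOD k] ∧ p - 1 ∣ k * ∏ q ∈ Q, q ∧
        (p : ℝ) ≤ Real.exp ((T : ℝ) ^ (2 * e + 6)) ∧ good p) ∧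
      Real.exp (η * ((e - 16) / (3 * e)) * (T : ℝ) ^ (2 * e + 6)) ≤ #P := by
  filter_upwards [eventually_exists_finset_prime_sub_one_dvd_factorial_sq he,
    eventually_exp_div_le_ncard_prime_modEq_one (by omega : 2 * e + 6 ≠ 0) hc hη hAP,
    eventually_card_dvd_ge_le he hc, eventually_exp_mul_le_exp he hc hη0, eventually_ge_atTop 3]
    with T ⟨Q₀, hQ₀, hQ₀card⟩ ⟨ℓ, hℓ, hmany⟩ hbad hexp hT
  set w : ℝ := (T : ℝ) ^ (2 * e + 6)
  have hTR : (3 : ℝ) ≤ T := by exact_mod_cast hT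
  have hw0 : 0 < w := by positivity
  have hTw : 2 * T ≤ w := by
    calc 2 * (T : ℝ) ≤ T * T := by gcongr; linarith
      _ = (T : ℝ) ^ 2 := by ring
      _ ≤ w := pow_le_pow_right₀ (by linarith) (by omega)
  -- No product of primes of `Q` is a multiple of the exceptional modulus `ℓ`.
  set Q := Q₀.erase ℓ
  have hQ (q : ℕ) (hq : q ∈ Q) := hQ₀ q (mem_of_mem_erase hq)
  obtain ⟨D, hD, hDcard⟩ := exists_finset_exp_le_card (Q := Q) he hη0.le (by linarith) hT
    (fun q hq => ⟨(hQ q hq).1, (hQ q hq).2.2.1⟩)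
    (hQ₀card.trans (Nat.sub_le_iff_le_add.1 pred_card_le_card_erase))
  set K := Real.exp ((1 - η) * w)
  have hTK : Real.exp T ≤ K := Real.exp_le_exp.2 (by nlinarith)
  obtain ⟨hbadK, hQK⟩ := hbad Q K hTK fun q hq => ⟨(hQ q hq).1, (hQ q hq).2.1, (hQ q hq).2.2.1⟩
  have hDne : D.Nonempty := card_pos.1 (by exact_mod_cast (Real.exp_pos _).trans_le hDcard)
  obtain ⟨k, P, hk, hkx, hks, hP, hcard⟩ := exists_finset_good_primes (good := good) (Q := Q)
    (a := c * K / (8 * w)) (x := Real.exp w) (by positivity) (Real.exp_pos _).le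
    (Real.one_le_exp (by positivity : 0 ≤ η * w))
    (le_of_eq (by rw [← Real.exp_add]; ring_nf)) hDne
    (fun d hd => by
      obtain ⟨hd0, hdQ, hdx, hdp⟩ := hD d hd
      refine ⟨hdQ, hdx, le_trans (le_of_eq ?_)
        (hmany d hd0 hdx fun h => notMem_erase ℓ Q₀ (hdp ℓ hℓ h))⟩
      field_simp
      ring) hbadK hQK
  refine ⟨Q, P, k, hk, hkx, fun q hq => ⟨(hQ q hq).1, (hQ q hq).2.2.2, (hQ q hq).2.2.1⟩,
    hks, hP, ?_⟩
  refine le_of_mul_le_mul_right ?_ (by positivity : 0 < 4 * w / c)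
  refine hexp.trans (hDcard.trans (le_of_mul_le_mul_right ?_ (by positivity : 0 < c * K / (4 * w))))
  calc #D * (c * K / (4 * w)) = #D * (2 * (c * K / (8 * w))) := by ring
    _ ≤ K * #P := hcard
    _ = #P * (4 * w / c) * (c * K / (4 * w)) := by field_simp

end GoodPrimes

section CountingCarmichaelProducts

open Finset Filter

variable {good : ℕ → Prop} {c η : ℝ} {e : ℕ}

lemma log_mul_prod_le {Q : Finset ℕ} {k z : ℕ} {y : ℝ} (hk : 0 < k) (hky : (k : ℝ) ≤ Real.exp y)
    (hQ : ∀ q ∈ Q, 0 < q ∧ q ≤ z) : Real.log (k * ∏ q ∈ Q, q : ℕ) ≤ y + z * Real.log z := by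
  have hpos : 0 < ∏ q ∈ Q, q := prod_pos fun q hq => (hQ q hq).1
  have hcard : #Q ≤ z := by
    simpa using card_le_card fun q hq => mem_Ioc.2 (hQ q hq)
  rw [Nat.cast_mul, Real.log_mul (by positivity) (by positivity)]
  gcongr
  · exact (Real.log_le_iff_le_exp (by positivity)).2 hky
  · calc Real.log (∏ q ∈ Q, q : ℕ) ≤ Real.log ((z : ℝ) ^ #Q) := by
          refine Real.log_le_log (by positivity) ?_
          exact_mod_cast prod_le_pow_card _ _ _ fun q hq => (hQ q hq).2
      _ = #Q * Real.log z := Real.log_pow _ _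
      _ ≤ z * Real.log z := by
          gcongr

lemma eventually_log_mul_prod_le_exp (he : 300 ≤ e) :
    ∀ᶠ T : ℕ in atTop, ∀ (Q : Finset ℕ) (k : ℕ), 0 < k →
      (k : ℝ) ≤ Real.exp ((T : ℝ) ^ (2 * e + 6)) → (∀ q ∈ Q, 0 < q ∧ q ≤ T ^ (3 * e)) →
      Real.log (k * ∏ q ∈ Q, q : ℕ) ≤ Real.exp T := by
  filter_upwards [eventually_mul_pow_le_exp 1 (3 * e), eventually_mul_pow_le_exp 2 (3 * e + 1),
    eventually_ge_atTop 1] with T hbase hexp hT Q k hk hkT hQ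
  have hT1 : (1 : ℝ) ≤ T := by exact_mod_cast hT
  rw [one_mul] at hbase
  calc Real.log (k * ∏ q ∈ Q, q : ℕ)
      ≤ (T : ℝ) ^ (2 * e + 6) + (T ^ (3 * e) : ℕ) * Real.log (T ^ (3 * e) : ℕ) :=
        log_mul_prod_le hk hkT hQ
    _ ≤ (T : ℝ) ^ (3 * e + 1) + (T : ℝ) ^ (3 * e) * T := by
        push_cast
        refine add_le_add (pow_le_pow_right₀ hT1 (by omega)) ?_
        gcongr
        exact (Real.log_le_iff_le_exp (by positivity)).2 hbase
    _ = 2 * (T : ℝ) ^ (3 * e + 1) := by ring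
    _ ≤ Real.exp T := hexp

lemma eventually_factorial_sq_mul_pow_mul_log_lt (he : 300 ≤ e) :
    ∀ᶠ T : ℕ in atTop, ∀ (Q : Finset ℕ) (k : ℕ), 0 < k →
      (k : ℝ) ≤ Real.exp ((T : ℝ) ^ (2 * e + 6)) → (∀ q ∈ Q, 0 < q ∧ q ≤ T ^ (3 * e)) →
      (((8 * T ^ (2 * e)).factorial ^ 2 : ℕ) * (T ^ (3 * e) : ℕ) ^ (2 * T ^ (2 * e)) : ℝ) *
        Real.log (k * ∏ q ∈ Q, q : ℕ) < ⌈Real.exp ((T : ℝ) ^ (2 * e + 3))⌉₊ := by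
  filter_upwards [eventually_mul_pow_le_exp 8 (2 * e), eventually_mul_pow_le_exp 1 (3 * e),
    eventually_log_mul_prod_le_exp he, eventually_ge_atTop 5]
    with T hfactorial hpow hlog hT Q k hk hkT hQ
  refine lt_of_lt_of_le ?_ (Nat.le_ceil _)
  set V := T ^ (2 * e) with hV
  have hV1 : (1 : ℝ) ≤ V := by exact_mod_cast Nat.one_le_pow _ _ (by omega)
  have hTR : (5 : ℝ) ≤ T := by exact_mod_cast hT
  have hfactorial' : (((8 * V).factorial ^ 2 : ℕ) : ℝ) ≤ Real.exp T ^ (16 * V) := by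
    calc (((8 * V).factorial ^ 2 : ℕ) : ℝ) ≤ (((8 * V : ℕ) : ℝ) ^ (8 * V)) ^ 2 := by
          exact_mod_cast Nat.pow_le_pow_left (Nat.factorial_le_pow _) 2
      _ ≤ (Real.exp T ^ (8 * V)) ^ 2 := by
          gcongr
          exact_mod_cast hfactorial
      _ = Real.exp T ^ (16 * V) := by ring
  calc (((8 * V).factorial ^ 2 : ℕ) * (T ^ (3 * e) : ℕ) ^ (2 * V) : ℝ) *
        Real.log (k * ∏ q ∈ Q, q : ℕ)
      ≤ Real.exp T ^ (16 * V) * Real.exp T ^ (2 * V) * Real.exp T := by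
        gcongr
        · exact_mod_cast (one_mul _).symm.le.trans hpow
        · exact hlog Q k hk hkT hQ
    _ = Real.exp ((18 * V + 1 : ℕ) * T) := by
        rw [Real.exp_nat_mul]
        ring
    _ < Real.exp ((T : ℝ) ^ (2 * e + 3)) := by
        refine Real.exp_lt_exp.2 ?_
        calc ((18 * V + 1 : ℕ) : ℝ) * T ≤ (18 * V + V) * T := by
              push_cast
              gcongr
          _ = 19 * (V * T) := by ring
          _ < T ^ 2 * (V * T) := by
              gcongr
              nlinarith
          _ = (T : ℝ) ^ (2 * e + 3) := by
              rw [hV]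
              push_cast
              ring

lemma eventually_exists_forall_choose_le_card_isCarmichael (he : 300 ≤ e) (hc : 0 < c)
    (hη0 : 0 < η) (hη : η < 1 / 2)
    (hAP : ∀ᶠ x : ℝ in atTop, ∃ ℓ : ℕ, ℓ.Prime ∧ HasPrimesCongrOne good c η x ℓ) :
    ∀ᶠ T : ℕ in atTop, ∃ N : ℕ,
      Real.exp (η * ((e - 16) / (3 * e)) * (T : ℝ) ^ (2 * e + 6)) ≤ N ∧
      N ≤ Real.exp ((T : ℝ) ^ (2 * e + 6)) ∧
      ∀ t, ⌈Real.exp ((T : ℝ) ^ (2 * e + 3))⌉₊ < t → ∃ M : Finset ℕ,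
        (∀ m ∈ M, IsCarmichael m ∧ (m : ℝ) ≤ Real.exp ((T : ℝ) ^ (2 * e + 6)) ^ t ∧
          ∀ p, p.Prime → p ∣ m → good p) ∧
        N.choose t ≤ #M * (N + 1) ^ ⌈Real.exp ((T : ℝ) ^ (2 * e + 3))⌉₊ := by
  filter_upwards [eventually_exists_finset_many_good_primes he hc hη0 hη hAP,
    eventually_factorial_sq_mul_pow_mul_log_lt he, eventually_gt_atTop 0]
    with T ⟨Q, P, k, hk, hkT, hQ, hkQ, hP, hPcard⟩ hlog hT
  refine ⟨#P, hPcard, ?_, fun t ht => ?_⟩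
  · have hsub : P ⊆ Ioc 0 ⌊Real.exp ((T : ℝ) ^ (2 * e + 6))⌋₊ := fun p hp =>
      mem_Ioc.2 ⟨(hP p hp).1.pos, Nat.le_floor (hP p hp).2.2.2.2.1⟩
    rw [← Nat.le_floor_iff (Real.exp_pos _).le]
    simpa using card_le_card hsub
  · obtain ⟨M, hM, hcard⟩ := exists_finset_isCarmichael (P := P)
      (Λ := (8 * T ^ (2 * e)).factorial ^ 2) (z := T ^ (3 * e))
      (x := Real.exp ((T : ℝ) ^ (2 * e + 6))) hk (by positivity) (by positivity)
      (Real.one_le_exp (by positivity)) hQ hkQ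
      (fun p hp => by
        obtain ⟨hprime, hpQ, hpk, hdvd, hpx, -⟩ := hP p hp
        exact ⟨hprime, hpQ, hpk, hdvd, hpx⟩)
      (hlog Q k hk hkT fun q hq => ⟨(hQ q hq).1.pos, (hQ q hq).2.2⟩) ht
    refine ⟨M, fun m hm => ?_, hcard⟩
    obtain ⟨hmC, hmx, hmP⟩ := hM m hm
    exact ⟨hmC, hmx, fun p hp hpm => (hP p (hmP p hp hpm)).2.2.2.2.2⟩

end CountingCarmichaelProducts

section ChoiceOfParameters

open Finset Filter

variable {E Y w β δ : ℝ} {M N T t : ℕ}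

lemma pow_le_choose_of_mul_le {a : ℝ} (ha : 1 ≤ a) (h : a * (3 * t) ≤ N) : a ^ t ≤ N.choose t := by
  have hceil : ⌈a⌉₊ * t + t ≤ N := by
    have : ((⌈a⌉₊ * t + t : ℕ) : ℝ) ≤ N := by
      push_cast
      nlinarith [Nat.ceil_lt_add_one (zero_le_one.trans ha), (Nat.cast_nonneg t : (0 : ℝ) ≤ t)]
    exact_mod_cast this
  calc a ^ t ≤ (⌈a⌉₊ : ℝ) ^ t := by
        gcongr
        exact Nat.le_ceil a
    _ ≤ N.choose t := by exact_mod_cast pow_le_choose le_rfl (by omega)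

lemma ceil_lt_floor_div (hw : 0 < w) (hE : 1 ≤ E) (hY : 3 * E * w ≤ Y) : ⌈E⌉₊ < ⌊Y / w⌋₊ := by
  refine Nat.le_floor ?_
  rw [le_div_iff₀ hw]
  refine le_trans ?_ hY
  push_cast
  gcongr
  linarith [Nat.ceil_lt_add_one (zero_le_one.trans hE)]

lemma exp_sub_mul_le_of_choose_le (hw : 3 ≤ w) (hE : 1 ≤ E) (hδ : δ ≤ β) (hδ0 : 0 ≤ δ) (hβ : β ≤ 1)
    (hEY : 5 * E * w ≤ δ * Y) (hY : Y ≤ Real.exp (δ * w)) (hβN : Real.exp (β * w) ≤ N)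
    (hN : N ≤ Real.exp w) (hM : N.choose ⌊Y / w⌋₊ ≤ M * (N + 1) ^ ⌈E⌉₊) :
    Real.exp ((β - 2 * δ) * Y) ≤ M := by
  have hw0 : 0 < w := by linarith
  have hY0 : 0 ≤ Y := by
    by_contra! hY0
    nlinarith [mul_pos (zero_lt_one.trans_le hE) hw0]
  set t := ⌊Y / w⌋₊
  have ht_le : t * w ≤ Y := (le_div_iff₀ hw0).1 (Nat.floor_le (by positivity))
  have ht_lt : Y < (t + 1) * w := (div_lt_iff₀ hw0).1 (Nat.lt_floor_add_one _)
  have hchoose : Real.exp ((β - δ) * w) ^ t ≤ N.choose t := by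
    refine pow_le_choose_of_mul_le
      (Real.one_le_exp (mul_nonneg (sub_nonneg.2 hδ) hw0.le)) (le_trans ?_ hβN)
    calc Real.exp ((β - δ) * w) * (3 * t) ≤ Real.exp ((β - δ) * w) * Real.exp (δ * w) := by
          gcongr
          nlinarith [(Nat.cast_nonneg t : (0 : ℝ) ≤ t)]
      _ = Real.exp (β * w) := by
          rw [← Real.exp_add]
          ring_nf
  have hN1 : (N : ℝ) + 1 ≤ Real.exp (2 * w) := by
    rw [two_mul, Real.exp_add]
    nlinarith [Real.add_one_le_exp w]
  have hexponent : (β - 2 * δ) * Y + ⌈E⌉₊ * (2 * w) ≤ t * ((β - δ) * w) := by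
    have hmain : (β - δ) * Y ≤ (β - δ) * ((t + 1) * w) :=
      mul_le_mul_of_nonneg_left ht_lt.le (by linarith)
    have hfrac : (β - δ) * w ≤ w := mul_le_of_le_one_left hw0.le (by linarith)
    have hceil : (2 * ⌈E⌉₊ + 1) * w ≤ 5 * E * w := by
      gcongr
      linarith [Nat.ceil_lt_add_one (zero_le_one.trans hE)]
    linarith
  refine le_of_mul_le_mul_right ?_ (Real.exp_pos (⌈E⌉₊ * (2 * w)))
  calc Real.exp ((β - 2 * δ) * Y) * Real.exp (⌈E⌉₊ * (2 * w))
      ≤ Real.exp (t * ((β - δ) * w)) := by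
        rw [← Real.exp_add]
        exact Real.exp_le_exp.2 hexponent
    _ = Real.exp ((β - δ) * w) ^ t := Real.exp_nat_mul _ _
    _ ≤ M * ((N : ℝ) + 1) ^ ⌈E⌉₊ := by exact_mod_cast hchoose.trans (Nat.cast_le.2 hM)
    _ ≤ M * Real.exp (2 * w) ^ ⌈E⌉₊ := by gcongr
    _ = M * Real.exp (⌈E⌉₊ * (2 * w)) := by rw [Real.exp_nat_mul]

lemma rpow_sub_le_ncard_of_forall_choose_le {good : ℕ → Prop} {X : ℝ} (hX : 1 < X) (hw : 3 ≤ w)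
    (hE : 1 ≤ E) (hδ : δ ≤ β) (hδ0 : 0 ≤ δ) (hβ : β ≤ 1) (hEX : 5 * E * w ≤ δ * Real.log X)
    (hXw : Real.log X ≤ Real.exp (δ * w)) (hβN : Real.exp (β * w) ≤ N) (hN : N ≤ Real.exp w)
    (hcount : ∀ t, ⌈E⌉₊ < t → ∃ M : Finset ℕ,
      (∀ m ∈ M, IsCarmichael m ∧ (m : ℝ) ≤ Real.exp w ^ t ∧ ∀ p, p.Prime → p ∣ m → good p) ∧
      N.choose t ≤ #M * (N + 1) ^ ⌈E⌉₊) :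
    X ^ (β - 2 * δ) ≤
      {m : ℕ | (m : ℝ) ≤ X ∧ IsCarmichael m ∧ ∀ p : ℕ, p.Prime → p ∣ m → good p}.ncard := by
  have hw0 : 0 < w := by linarith
  have hX0 : 0 < X := by linarith
  have hlogX : 0 < Real.log X := Real.log_pos hX
  have hEX' : 3 * E * w ≤ Real.log X := by
    have : δ * Real.log X ≤ 1 * Real.log X := by
      gcongr
      linarith
    nlinarith [mul_pos (zero_lt_one.trans_le hE) hw0]
  obtain ⟨M, hM, hMcard⟩ := hcount _ (ceil_lt_floor_div hw0 hE hEX')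
  have hsub : (M : Set ℕ) ⊆
      {m : ℕ | (m : ℝ) ≤ X ∧ IsCarmichael m ∧ ∀ p : ℕ, p.Prime → p ∣ m → good p} := fun m hm => by
    obtain ⟨hmC, hmw, hmp⟩ := hM m hm
    refine ⟨?_, hmC, hmp⟩
    calc (m : ℝ) ≤ Real.exp (⌊Real.log X / w⌋₊ * w) := by rwa [Real.exp_nat_mul]
      _ ≤ Real.exp (Real.log X) :=
          Real.exp_le_exp.2 ((le_div_iff₀ hw0).1 (Nat.floor_le (by positivity)))
      _ = X := Real.exp_log hX0
  have hfinite : {m : ℕ | (m : ℝ) ≤ X ∧ IsCarmichael m ∧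
      ∀ p : ℕ, p.Prime → p ∣ m → good p}.Finite :=
    (Set.finite_le_nat ⌊X⌋₊).subset fun m hm => Nat.le_floor hm.1
  calc X ^ (β - 2 * δ) = Real.exp ((β - 2 * δ) * Real.log X) := by
        rw [Real.rpow_def_of_pos hX0, mul_comm]
    _ ≤ #M := exp_sub_mul_le_of_choose_le hw hE hδ hδ0 hβ hEX hXw hβN hN hMcard
    _ ≤ _ := by
        rw [← Set.ncard_coe_finset]
        exact_mod_cast Set.ncard_le_ncard hsub hfinite

lemma eventually_exists_pow_le_log_log_lt {n : ℕ} (hn : n ≠ 0) {p : ℕ → Prop}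
    (hp : ∀ᶠ T in atTop, p T) :
    ∀ᶠ X : ℝ in atTop, ∃ T, p T ∧ (T : ℝ) ^ n ≤ Real.log (Real.log X) ∧
      Real.log (Real.log X) < ((T : ℝ) + 1) ^ n := by
  have hloglog := Real.tendsto_log_atTop.comp Real.tendsto_log_atTop
  have hroot : Tendsto (fun X : ℝ => ⌊Real.log (Real.log X) ^ (n⁻¹ : ℝ)⌋₊) atTop atTop :=
    tendsto_nat_floor_atTop.comp ((tendsto_rpow_atTop (by positivity)).comp hloglog)
  filter_upwards [hroot.eventually hp, hloglog.eventually_ge_atTop 0] with X hpX hX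
  have hroot0 : 0 ≤ Real.log (Real.log X) ^ (n⁻¹ : ℝ) := Real.rpow_nonneg hX _
  have hpow : (Real.log (Real.log X) ^ (n⁻¹ : ℝ)) ^ n = Real.log (Real.log X) :=
    Real.rpow_inv_natCast_pow hX hn
  refine ⟨_, hpX, ?_, ?_⟩
  · calc _ ≤ (Real.log (Real.log X) ^ (n⁻¹ : ℝ)) ^ n := by
          gcongr
          exact Nat.floor_le hroot0
      _ = Real.log (Real.log X) := hpow
  · calc Real.log (Real.log X) = (Real.log (Real.log X) ^ (n⁻¹ : ℝ)) ^ n := hpow.symm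
      _ < _ := by
          gcongr
          exact Nat.lt_floor_add_one _

lemma eventually_le_and_le_exp_of_log_lt (e : ℕ) :
    ∀ᶠ T : ℕ in atTop, ∀ Y : ℝ, 0 < Y → (T : ℝ) ^ (2 * e + 4) ≤ Real.log Y →
      Real.log Y < ((T : ℝ) + 1) ^ (2 * e + 4) →
      5 * Real.exp ((T : ℝ) ^ (2 * e + 3)) * (T : ℝ) ^ (2 * e + 6) ≤ 1 / T * Y ∧
        Y ≤ Real.exp (1 / T * (T : ℝ) ^ (2 * e + 6)) := by
  filter_upwards [eventually_mul_pow_le_exp 5 (2 * e + 7), eventually_ge_atTop (2 ^ (2 * e + 4)),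
    eventually_ge_atTop 2] with T hexp hTe hT Y hY hlog_ge hlog_lt
  have hTR : (2 : ℝ) ≤ T := by exact_mod_cast hT
  have hTe' : (2 : ℝ) ^ (2 * e + 4) ≤ T := by exact_mod_cast hTe
  constructor
  · rw [one_div_mul_eq_div, le_div_iff₀ (by positivity)]
    calc 5 * Real.exp ((T : ℝ) ^ (2 * e + 3)) * (T : ℝ) ^ (2 * e + 6) * T
        = Real.exp ((T : ℝ) ^ (2 * e + 3)) * (5 * (T : ℝ) ^ (2 * e + 7)) := by ring
      _ ≤ Real.exp ((T : ℝ) ^ (2 * e + 3)) * Real.exp ((T : ℝ) ^ (2 * e + 3)) := by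
          gcongr
          exact hexp.trans (Real.exp_le_exp.2 (le_self_pow₀ (by linarith) (by omega)))
      _ = Real.exp (2 * (T : ℝ) ^ (2 * e + 3)) := by rw [← Real.exp_add, ← two_mul]
      _ ≤ Real.exp ((T : ℝ) ^ (2 * e + 4)) := by
          rw [pow_succ' (T : ℝ) (2 * e + 3)]
          gcongr
      _ ≤ Y := (Real.le_log_iff_exp_le hY).1 hlog_ge
  · rw [← Real.log_le_iff_le_exp hY]
    calc Real.log Y ≤ (2 * (T : ℝ)) ^ (2 * e + 4) := hlog_lt.le.trans (by gcongr; linarith)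
      _ = 2 ^ (2 * e + 4) * (T : ℝ) ^ (2 * e + 4) := mul_pow _ _ _
      _ ≤ T * (T : ℝ) ^ (2 * e + 4) := by gcongr
      _ = 1 / T * (T : ℝ) ^ (2 * e + 6) := by
          field_simp
          ring

lemma div_three_sub_le {e : ℕ} {ε η : ℝ} (he : 300 ≤ e) (heε : 32 / ε ≤ e) (hε : 0 < ε)
    (hη : η ≤ 1) : η / 3 - ε / 2 ≤ η * ((e - 16) / (3 * e)) := by
  have he0 : (0 : ℝ) < e := by exact_mod_cast (by omega : 0 < e)
  have hfrac : 16 * η / (3 * e) ≤ ε / 2 := by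
    rw [div_le_iff₀ hε] at heε
    rw [div_le_iff₀ (by positivity)]
    nlinarith
  calc η / 3 - ε / 2 ≤ η / 3 - 16 * η / (3 * e) := by gcongr
    _ = η * ((e - 16) / (3 * e)) := by field_simp

lemma eventually_exists_hasPrimesCongrOne {good : ℕ → Prop} {n : ℕ} {η x₀ : ℝ} {qstar : ℝ → ℕ}
    (hqstar : ∀ x, x₀ ≤ x → Real.log x < qstar x)
    (hAP : ∀ x, x₀ ≤ x → ∀ y, x ^ (1 / 2 : ℝ) < y → y ≤ x → ∀ q : ℕ, 0 < q → (q : ℝ) ≤ x ^ η →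
      ¬qstar x ∣ q → ∀ a : ℤ, Int.gcd a q = 1 → primePi y / (2 * n * q.totient : ℝ) ≤
        {p : ℕ | p.Prime ∧ (p : ℝ) < y ∧ (p : ℤ) ≡ a [ZMOD q] ∧ good p}.ncard) :
    ∀ᶠ x : ℝ in atTop, ∃ ℓ : ℕ, ℓ.Prime ∧ HasPrimesCongrOne good (1 / (2 * n)) η x ℓ := by
  filter_upwards [eventually_ge_atTop x₀, eventually_ge_atTop (Real.exp 1)] with x hx hxe
  have hqstar1 : 1 < qstar x := by
    have : (1 : ℝ) < qstar x :=
      ((Real.le_log_iff_exp_le ((Real.exp_pos 1).trans_le hxe)).2 hxe).trans_lt (hqstar x hx)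
    exact_mod_cast this
  refine ⟨(qstar x).minFac, Nat.minFac_prime hqstar1.ne', fun y hxy hyx q hq hqx hdvd => ?_⟩
  have hcount := hAP x hx y hxy hyx q hq hqx (fun h => hdvd ((Nat.minFac_dvd _).trans h)) 1
    Int.one_gcd
  simp only [← Nat.cast_one (R := ℤ), Int.natCast_modEq_iff] at hcount
  rwa [one_div_mul_eq_div, div_div]

end ChoiceOfParameters

end CarmichaelFrobenius

open Filter CarmichaelFrobenius in
theorem carmichael_frobenius_count_general (good : ℕ → Prop) {c η ε : ℝ} (hc : 0 < c)
    (hη0 : 0 < η) (hη : η < 1 / 2) (hε : 0 < ε)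
    (hAP : ∀ᶠ x : ℝ in atTop, ∃ ℓ : ℕ, ℓ.Prime ∧ HasPrimesCongrOne good c η x ℓ) :
    ∀ᶠ X : ℝ in atTop, X ^ (η / 3 - ε) ≤
      ({m : ℕ | (m : ℝ) ≤ X ∧ IsCarmichael m ∧
        ∀ p : ℕ, p.Prime → p ∣ m → good p}.ncard : ℝ) := by
  obtain ⟨e, he⟩ := exists_nat_ge (max 300 (32 / ε))
  have he300 : 300 ≤ e := by exact_mod_cast (le_max_left _ _).trans he
  have heR : (300 : ℝ) ≤ e := by exact_mod_cast he300
  set κ : ℝ := (e - 16) / (3 * e)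
  have hκ0 : 0 < κ := div_pos (by linarith) (by linarith)
  have hκ1 : κ ≤ 1 := div_le_one_of_le₀ (by linarith) (by linarith)
  have hκ := div_three_sub_le he300 ((le_max_right _ _).trans he) hε (by linarith : η ≤ 1)
  have hsmall : ∀ᶠ T : ℕ in atTop, 1 / (T : ℝ) < min (ε / 4) (η * κ) :=
    tendsto_one_div_atTop_nhds_zero_nat.eventually_lt_const (by positivity)
  filter_upwards [eventually_exists_pow_le_log_log_lt (by omega : 2 * e + 4 ≠ 0)
    ((eventually_exists_forall_choose_le_card_isCarmichael he300 hc hη0 hη hAP).and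
      ((eventually_le_and_le_exp_of_log_lt e).and (hsmall.and (eventually_ge_atTop 3)))),
    eventually_gt_atTop 1] with X ⟨T, ⟨⟨N, hβN, hN, hcount⟩, hYT, hδ, hT⟩, hlog_ge, hlog_lt⟩ hX
  obtain ⟨hEY, hY⟩ := hYT _ (Real.log_pos hX) hlog_ge hlog_lt
  have hT1 : (3 : ℝ) ≤ T := by exact_mod_cast hT
  obtain ⟨hδε, hδβ⟩ := lt_min_iff.1 hδ
  refine (Real.rpow_le_rpow_of_exponent_le hX.le (by linarith)).trans
    (rpow_sub_le_ncard_of_forall_choose_le hX (hT1.trans (le_self_pow₀ (by linarith) (by omega)))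
      (Real.one_le_exp (by positivity)) hδβ.le (by positivity) (by nlinarith) hEY hY hβN hN hcount)

/-- Main theorem: let `f` be monic and squarefree with splitting field `K`,
`n = [K:ℚ]`, and `0 < η < 1/16` such that the uniform lower bound for the number of
split primes in arithmetic progressions (away from an exceptional modulus
`q*(x) > log x`) holds for moduli `q ≤ x^η`.  Then for every `ε > 0` and all
sufficiently large `X`, there are at least `X^(η/3 − ε)` Carmichael numbers `m ≤ X` such
that `f` splits into linear factors modulo every prime divisor of `m`. -/
theorem carmichael_frobenius_count (f : Polynomial ℤ) (hmonic : f.Monic)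
    (hsqf : Squarefree f)
    (K : Type*) [Field K] [Algebra ℚ K]
    (hK : Polynomial.IsSplittingField ℚ K (f.map (Int.castRingHom ℚ)))
    (n : ℕ) (hn : n = Module.finrank ℚ K)
    (η : ℝ) (hη0 : 0 < η) (hη1 : η < 1 / 16)
    (hAP : ∃ x₀ : ℝ, ∃ qstar : ℝ → ℕ,
      (∀ x : ℝ, x₀ ≤ x → Real.log x < (qstar x : ℝ)) ∧
      ∀ x : ℝ, x₀ ≤ x → ∀ y : ℝ, x ^ ((1 : ℝ) / 2) < y → y ≤ x →
        ∀ q : ℕ, 0 < q → (q : ℝ) ≤ x ^ η → ¬ (qstar x ∣ q) →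
          ∀ a : ℤ, Int.gcd a (q : ℤ) = 1 →
            (primePi y : ℝ) / (2 * (n : ℝ) * (Nat.totient q : ℝ)) ≤
              ({p : ℕ | p.Prime ∧ (p : ℝ) < y ∧ (p : ℤ) ≡ a [ZMOD (q : ℤ)] ∧
                SplitsModLinear f p}.ncard : ℝ)) :
    ∀ ε : ℝ, 0 < ε → ∃ X₀ : ℝ, ∀ X : ℝ, X₀ ≤ X →
      X ^ (η / 3 - ε) ≤
        ({m : ℕ | (m : ℝ) ≤ X ∧ IsCarmichael m ∧
          ∀ p : ℕ, p.Prime → p ∣ m → SplitsModLinear f p}.ncard : ℝ) := by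
  intro ε hε
  obtain ⟨x₀, qstar, hqstar, hcount⟩ := hAP
  have : FiniteDimensional ℚ K :=
    Polynomial.IsSplittingField.finiteDimensional K (f.map (Int.castRingHom ℚ))
  have hn0 : 0 < n := hn ▸ Module.finrank_pos
  exact Filter.eventually_atTop.1 (carmichael_frobenius_count_general _ (by positivity) hη0
    (by linarith) hε (CarmichaelFrobenius.eventually_exists_hasPrimesCongrOne hqstar hcount))
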